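/- Anisotropy of E10 root multiplicities: there exist nonzero n, n' ∈ ℕ^{10}, each of height at most 340 and each with nᵀ A(E10) n ≤ 2 (so both are positive roots of E10), such that nᵀ A(E10) n = n'ᵀ A(E10) n' but mult(n) ≠ mult(n'); that is, the root multiplicity of E10 is not a function of the norm β² alone. -/

import Mathlib

noncomputable section

open CartanMatrix

/-- A generalized Cartan matrix: `A i i = 2`, off-diagonal entries are non-positive, and
`A i j = 0 ↔ A j i = 0`. -/
def IsGCM {B : Type*} (A : Matrix B B ℤ) : Prop :=
  (∀ i, A i i = 2) ∧ (∀ i j, i ≠ j → A i j ≤ 0) ∧ (∀ i j, A i j = 0 ↔ A j i = 0)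

/-- The images in the Kac–Moody algebra `Matrix.ToLieAlgebra ℚ A` of the generators of the
free Lie algebra. -/
def KMgen {B : Type*} [DecidableEq B] (A : Matrix B B ℤ) (x : Generators B) :
    Matrix.ToLieAlgebra ℚ A :=
  LieSubmodule.Quotient.mk (N := Relations.toIdeal ℚ A) (FreeLieAlgebra.of ℚ x)

/-- The Cartan generator `h i`. -/
def gH {B : Type*} [DecidableEq B] (A : Matrix B B ℤ) (i : B) : Matrix.ToLieAlgebra ℚ A :=
  KMgen A (Generators.H i)

/-- The raising generator `e i`. -/
def gE {B : Type*} [DecidableEq B] (A : Matrix B B ℤ) (i : B) : Matrix.ToLieAlgebra ℚ A :=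
  KMgen A (Generators.E i)

/-- The lowering generator `f i`. -/
def gF {B : Type*} [DecidableEq B] (A : Matrix B B ℤ) (i : B) : Matrix.ToLieAlgebra ℚ A :=
  KMgen A (Generators.F i)

/-- The root space of `g(A)` attached to `n : B → ℤ`: the simultaneous eigenspace of the
adjoint action of the Cartan generators `h i`, with eigenvalues `∑ j, A i j * n j`. -/
def rootSpace {B : Type*} [Fintype B] [DecidableEq B] (A : Matrix B B ℤ) (n : B → ℤ) :
    Submodule ℚ (Matrix.ToLieAlgebra ℚ A) :=
  ⨅ i, Module.End.eigenspace
    (LieAlgebra.ad ℚ (Matrix.ToLieAlgebra ℚ A) (gH A i)) ((∑ j, A i j * n j : ℤ) : ℚ)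

/-- The multiplicity of `n` in `g(A)`: the dimension of the root space. -/
def rootMult {B : Type*} [Fintype B] [DecidableEq B] (A : Matrix B B ℤ) (n : B → ℤ) : ℕ :=
  Module.finrank ℚ (rootSpace A n)

/-- The Cartan matrix of `E10` (node 1 ↦ index `0` is the overextended node; indices `0`–`8`
form a chain and index `9` is attached to index `6`). -/
def E10M : Matrix (Fin 10) (Fin 10) ℤ := fun i j =>
  if i = j then 2
  else if (i.val + 1 = j.val ∧ j.val ≤ 8) ∨ (j.val + 1 = i.val ∧ i.val ≤ 8) ∨
          (i.val = 6 ∧ j.val = 9) ∨ (i.val = 9 ∧ j.val = 6) then -1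
  else 0

/-- The number of partitions of `k` into parts of `c` colours: the number of finitely
supported functions `f : ℕ+ × Fin c → ℕ` with `∑ j·f(j,s) = k` (so that
`∑ k, p_c(k) qᵏ = ∏_{j ≥ 1} (1 - qʲ)⁻ᶜ`), with `p_c(k) = 0` for `k < 0`. -/
def coloredPartitions (c : ℕ) (k : ℤ) : ℕ :=
  if k < 0 then 0
  else Nat.card {f : ℕ+ × Fin c →₀ ℕ // ∑ p ∈ f.support, (p.1 : ℕ) * f p = k.toNat}

/-- The norm `nᵀ A n` of a vector of natural numbers with respect to a Cartan matrix. -/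
def qform {d : ℕ} (A : Matrix (Fin d) (Fin d) ℤ) (n : Fin d → ℕ) : ℤ :=
  ∑ i, ∑ j, (n i : ℤ) * A i j * (n j : ℤ)

set_option linter.all false

section
theorem E10M_symm (i j : Fin 10) : E10M i j = E10M j i := by
  unfold E10M; revert i j; decide
theorem E10M_diag (i : Fin 10) : E10M i i = 2 := by revert i; decide
theorem E10M_off (i j : Fin 10) (h : i ≠ j) : E10M i j = 0 ∨ E10M i j = -1 := by
  unfold E10M; revert i j; decide

/-- The Chevalley relations without the Serre relations. -/
structure PreChev {L : Type*} [LieRing L] [LieAlgebra ℚ L] (h e f : Fin 10 → L) : Prop where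
  hh : ∀ i j, ⁅h i, h j⁆ = 0
  ef : ∀ i, ⁅e i, f i⁆ = h i
  ef' : ∀ i j, i ≠ j → ⁅e i, f j⁆ = 0
  he : ∀ i j, ⁅h i, e j⁆ = (E10M i j : ℚ) • e j
  hf : ∀ i j, ⁅h i, f j⁆ = -((E10M i j : ℚ) • f j)

/-- The Serre relations for a family of elements. -/
structure SerreRel {L : Type*} [LieRing L] (e : Fin 10 → L) : Prop where
  s0 : ∀ i j, E10M i j = 0 → ⁅e i, e j⁆ = 0
  s1 : ∀ i j, E10M i j = -1 → ⁅e i, ⁅e i, e j⁆⁆ = 0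

/-- The Chevalley–Serre relations. -/
structure ChevRel {L : Type*} [LieRing L] [LieAlgebra ℚ L] (h e f : Fin 10 → L) : Prop
    extends PreChev h e f where
  se : SerreRel e
  sf : SerreRel f

theorem PreChev.swap {L : Type*} [LieRing L] [LieAlgebra ℚ L] {h e f : Fin 10 → L}
    (c : PreChev h e f) : PreChev (fun i => - h i) f e where
  hh i j := by simp [c.hh]
  ef i := by rw [← lie_skew, c.ef]
  ef' i j hij := by rw [← lie_skew, c.ef' j i hij.symm, neg_zero]
  he i j := by rw [neg_lie, c.hf, neg_neg]
  hf i j := by rw [neg_lie, c.he]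

theorem ChevRel.swap {L : Type*} [LieRing L] [LieAlgebra ℚ L] {h e f : Fin 10 → L}
    (c : ChevRel h e f) : ChevRel (fun i => - h i) f e where
  toPreChev := c.toPreChev.swap
  se := c.sf
  sf := c.se

section quot
variable {R : Type*} [CommRing R] {L L' : Type*} [LieRing L] [LieAlgebra R L]
  [LieRing L'] [LieAlgebra R L']

/-- Lift of a Lie homomorphism to a quotient by an ideal. -/
def lieQuotLift (I : LieIdeal R L) (φ : L →ₗ⁅R⁆ L') (hI : ∀ x ∈ I, φ x = 0) :
    (L ⧸ I) →ₗ⁅R⁆ L' :=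
  { Submodule.liftQ I.toSubmodule (φ : L →ₗ[R] L') (fun x hx => by
      simpa using hI x hx) with
    map_lie' := by
      intro x y
      obtain ⟨x, rfl⟩ := LieSubmodule.Quotient.surjective_mk' I x
      obtain ⟨y, rfl⟩ := LieSubmodule.Quotient.surjective_mk' I y
      exact φ.map_lie x y }

theorem lieQuotLift_mk (I : LieIdeal R L) (φ : L →ₗ⁅R⁆ L') (hI : ∀ x ∈ I, φ x = 0) (x : L) :
    lieQuotLift I φ hI (LieSubmodule.Quotient.mk x) = φ x := rfl

end quot

/-- The map on generators. -/
def genMap {L : Type*} (h e f : Fin 10 → L) : Generators (Fin 10) → L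
  | .H i => h i
  | .E i => e i
  | .F i => f i

theorem serre_ad {L : Type*} [LieRing L] [LieAlgebra ℚ L] {e : Fin 10 → L} (s : SerreRel e)
    (i j : Fin 10) : ((LieAlgebra.ad ℚ L (e i)) ^ (-E10M i j).toNat) ⁅e i, e j⁆ = 0 := by
  by_cases hij : i = j
  · subst hij; simp
  · rcases E10M_off i j hij with h | h
    · rw [s.s0 i j h]; simp
    · rw [h]; simp [s.s1 i j h]

theorem map_ad_pow {L L' : Type*} [LieRing L] [LieAlgebra ℚ L] [LieRing L'] [LieAlgebra ℚ L']
    (φ : L →ₗ⁅ℚ⁆ L') (x y : L) (n : ℕ) :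
    φ (((LieAlgebra.ad ℚ L x) ^ n) y) = ((LieAlgebra.ad ℚ L' (φ x)) ^ n) (φ y) := by
  induction n generalizing y with
  | zero => simp
  | succ n ih => simp [pow_succ, ih]

/-- Universal property of the Kac-Moody algebra. -/
theorem exists_lift {L : Type*} [LieRing L] [LieAlgebra ℚ L] {h e f : Fin 10 → L}
    (c : ChevRel h e f) : ∃ φ : Matrix.ToLieAlgebra ℚ E10M →ₗ⁅ℚ⁆ L,
      (∀ i, φ (gH E10M i) = h i) ∧ (∀ i, φ (gE E10M i) = e i) ∧ (∀ i, φ (gF E10M i) = f i) := by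
  set φ₀ : FreeLieAlgebra ℚ (Generators (Fin 10)) →ₗ⁅ℚ⁆ L := FreeLieAlgebra.lift ℚ (genMap h e f)
    with hφ₀
  have hH : ∀ i, φ₀ (FreeLieAlgebra.of ℚ (Generators.H i)) = h i := fun i => by
    simp [hφ₀, genMap]
  have hE : ∀ i, φ₀ (FreeLieAlgebra.of ℚ (Generators.E i)) = e i := fun i => by
    simp [hφ₀, genMap]
  have hF : ∀ i, φ₀ (FreeLieAlgebra.of ℚ (Generators.F i)) = f i := fun i => by
    simp [hφ₀, genMap]
  have key : Relations.toIdeal ℚ E10M ≤ φ₀.ker := by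
    unfold Relations.toIdeal
    rw [LieSubmodule.lieSpan_le]
    rintro x hx
    simp only [SetLike.mem_coe, LieHom.mem_ker]
    simp only [Relations.toSet, Set.mem_union] at hx
    rcases hx with ((((hx | hx) | hx) | hx) | hx) | hx <;> obtain ⟨⟨i, j⟩, rfl⟩ := hx
    · simp [Relations.HH, hH, c.hh]
    · simp only [Relations.EF, Function.uncurry, Function.comp]
      by_cases hij : i = j
      · subst hij; simp [hE, hF, hH, c.ef]
      · simp [hij, hE, hF, c.ef' i j hij]
    · simp [Relations.HE, hH, hE, c.he, Int.cast_smul_eq_zsmul]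
    · simp [Relations.HF, hH, hF, c.hf, Int.cast_smul_eq_zsmul]
    · simp only [Relations.adE, Function.uncurry, Function.comp]
      rw [map_ad_pow, LieHom.map_lie, hE, hE, serre_ad c.se]
    · simp only [Relations.adF, Function.uncurry, Function.comp]
      rw [map_ad_pow, LieHom.map_lie, hF, hF, serre_ad c.sf]
  refine ⟨lieQuotLift (Relations.toIdeal ℚ E10M) φ₀ (fun x hx => by simpa using key hx),
    fun i => ?_, fun i => ?_, fun i => ?_⟩
  · exact hH i
  · exact hE i
  · exact hF i

/-- The quotient map. -/
def kmMk : FreeLieAlgebra ℚ (Generators (Fin 10)) →ₗ⁅ℚ⁆ Matrix.ToLieAlgebra ℚ E10M where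
  toFun x := (LieSubmodule.Quotient.mk' (Relations.toIdeal ℚ E10M) x : _ ⧸ _)
  map_add' x y := rfl
  map_smul' c x := rfl
  map_lie' := by intro x y; rfl

theorem kmMk_surj : Function.Surjective kmMk :=
  LieSubmodule.Quotient.surjective_mk' (Relations.toIdeal ℚ E10M)

theorem kmMk_eq_zero {x} (h : x ∈ Relations.toSet ℚ E10M) : kmMk x = 0 :=
  (LieSubmodule.Quotient.mk_eq_zero (N := Relations.toIdeal ℚ E10M) (m := x)).2
    (LieSubmodule.subset_lieSpan h)

theorem kmMk_H (i) : kmMk (FreeLieAlgebra.of ℚ (Generators.H i)) = gH E10M i := rfl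
theorem kmMk_E (i) : kmMk (FreeLieAlgebra.of ℚ (Generators.E i)) = gE E10M i := rfl
theorem kmMk_F (i) : kmMk (FreeLieAlgebra.of ℚ (Generators.F i)) = gF E10M i := rfl

theorem km_chev : ChevRel (gH E10M) (gE E10M) (gF E10M) where
  hh i j := by
    have := kmMk_eq_zero (x := Relations.HH ℚ (i, j)) (by simp [Relations.toSet])
    simpa [Relations.HH, kmMk_H] using this
  ef i := by
    have := kmMk_eq_zero (x := Relations.EF ℚ (i, i)) (by simp [Relations.toSet])
    simpa [Relations.EF, kmMk_H, kmMk_E, kmMk_F, sub_eq_zero] using this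
  ef' i j hij := by
    have := kmMk_eq_zero (x := Relations.EF ℚ (i, j)) (by simp [Relations.toSet])
    simpa [Relations.EF, kmMk_H, kmMk_E, kmMk_F, sub_eq_zero, hij] using this
  he i j := by
    have := kmMk_eq_zero (x := Relations.HE ℚ E10M (i, j)) (by simp [Relations.toSet])
    simpa [Relations.HE, kmMk_H, kmMk_E, kmMk_F, sub_eq_zero, Int.cast_smul_eq_zsmul] using this
  hf i j := by
    have := kmMk_eq_zero (x := Relations.HF ℚ E10M (i, j)) (by simp [Relations.toSet])
    simpa [Relations.HF, kmMk_H, kmMk_E, kmMk_F, add_eq_zero_iff_eq_neg, Int.cast_smul_eq_zsmul] using this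
  se := 
   { s0 i j h := by
      have := kmMk_eq_zero (x := Relations.adE ℚ E10M (i, j)) (by simp [Relations.toSet])
      simpa [Relations.adE, kmMk_E, h] using this
     s1 i j h := by
      have := kmMk_eq_zero (x := Relations.adE ℚ E10M (i, j)) (by simp [Relations.toSet])
      simpa [Relations.adE, kmMk_E, h] using this }
  sf := 
   { s0 i j h := by
      have := kmMk_eq_zero (x := Relations.adF ℚ E10M (i, j)) (by simp [Relations.toSet])
      simpa [Relations.adF, kmMk_F, h] using this
     s1 i j h := by
      have := kmMk_eq_zero (x := Relations.adF ℚ E10M (i, j)) (by simp [Relations.toSet])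
      simpa [Relations.adF, kmMk_F, h] using this }

theorem km_gen (K : LieSubalgebra ℚ (Matrix.ToLieAlgebra ℚ E10M)) (hH : ∀ i, gH E10M i ∈ K)
    (hE : ∀ i, gE E10M i ∈ K) (hF : ∀ i, gF E10M i ∈ K) (x) : x ∈ K := by
  obtain ⟨x, rfl⟩ := kmMk_surj x
  let g : Generators (Fin 10) → K
    | .H i => ⟨_, hH i⟩
    | .E i => ⟨_, hE i⟩
    | .F i => ⟨_, hF i⟩
  have : K.incl.comp (FreeLieAlgebra.lift ℚ g) = kmMk := by
    ext y
    cases y <;> simp [g, kmMk_H, kmMk_E, kmMk_F]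
  rw [← this]
  exact (FreeLieAlgebra.lift ℚ g x).2
end

section
open scoped TensorProduct

section semidirect
variable (L M : Type*) [LieRing L] [LieAlgebra ℚ L] [AddCommGroup M] [Module ℚ M]
  [LieRingModule L M] [LieModule ℚ L M]

/-- Semidirect product of a Lie algebra with a module. -/
def SemiD := L × M

instance : AddCommGroup (SemiD L M) := inferInstanceAs (AddCommGroup (L × M))
instance : Module ℚ (SemiD L M) := inferInstanceAs (Module ℚ (L × M))

variable {L M}

/-- Pairs. -/
def SemiD.mk (x : L) (m : M) : SemiD L M := (x, m)
/-- First projection. -/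
def SemiD.fst (p : SemiD L M) : L := Prod.fst p
/-- Second projection. -/
def SemiD.snd (p : SemiD L M) : M := Prod.snd p

theorem SemiD.ext' {p q : SemiD L M} (h1 : p.fst = q.fst) (h2 : p.snd = q.snd) : p = q :=
  Prod.ext h1 h2

@[simp] theorem SemiD.fst_mk (x : L) (m : M) : (SemiD.mk x m).fst = x := rfl
@[simp] theorem SemiD.snd_mk (x : L) (m : M) : (SemiD.mk x m).snd = m := rfl
@[simp] theorem SemiD.fst_add (p q : SemiD L M) : (p + q).fst = p.fst + q.fst := rfl
@[simp] theorem SemiD.snd_add (p q : SemiD L M) : (p + q).snd = p.snd + q.snd := rfl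
@[simp] theorem SemiD.fst_neg (p : SemiD L M) : (-p).fst = -p.fst := rfl
@[simp] theorem SemiD.snd_neg (p : SemiD L M) : (-p).snd = -p.snd := rfl
@[simp] theorem SemiD.fst_zero : (0 : SemiD L M).fst = 0 := rfl
@[simp] theorem SemiD.snd_zero : (0 : SemiD L M).snd = 0 := rfl
@[simp] theorem SemiD.fst_smul (c : ℚ) (p : SemiD L M) : (c • p).fst = c • p.fst := rfl
@[simp] theorem SemiD.snd_smul (c : ℚ) (p : SemiD L M) : (c • p).snd = c • p.snd := rfl

instance : Bracket (SemiD L M) (SemiD L M) :=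
  ⟨fun p q => SemiD.mk ⁅p.fst, q.fst⁆ (⁅p.fst, q.snd⁆ - ⁅q.fst, p.snd⁆)⟩

@[simp] theorem SemiD.fst_lie (p q : SemiD L M) : ⁅p, q⁆.fst = ⁅p.fst, q.fst⁆ := rfl
@[simp] theorem SemiD.snd_lie (p q : SemiD L M) :
    ⁅p, q⁆.snd = ⁅p.fst, q.snd⁆ - ⁅q.fst, p.snd⁆ := rfl

instance : LieRing (SemiD L M) where
  add_lie p q r := SemiD.ext' (by simp) (by simp; abel)
  lie_add p q r := SemiD.ext' (by simp) (by simp; abel)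
  lie_self p := SemiD.ext' (by simp) (by simp)
  leibniz_lie p q r := SemiD.ext' (by simp) (by simp; abel)

instance : LieAlgebra ℚ (SemiD L M) where
  lie_smul c p q := SemiD.ext' (by simp) (by simp [smul_sub])

end semidirect

section cocyc
variable {L : Type*} [LieRing L] [LieAlgebra ℚ L] {h e f : Fin 10 → L}

/-- The value of the cobracket on a generator. -/
def cob (x y : L) : L ⊗[ℚ] L := (1/2 : ℚ) • (x ⊗ₜ[ℚ] y - y ⊗ₜ[ℚ] x)

theorem lie_cob (x y z : L) : ⁅z, cob x y⁆ = cob ⁅z, x⁆ y + cob x ⁅z, y⁆ := by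
  simp only [cob, lie_smul, lie_sub, TensorProduct.LieModule.lie_tmul_right]
  module

theorem cob_smul_left (c : ℚ) (x y : L) : cob (c • x) y = c • cob x y := by
  simp only [cob, ← TensorProduct.smul_tmul', TensorProduct.tmul_smul]; module
theorem cob_smul_right (c : ℚ) (x y : L) : cob x (c • y) = c • cob x y := by
  simp only [cob, ← TensorProduct.smul_tmul', TensorProduct.tmul_smul]; module
theorem cob_self (x : L) : cob x x = 0 := by simp [cob]
theorem cob_zero_left (x : L) : cob 0 x = 0 := by simp [cob]
theorem cob_zero_right (x : L) : cob x 0 = 0 := by simp [cob]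
theorem cob_swap (x y : L) : cob x y = - cob y x := by simp only [cob]; module
theorem cob_neg_left (x y : L) : cob (-x) y = - cob x y := by
  simp [cob, TensorProduct.neg_tmul, TensorProduct.tmul_neg]; module
theorem cob_neg_right (x y : L) : cob x (-y) = - cob x y := by
  simp [cob, TensorProduct.neg_tmul, TensorProduct.tmul_neg]; module

theorem eh (c : PreChev h e f) (i j) : ⁅e i, h j⁆ = -((E10M i j : ℚ) • e i) := by
  rw [← lie_skew, c.he, E10M_symm]
theorem fh (c : PreChev h e f) (i j) : ⁅f i, h j⁆ = ((E10M i j : ℚ) • f i) := by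
  rw [← lie_skew, c.hf, E10M_symm, neg_neg]

theorem serre_semi (t : ℚ) (eh : ∀ i j, ⁅e i, h j⁆ = (t * (E10M i j : ℚ)) • e i)
    (s : SerreRel e) :
    SerreRel (fun i => (SemiD.mk (e i) (cob (e i) (h i)) : SemiD L (L ⊗[ℚ] L))) where
  s0 i j hij := by
    apply SemiD.ext'
    · simp [s.s0 i j hij]
    · have hji : E10M j i = 0 := by rw [E10M_symm]; exact hij
      simp [lie_cob, s.s0 i j hij, s.s0 j i hji, eh, hij, hji, cob_zero_left, cob_zero_right]
  s1 i j hij := by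
    have hji : E10M j i = -1 := by rw [E10M_symm]; exact hij
    apply SemiD.ext'
    · simp [s.s1 i j hij]
    · have h1 : ⁅e i, ⁅e j, e i⁆⁆ = 0 := by
        rw [← lie_skew (e j) (e i), lie_neg, s.s1 i j hij, neg_zero]
      have h2 : ⁅⁅e i, e j⁆, e i⁆ = 0 := by rw [← lie_skew, s.s1 i j hij, neg_zero]
      have h3 : ⁅⁅e i, e j⁆, h i⁆ = t • ⁅e i, e j⁆ := by
        rw [lie_lie, eh, eh, lie_smul, lie_smul, hji, E10M_diag, ← lie_skew (e j) (e i)]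
        push_cast; module
      have h4 : ⁅e j, e i⁆ = - ⁅e i, e j⁆ := (lie_skew _ _).symm
      simp only [SemiD.snd_lie, SemiD.fst_lie, SemiD.fst_mk, SemiD.snd_mk, SemiD.snd_zero, lie_sub,
        lie_cob, h2, h3, h4, eh, hij, hji, cob_zero_left, cob_zero_right, s.s1 i j hij,
        E10M_diag, cob_smul_right, cob_self, lie_smul, lie_self, lie_add, lie_neg, cob_neg_left]
      rw [cob_swap (e i) ⁅e i, e j⁆]
      push_cast
      module

theorem chev_semi (c : ChevRel h e f) :
    ChevRel (fun i => (SemiD.mk (h i) 0 : SemiD L (L ⊗[ℚ] L)))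
      (fun i => SemiD.mk (e i) (cob (e i) (h i))) (fun i => SemiD.mk (f i) (cob (f i) (h i))) where
  hh i j := SemiD.ext' (by simp [c.hh]) (by simp)
  ef i := SemiD.ext' (by simp [c.ef]) (by
    have : ⁅f i, e i⁆ = - h i := by rw [← lie_skew, c.ef]
    simp [lie_cob, c.ef, eh c.toPreChev, fh c.toPreChev, E10M_diag, cob_self, this,
      cob_neg_left, cob_neg_right, cob_smul_right]
    rw [cob_swap (f i)]; simp)
  ef' i j hij := SemiD.ext' (by simp [c.ef' i j hij]) (by
    have : ⁅f j, e i⁆ = 0 := by rw [← lie_skew, c.ef' i j hij, neg_zero]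
    simp [lie_cob, c.ef' i j hij, eh c.toPreChev, fh c.toPreChev, cob_zero_left, this,
      cob_neg_left, cob_neg_right, cob_smul_right]
    rw [cob_swap (f j), E10M_symm]; module)
  he i j := SemiD.ext' (by simp [c.he]) (by
    simp [lie_cob, c.he, c.hh, cob_zero_right, cob_smul_left])
  hf i j := SemiD.ext' (by simp [c.hf]) (by
    simp [lie_cob, c.hf, c.hh, cob_zero_right, cob_smul_left, cob_neg_left])
  se := serre_semi (-1) (fun i j => by rw [eh c.toPreChev]; module) c.se
  sf := serre_semi 1 (fun i j => by rw [fh c.toPreChev]; module) c.sf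

end cocyc

/-- The cobracket of the Kac-Moody algebra. -/
theorem exists_cobracket : ∃ δ : Matrix.ToLieAlgebra ℚ E10M →ₗ[ℚ]
      (Matrix.ToLieAlgebra ℚ E10M ⊗[ℚ] Matrix.ToLieAlgebra ℚ E10M),
    (∀ x y, δ ⁅x, y⁆ = ⁅x, δ y⁆ - ⁅y, δ x⁆) ∧ (∀ i, δ (gH E10M i) = 0) ∧
    (∀ i, δ (gE E10M i) = cob (gE E10M i) (gH E10M i)) ∧
    (∀ i, δ (gF E10M i) = cob (gF E10M i) (gH E10M i)) := by
  obtain ⟨φ, hH, hE, hF⟩ := exists_lift (chev_semi km_chev)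
  have h1 : ∀ x, (φ x).fst = x := by
    let K : LieSubalgebra ℚ (Matrix.ToLieAlgebra ℚ E10M) :=
      { carrier := {x | (φ x).fst = x}
        add_mem' := by intro a b ha hb; simp_all
        zero_mem' := by simp
        smul_mem' := by intro c a ha; simp_all
        lie_mem' := by intro a b ha hb; simp_all }
    intro x
    exact km_gen K (fun i => by simp [K, hH]) (fun i => by simp [K, hE])
      (fun i => by simp [K, hF]) x
  refine ⟨{ toFun := fun x => (φ x).snd, map_add' := by simp, map_smul' := by simp }, ?_, ?_, ?_, ?_⟩
  · intro x y; simp [h1]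
  · intro i; simp [hH]
  · intro i; simp [hE]
  · intro i; simp [hF]
end

section
section precomm
variable {L : Type*} [LieRing L] [LieAlgebra ℚ L] {h e f : Fin 10 → L}

theorem fe_lie (c : PreChev h e f) (i j : Fin 10) : ⁅f i, e j⁆ = if i = j then - h i else 0 := by
  split_ifs with hij
  · subst hij; rw [← lie_skew, c.ef]
  · rw [← lie_skew, c.ef' j i (Ne.symm hij), neg_zero]

theorem serre_comm0 (c : PreChev h e f) (i j k : Fin 10) (hjk : E10M j k = 0) :
    ⁅f i, ⁅e j, e k⁆⁆ = 0 := by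
  have hkj : E10M k j = 0 := by rw [E10M_symm]; exact hjk
  have hne : j ≠ k := by rintro rfl; rw [E10M_diag] at hjk; omega
  rw [leibniz_lie, fe_lie c, fe_lie c]
  by_cases h1 : i = j
  · subst h1; simp [hne, c.he, hjk]
  · by_cases h2 : i = k
    · subst h2; simp [h1, eh c, hjk]
    · simp [h1, h2]

theorem serre_comm1 (c : PreChev h e f) (i j k : Fin 10) (hjk : E10M j k = -1) :
    ⁅f i, ⁅e j, ⁅e j, e k⁆⁆⁆ = 0 := by
  have hkj : E10M k j = -1 := by rw [E10M_symm]; exact hjk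
  have hne : j ≠ k := by rintro rfl; rw [E10M_diag] at hjk; omega
  rw [leibniz_lie, leibniz_lie (f i) (e j) (e k), fe_lie c, fe_lie c]
  by_cases h1 : i = j
  · subst h1
    simp [hne, c.he, hjk, leibniz_lie (h i), E10M_diag]
    module
  · by_cases h2 : i = k
    · subst h2; simp [h1, eh c, hjk]
    · simp [h1, h2]
end precomm

attribute [local instance] LieRing.ofAssociativeRing

/-- Words. -/
abbrev WM := List (Fin 10) →₀ ℚ

/-- Weights of words. -/
def wtW (i : Fin 10) (w : List (Fin 10)) : ℚ := (w.map (fun j => (E10M i j : ℚ))).sum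
/-- Creation. -/
def eOp (i : Fin 10) : Module.End ℚ WM := Finsupp.lmapDomain ℚ ℚ (List.cons i)
/-- Weight operator. -/
def hOp (i : Fin 10) : Module.End ℚ WM :=
  Finsupp.linearCombination ℚ (fun w => wtW i w • Finsupp.single w (1 : ℚ))
/-- Annihilation on words. -/
def fv (i : Fin 10) : List (Fin 10) → WM
  | [] => 0
  | j :: w => eOp j (fv i w) - if i = j then wtW i w • Finsupp.single w (1 : ℚ) else 0
/-- Annihilation. -/
def fOp (i : Fin 10) : Module.End ℚ WM := Finsupp.linearCombination ℚ (fv i)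

theorem eOp_single (i w) : eOp i (Finsupp.single w (1:ℚ)) = Finsupp.single (i :: w) 1 := by
  simp [eOp]
theorem hOp_single (i w) : hOp i (Finsupp.single w (1:ℚ)) = wtW i w • Finsupp.single w 1 := by
  simp [hOp]
theorem fOp_single (i w) : fOp i (Finsupp.single w (1:ℚ)) = fv i w := by
  simp [fOp]
theorem wm_ext {a b : Module.End ℚ WM} (h : ∀ w, a (Finsupp.single w 1) = b (Finsupp.single w 1)) :
    a = b := Finsupp.lhom_ext' fun w => LinearMap.ext_ring (h w)

theorem he_op (i j) (m : WM) : hOp i (eOp j m) - eOp j (hOp i m) = (E10M i j : ℚ) • eOp j m := by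
  have : hOp i * eOp j - eOp j * hOp i = (E10M i j : ℚ) • eOp j := by
    apply wm_ext; intro w
    simp only [LinearMap.sub_apply, Module.End.mul_apply, LinearMap.smul_apply, eOp_single,
      hOp_single, map_smul]
    simp only [wtW, List.map_cons, List.sum_cons]; module
  exact LinearMap.congr_fun this m

theorem ef_op (i j) (m : WM) : eOp i (fOp j m) - fOp j (eOp i m) = if j = i then hOp i m else 0 := by
  have : eOp i * fOp j - fOp j * eOp i = if j = i then hOp i else 0 := by
    apply wm_ext; intro w
    simp only [LinearMap.sub_apply, Module.End.mul_apply, eOp_single, fOp_single, fv]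
    split_ifs with h
    · subst h; simp [hOp_single]
    · simp
  have := LinearMap.congr_fun this m
  split_ifs at this ⊢ <;> exact this

theorem hfv (i j w) : hOp i (fv j w) = (wtW i w - E10M i j) • fv j w := by
  induction w with
  | nil => simp [fv]
  | cons k w ih =>
    have h1 := he_op i k (fv j w)
    rw [ih, map_smul, sub_eq_iff_eq_add] at h1
    simp only [fv, map_sub, h1]
    split_ifs with h
    · subst h
      simp only [map_smul, hOp_single, wtW, List.map_cons, List.sum_cons]; module
    · simp only [map_zero, wtW, List.map_cons, List.sum_cons]; module

theorem pre_op : PreChev hOp eOp fOp where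
  hh i j := by
    apply wm_ext; intro w
    simp only [LieRing.of_associative_ring_bracket, LinearMap.sub_apply, Module.End.mul_apply,
      hOp_single, map_smul, LinearMap.zero_apply]
    module
  ef i := by
    apply LinearMap.ext; intro m
    have := ef_op i i m
    rw [if_pos rfl] at this; simpa using this
  ef' i j hij := by
    apply LinearMap.ext; intro m
    have := ef_op i j m
    rw [if_neg hij.symm] at this; simpa using this
  he i j := by
    apply LinearMap.ext; intro m
    simpa using he_op i j m
  hf i j := by
    apply wm_ext; intro w
    simp only [LieRing.of_associative_ring_bracket, LinearMap.sub_apply, Module.End.mul_apply,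
      fOp_single, hOp_single, hfv, map_smul, LinearMap.neg_apply, LinearMap.smul_apply]
    module

theorem vac_zero (T : Module.End ℚ WM) (h0 : T (Finsupp.single [] 1) = 0)
    (hT : ∀ i, ⁅eOp i, T⁆ = 0) : T = 0 := by
  apply wm_ext; intro w
  induction w with
  | nil => simpa using h0
  | cons k w ih =>
    have := LinearMap.congr_fun (hT k) (Finsupp.single w 1)
    simp only [LieRing.of_associative_ring_bracket, LinearMap.sub_apply, Module.End.mul_apply, ih,
      eOp_single] at this
    simpa using this

theorem sf_op : SerreRel fOp where
  s0 i j hij := by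
    apply vac_zero
    · simp [LieRing.of_associative_ring_bracket, fOp_single, fv]
    · intro k; exact serre_comm0 pre_op.swap k i j hij
  s1 i j hij := by
    apply vac_zero
    · simp [LieRing.of_associative_ring_bracket, fOp_single, fv]
    · intro k; exact serre_comm1 pre_op.swap k i j hij

/-- The Serre operators. -/
inductive SOp : Module.End ℚ WM → Prop
  | s0 (i j) (h : E10M i j = 0) : SOp ⁅eOp i, eOp j⁆
  | s1 (i j) (h : E10M i j = -1) : SOp ⁅eOp i, ⁅eOp i, eOp j⁆⁆

/-- The generators of the submodule killed. -/
inductive IGen : WM → Prop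
  | base (S) (hS : SOp S) (m) : IGen (S m)
  | step (i m) (h : IGen m) : IGen (eOp i m)

/-- The submodule killed. -/
def ISub : Submodule ℚ WM := Submodule.span ℚ {m | IGen m}

theorem stab_of (T : Module.End ℚ WM) (h : ∀ m, IGen m → T m ∈ ISub) : ISub ≤ ISub.comap T := by
  unfold ISub
  rw [Submodule.span_le]; intro m hm; exact h m hm

theorem eOp_stab (i) : ISub ≤ ISub.comap (eOp i) :=
  stab_of _ fun m hm => Submodule.subset_span (IGen.step i m hm)

theorem SOp_h {S} (hS : SOp S) (i) : ∃ c : ℚ, ⁅hOp i, S⁆ = c • S := by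
  cases hS with
  | s0 j k h =>
    refine ⟨E10M i j + E10M i k, ?_⟩
    rw [leibniz_lie, pre_op.he, pre_op.he, smul_lie, lie_smul]; module
  | s1 j k h =>
    refine ⟨E10M i j + E10M i j + E10M i k, ?_⟩
    rw [leibniz_lie, leibniz_lie (hOp i) (eOp j) (eOp k), pre_op.he, pre_op.he, smul_lie, smul_lie, lie_smul, lie_add, lie_smul, lie_smul]; module

theorem SOp_f {S} (hS : SOp S) (i) : ⁅fOp i, S⁆ = 0 := by
  cases hS with
  | s0 j k h => exact serre_comm0 pre_op i j k h
  | s1 j k h => exact serre_comm1 pre_op i j k h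

theorem hOp_stab (i) : ISub ≤ ISub.comap (hOp i) := by
  refine stab_of _ fun m hm => ?_
  induction hm with
  | base S hS m =>
    obtain ⟨c, hc⟩ := SOp_h hS i
    have := LinearMap.congr_fun hc m
    simp only [LieRing.of_associative_ring_bracket, LinearMap.sub_apply, Module.End.mul_apply,
      sub_eq_iff_eq_add, LinearMap.smul_apply] at this
    rw [this]
    exact add_mem (Submodule.smul_mem _ _ (Submodule.subset_span (IGen.base S hS m)))
      (Submodule.subset_span (IGen.base S hS _))
  | step j m h ih =>
    have := he_op i j m
    rw [sub_eq_iff_eq_add] at this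
    rw [this]
    exact add_mem (Submodule.smul_mem _ _ (Submodule.subset_span (IGen.step j m h)))
      (eOp_stab j ih)

theorem fOp_stab (i) : ISub ≤ ISub.comap (fOp i) := by
  refine stab_of _ fun m hm => ?_
  induction hm with
  | base S hS m =>
    have := LinearMap.congr_fun (SOp_f hS i) m
    simp only [LieRing.of_associative_ring_bracket, LinearMap.sub_apply, Module.End.mul_apply,
      sub_eq_iff_eq_add, LinearMap.zero_apply, zero_add] at this
    rw [this]
    exact (Submodule.subset_span (IGen.base S hS _))
  | step j m h ih =>
    have := ef_op j i m
    rw [sub_eq_iff_eq_add] at this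
    have h2 : fOp i (eOp j m) = eOp j (fOp i m) - if i = j then hOp j m else 0 := by
      rw [this]; abel
    rw [h2]
    refine sub_mem (eOp_stab j ih) ?_
    split_ifs
    · exact hOp_stab j (Submodule.subset_span h)
    · exact zero_mem _

/-- The counting functional. -/
def cntW : WM →ₗ[ℚ] ℚ := Finsupp.linearCombination ℚ (fun _ => (1:ℚ))

theorem cntW_e (i) (m) : cntW (eOp i m) = cntW m := by
  have : cntW ∘ₗ eOp i = cntW := by
    apply Finsupp.lhom_ext' ; intro w; apply LinearMap.ext_ring
    simp [eOp_single, cntW]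
  exact LinearMap.congr_fun this m

theorem cntW_I {m} (h : m ∈ ISub) : cntW m = 0 := by
  have : ISub ≤ LinearMap.ker cntW := by
    unfold ISub
    rw [Submodule.span_le]; intro m hm
    simp only [SetLike.mem_coe, LinearMap.mem_ker]
    induction hm with
    | base S hS m =>
      cases hS <;> simp [LieRing.of_associative_ring_bracket, cntW_e]
    | step j m h ih => rw [cntW_e, ih]
  exact this h

/-- A quotient operator. -/
abbrev qOp (T : Module.End ℚ WM) (h : ISub ≤ ISub.comap T) : Module.End ℚ (WM ⧸ ISub) :=
  ISub.mapQ ISub T h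

theorem q_ext {a b : Module.End ℚ (WM ⧸ ISub)} (h : ∀ m, a (ISub.mkQ m) = b (ISub.mkQ m)) : a = b :=
  Submodule.linearMap_qext _ (LinearMap.ext h)

theorem q_zero {m : WM} (h : m = 0 ∨ m ∈ ISub) : ISub.mkQ m = 0 := by
  rcases h with rfl | h
  · simp
  · simpa using h

theorem chev_q : ChevRel (fun i => qOp (hOp i) (hOp_stab i)) (fun i => qOp (eOp i) (eOp_stab i))
    (fun i => qOp (fOp i) (fOp_stab i)) where
  hh i j := by
    apply q_ext; intro m
    exact congrArg ISub.mkQ (LinearMap.congr_fun (pre_op.hh i j) m)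
  ef i := by
    apply q_ext; intro m
    exact congrArg ISub.mkQ (LinearMap.congr_fun (pre_op.ef i) m)
  ef' i j hij := by
    apply q_ext; intro m
    exact congrArg ISub.mkQ (LinearMap.congr_fun (pre_op.ef' i j hij) m)
  he i j := by
    apply q_ext; intro m
    exact congrArg ISub.mkQ (LinearMap.congr_fun (pre_op.he i j) m)
  hf i j := by
    apply q_ext; intro m
    exact congrArg ISub.mkQ (LinearMap.congr_fun (pre_op.hf i j) m)
  se :=
   { s0 i j hij := by
      apply q_ext; intro m
      exact q_zero (.inr (Submodule.subset_span (IGen.base _ (.s0 i j hij) m)))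
     s1 i j hij := by
      apply q_ext; intro m
      exact q_zero (.inr (Submodule.subset_span (IGen.base _ (.s1 i j hij) m))) }
  sf := 
   { s0 i j hij := by
      apply q_ext; intro m
      exact congrArg ISub.mkQ (LinearMap.congr_fun (sf_op.s0 i j hij) m)
     s1 i j hij := by
      apply q_ext; intro m
      exact congrArg ISub.mkQ (LinearMap.congr_fun (sf_op.s1 i j hij) m) }

theorem gE_ne_zero (i) : gE E10M i ≠ 0 := by
  obtain ⟨φ, _, hE, _⟩ := exists_lift chev_q
  intro h
  have h1 := hE i
  rw [h, map_zero] at h1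
  have h2 := LinearMap.congr_fun h1 (ISub.mkQ (Finsupp.single [] 1))
  have h3 : ISub.mkQ (Finsupp.single [i] 1) = 0 := by
    rw [← eOp_single]; exact h2.symm
  have h4 : Finsupp.single [i] (1:ℚ) ∈ ISub := by simpa using h3
  have := cntW_I h4
  simp [cntW] at this
end

section
/-- Weights in the root lattice. -/
abbrev Wt := Fin 10 → ℤ

/-- The pairing of a lattice vector with the simple roots. -/
def wtv (n : Wt) (i : Fin 10) : ℤ := ∑ j, E10M i j * n j

theorem wtv_add (a b i) : wtv (a + b) i = wtv a i + wtv b i := by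
  simp [wtv, mul_add, Finset.sum_add_distrib]
theorem wtv_neg (a i) : wtv (-a) i = - wtv a i := by
  simp [wtv, Finset.sum_neg_distrib]
theorem wtv_sub (a b i) : wtv (a - b) i = wtv a i - wtv b i := by
  rw [sub_eq_add_neg, wtv_add, wtv_neg]; ring
theorem wtv_zero (i) : wtv 0 i = 0 := by simp [wtv]
theorem wtv_smul (c : ℤ) (a i) : wtv (c • a) i = c * wtv a i := by
  simp [wtv, Finset.mul_sum]; exact Finset.sum_congr rfl fun j _ => by ring
theorem wtv_single (i j) : wtv (Pi.single j 1) i = E10M i j := by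
  simp [wtv, Pi.single_apply]

/-- Minus the inverse of the Cartan matrix. -/
def LamM : Fin 10 → Fin 10 → ℤ := ![
  ![0,1,2,3,4,5,6,4,2,3], ![1,2,4,6,8,10,12,8,4,6], ![2,4,6,9,12,15,18,12,6,9],
  ![3,6,9,12,16,20,24,16,8,12], ![4,8,12,16,20,25,30,20,10,15], ![5,10,15,20,25,30,36,24,12,18],
  ![6,12,18,24,30,36,42,28,14,21], ![4,8,12,16,20,24,28,18,9,14], ![2,4,6,8,10,12,14,9,4,7],
  ![3,6,9,12,15,18,21,14,7,10]]

theorem LamM_mul : ∀ j k, ∑ i, LamM i k * E10M i j = if j = k then -1 else 0 := by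
  unfold E10M; decide +kernel

theorem wtv_recover (n : Wt) (k) : n k = - ∑ i, LamM i k * wtv n i := by
  have : ∑ i, LamM i k * wtv n i = ∑ j, (∑ i, LamM i k * E10M i j) * n j := by
    simp only [wtv, Finset.mul_sum, Finset.sum_mul]
    rw [Finset.sum_comm]
    exact Finset.sum_congr rfl fun _ _ => Finset.sum_congr rfl fun _ _ => by ring
  rw [this]; simp [LamM_mul]

theorem wtv_inj {a b : Wt} (h : ∀ i, wtv a i = wtv b i) : a = b := by
  ext k; rw [wtv_recover a, wtv_recover b]; simp [h]

section
variable {L : Type*} [LieRing L] [LieAlgebra ℚ L] {h e f : Fin 10 → L}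

/-- Weight spaces. -/
def WS (h : Fin 10 → L) (n : Wt) : Submodule ℚ L :=
  ⨅ i, Module.End.eigenspace (LieAlgebra.ad ℚ L (h i)) ((∑ j, E10M i j * n j : ℤ) : ℚ)

theorem mem_WS {n : Wt} {x : L} : x ∈ WS h n ↔ ∀ i, ⁅h i, x⁆ = (wtv n i : ℚ) • x := by
  simp [WS, Submodule.mem_iInf, Module.End.mem_eigenspace_iff, wtv]

theorem WS_neg {n : Wt} {x : L} : x ∈ WS (fun i => - h i) n ↔ x ∈ WS h (-n) := by
  rw [mem_WS, mem_WS]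
  refine forall_congr' fun i => ?_
  rw [wtv_neg, neg_lie]; push_cast
  rw [neg_eq_iff_eq_neg, neg_smul]

theorem lie_mem_WS {a b : Wt} {x y : L} (hx : x ∈ WS h a) (hy : y ∈ WS h b) :
    ⁅x, y⁆ ∈ WS h (a + b) := by
  rw [mem_WS] at *
  intro i
  rw [leibniz_lie, hx, hy, smul_lie, lie_smul, wtv_add]; push_cast; module

theorem e_mem_WS (c : PreChev h e f) (i) : e i ∈ WS h (Pi.single i 1) := by
  rw [mem_WS]; intro j; rw [c.he, wtv_single]
theorem h_mem_WS (c : PreChev h e f) (i) : h i ∈ WS h 0 := by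
  rw [mem_WS]; intro j; rw [c.hh, wtv_zero]; simp

/-- Right-normed words. -/
inductive EWord (e : Fin 10 → L) : (Fin 10 → ℤ) → L → Prop
  | base (i) : EWord e (Pi.single i 1) (e i)
  | step (i) {n x} (hx : EWord e n x) : EWord e (Pi.single i 1 + n) ⁅e i, x⁆

theorem EWord.mem_WS (c : PreChev h e f) {n x} (w : EWord e n x) : x ∈ WS h n := by
  induction w with
  | base i => exact e_mem_WS c i
  | step i hx ih => exact lie_mem_WS (e_mem_WS c i) ih

theorem EWord.pos {n} {x : L} (w : EWord e n x) : 0 < n := by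
  induction w with
  | base i => rw [Pi.lt_def]; exact ⟨fun j => by by_cases hj : j = i <;> simp [Pi.single_apply, hj],
      i, by simp⟩
  | step i hx ih =>
    refine lt_of_lt_of_le ih (le_add_of_nonneg_left ?_)
    intro j; by_cases hj : j = i <;> simp [Pi.single_apply, hj]

/-- Right normed brackets. -/
def rnb (e : Fin 10 → L) : List (Fin 10) → L
  | [] => 0
  | [i] => e i
  | i :: l => ⁅e i, rnb e l⁆

theorem EWord.exists_list {n} {x : L} (w : EWord e n x) :
    ∃ l : List (Fin 10), (l.length : ℤ) = ∑ i, n i ∧ x = rnb e l ∧ l ≠ [] := by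
  induction w with
  | base i => exact ⟨[i], by simp, rfl, by simp⟩
  | step i hx ih =>
    obtain ⟨l, h1, h2, h3⟩ := ih
    refine ⟨i :: l, by simp [Finset.sum_add_distrib, h1, add_comm], ?_, by simp⟩
    cases l with
    | nil => simp at h3
    | cons j l => rw [rnb, h2]; simp

theorem EWord.finite (e : Fin 10 → L) (n) : {x : L | EWord e n x}.Finite := by
  refine ((List.finite_length_eq (Fin 10) (∑ i, n i).toNat).image (rnb e)).subset ?_
  rintro x hx
  obtain ⟨l, h1, h2, -⟩ := EWord.exists_list hx
  exact ⟨l, by simp only [Set.mem_setOf_eq]; omega, h2.symm⟩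

/-- Borel-type span. -/
def HFs (Hs : Submodule ℚ L) (f : Fin 10 → L) : Submodule ℚ L :=
  Hs ⊔ Submodule.span ℚ {x | ∃ n, EWord f n x}

theorem HFs_word {Hs : Submodule ℚ L} {n x} (w : EWord f n x) : x ∈ HFs Hs f :=
  Submodule.mem_sup_right (Submodule.subset_span ⟨n, w⟩)

theorem HFs_f {Hs : Submodule ℚ L} (hs : ∀ j, ∀ y ∈ Hs, ⁅f j, y⁆ ∈ Submodule.span ℚ {f j})
    (j) {y} (hy : y ∈ HFs Hs f) : ⁅f j, y⁆ ∈ HFs Hs f := by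
  have key : HFs Hs f ≤ (HFs Hs f).comap (LieAlgebra.ad ℚ L (f j) : L →ₗ[ℚ] L) := by
    conv_lhs => unfold HFs
    refine sup_le ?_ ?_
    · intro y hy
      have h1 := hs j y hy
      rw [Submodule.mem_comap, LieAlgebra.ad_apply]
      refine (Submodule.span_le.2 ?_) h1
      rintro z rfl
      exact HFs_word (EWord.base j)
    · rw [Submodule.span_le]
      rintro z ⟨n, w⟩
      exact HFs_word (EWord.step j w)
  exact key hy

theorem HFs_e (c : PreChev h e f) {Hs : Submodule ℚ L} (hh : ∀ i, h i ∈ Hs)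
    (hs : ∀ j, ∀ y ∈ Hs, ⁅f j, y⁆ ∈ Submodule.span ℚ {f j})
    (i) {n y} (w : EWord f n y) : ⁅e i, y⁆ ∈ HFs Hs f := by
  induction w with
  | base j =>
    by_cases hij : i = j
    · subst hij; rw [c.ef]; exact Submodule.mem_sup_left (hh i)
    · rw [c.ef' i j hij]; exact zero_mem _
  | step j hx ih =>
    rw [leibniz_lie]
    refine add_mem ?_ (HFs_f hs j ih)
    by_cases hij : i = j
    · subst hij; rw [c.ef]
      have := mem_WS.1 (WS_neg.1 (EWord.mem_WS c.swap hx)) i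
      rw [this]
      exact Submodule.smul_mem _ _ (HFs_word hx)
    · rw [c.ef' i j hij, zero_lie]; exact zero_mem _

/-- The pieces. -/
def SS (h e f : Fin 10 → L) (n : Wt) : Submodule ℚ L :=
  Submodule.span ℚ {x | (n = 0 ∧ ∃ i, x = h i) ∨ EWord e n x ∨ EWord f (-n) x}

theorem SS_le (c : PreChev h e f) (n) : SS h e f n ≤ WS h n := by
  unfold SS
  rw [Submodule.span_le]
  rintro x (⟨rfl, i, rfl⟩ | w | w)
  · exact h_mem_WS c i
  · exact EWord.mem_WS c w
  · have := WS_neg.1 (EWord.mem_WS c.swap w)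
    rwa [neg_neg] at this

theorem top_of (c : PreChev h e f)
    (gen : ∀ K : LieSubalgebra ℚ L, (∀ i, h i ∈ K) → (∀ i, e i ∈ K) → (∀ i, f i ∈ K) → ∀ x, x ∈ K) :
    (⨆ n, SS h e f n) = ⊤ := by
  set Hs : Submodule ℚ L := Submodule.span ℚ (Set.range h) with hHs
  set T : Submodule ℚ L := ⨆ n, SS h e f n with hT
  have hh : ∀ i, h i ∈ Hs := fun i => Submodule.subset_span ⟨i, rfl⟩
  have hsf : ∀ j, ∀ y ∈ Hs, ⁅f j, y⁆ ∈ Submodule.span ℚ {f j} := by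
    intro j
    have : Hs ≤ (Submodule.span ℚ {f j}).comap (LieAlgebra.ad ℚ L (f j) : L →ₗ[ℚ] L) := by
      rw [hHs, Submodule.span_le]
      rintro y ⟨i, rfl⟩
      simp only [Submodule.comap_coe, Set.mem_preimage, LieAlgebra.ad_apply, fh c, SetLike.mem_coe]
      exact Submodule.smul_mem _ _ (Submodule.mem_span_singleton_self _)
    exact fun y hy => this hy
  have hse : ∀ j, ∀ y ∈ Hs, ⁅e j, y⁆ ∈ Submodule.span ℚ {e j} := by
    intro j
    have : Hs ≤ (Submodule.span ℚ {e j}).comap (LieAlgebra.ad ℚ L (e j) : L →ₗ[ℚ] L) := by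
      rw [hHs, Submodule.span_le]
      rintro y ⟨i, rfl⟩
      simp only [Submodule.comap_coe, Set.mem_preimage, LieAlgebra.ad_apply, eh c, SetLike.mem_coe]
      exact neg_mem (Submodule.smul_mem _ _ (Submodule.mem_span_singleton_self _))
    exact fun y hy => this hy
  have hTH : ∀ i, h i ∈ T := fun i =>
    Submodule.mem_iSup_of_mem 0 (Submodule.subset_span (.inl ⟨rfl, i, rfl⟩))
  have hTE : ∀ n x, EWord e n x → x ∈ T := fun n x w =>
    Submodule.mem_iSup_of_mem n (Submodule.subset_span (.inr (.inl w)))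
  have hTF : ∀ n x, EWord f n x → x ∈ T := fun n x w =>
    Submodule.mem_iSup_of_mem (-n) (Submodule.subset_span (.inr (.inr (by rwa [neg_neg]))))
  have hHT : Hs ≤ T := by
    rw [hHs, Submodule.span_le]; rintro _ ⟨i, rfl⟩; exact hTH i
  have hE : HFs Hs e ≤ T := by
    refine sup_le hHT ?_
    rw [Submodule.span_le]; rintro x ⟨n, w⟩; exact hTE n x w
  have hF : HFs Hs f ≤ T := by
    refine sup_le hHT ?_
    rw [Submodule.span_le]; rintro x ⟨n, w⟩; exact hTF n x w
  have stab : ∀ y : L, (∀ n x, x ∈ {x | (n = 0 ∧ ∃ i, x = h i) ∨ EWord e n x ∨ EWord f (-n) x} →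
      ⁅y, x⁆ ∈ T) → ∀ x ∈ T, ⁅y, x⁆ ∈ T := by
    intro y hy
    have : T ≤ T.comap (LieAlgebra.ad ℚ L y : L →ₗ[ℚ] L) := by
      conv_lhs => rw [hT]
      refine iSup_le fun n => ?_
      unfold SS
      rw [Submodule.span_le]
      intro x hx
      exact hy n x hx
    exact fun x hx => this hx
  let K : LieSubalgebra ℚ L :=
    { carrier := {y | ∀ x ∈ T, ⁅y, x⁆ ∈ T}
      add_mem' := fun {a b} ha hb x hx => by rw [add_lie]; exact add_mem (ha x hx) (hb x hx)
      zero_mem' := fun x hx => by rw [zero_lie]; exact zero_mem _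
      smul_mem' := fun t a ha x hx => by rw [smul_lie]; exact T.smul_mem _ (ha x hx)
      lie_mem' := fun {a b} ha hb x hx => by
        rw [lie_lie]; exact sub_mem (ha _ (hb x hx)) (hb _ (ha x hx)) }
  have hK : ∀ y, y ∈ K := by
    refine gen K (fun i => ?_) (fun i => ?_) (fun i => ?_)
    · refine stab _ fun n x hx => ?_
      have h1 : x ∈ SS h e f n := Submodule.subset_span hx
      rw [mem_WS.1 (SS_le c n h1) i]
      exact T.smul_mem _ (Submodule.mem_iSup_of_mem n h1)
    · refine stab _ fun n x hx => ?_
      rcases hx with ⟨-, j, rfl⟩ | w | w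
      · rw [eh c]; exact neg_mem (T.smul_mem _ (hTE _ _ (.base i)))
      · exact hTE _ _ (.step i w)
      · exact hF (HFs_e c hh hsf i w)
    · refine stab _ fun n x hx => ?_
      rcases hx with ⟨-, j, rfl⟩ | w | w
      · rw [fh c]; exact T.smul_mem _ (hTF _ _ (.base i))
      · exact hE (HFs_e c.swap (fun i => neg_mem (hh i)) hse i w)
      · exact hTF _ _ (.step i w)
  let K2 : LieSubalgebra ℚ L :=
    { T with lie_mem' := fun {a b} ha hb => hK a b hb }
  rw [eq_top_iff]
  intro x _
  exact gen K2 hTH (fun i => hTE _ _ (.base i)) (fun i => hTF _ _ (.base i)) x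

theorem WS_indep (c : PreChev h e f) : iSupIndep (WS h) := by
  have comm : ∀ i j, Commute (LieAlgebra.ad ℚ L (h i)) (LieAlgebra.ad ℚ L (h j)) := by
    intro i j
    apply LinearMap.ext; intro x
    simp only [Module.End.mul_apply, LieAlgebra.ad_apply]
    rw [leibniz_lie (h i), c.hh, zero_lie, zero_add]
  have hm : ∀ i j φ, Set.MapsTo (LieAlgebra.ad ℚ L (h i))
      ((LieAlgebra.ad ℚ L (h j)).maxGenEigenspace φ)
      ((LieAlgebra.ad ℚ L (h j)).maxGenEigenspace φ) := fun i j φ =>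
    Module.End.mapsTo_maxGenEigenspace_of_comm (comm j i) φ
  have h1 := Module.End.independent_iInf_maxGenEigenspace_of_forall_mapsTo
    (fun i => LieAlgebra.ad ℚ L (h i)) hm
  have inj : Function.Injective (fun (n : Wt) (i : Fin 10) => (wtv n i : ℚ)) := by
    intro a b hab
    apply wtv_inj; intro i
    have : ((wtv a i : ℤ) : ℚ) = (wtv b i : ℤ) := congrFun hab i
    exact Int.cast_injective this
  have h2 := h1.comp inj
  refine h2.mono fun n x hx => ?_
  rw [mem_WS] at hx
  simp only [Function.comp, Submodule.mem_iInf]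
  intro i
  rw [Module.End.mem_maxGenEigenspace]
  refine ⟨1, ?_⟩
  rw [pow_one, LinearMap.sub_apply, LieAlgebra.ad_apply, hx i]
  simp

theorem WS_eq (c : PreChev h e f)
    (gen : ∀ K : LieSubalgebra ℚ L, (∀ i, h i ∈ K) → (∀ i, e i ∈ K) → (∀ i, f i ∈ K) → ∀ x, x ∈ K)
    (n) : WS h n = SS h e f n := by
  refine le_antisymm ?_ (SS_le c n)
  intro x hx
  have h1 : x ∈ (⨆ n, SS h e f n) := by rw [top_of c gen]; trivial
  rw [iSup_split_single _ n] at h1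
  obtain ⟨s, hs, t, ht, rfl⟩ := Submodule.mem_sup.1 h1
  have h3 : t ∈ WS h n := by simpa using sub_mem hx (SS_le c n hs)
  have h4 : t ∈ ⨆ m, ⨆ (_ : m ≠ n), WS h m :=
    (iSup_mono fun m => iSup_mono fun _ => SS_le c m) ht
  have := Submodule.disjoint_def.1 (WS_indep c n) t h3 h4
  rw [this, add_zero]; exact hs
end
end

section
open scoped TensorProduct

/-- A Kac-Moody algebra of type E10 with its cobracket. -/
structure KMD (L : Type*) [LieRing L] [LieAlgebra ℚ L] where
  h : Fin 10 → L
  e : Fin 10 → L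
  f : Fin 10 → L
  chev : ChevRel h e f
  gen : ∀ K : LieSubalgebra ℚ L, (∀ i, h i ∈ K) → (∀ i, e i ∈ K) → (∀ i, f i ∈ K) → ∀ x, x ∈ K
  e_ne : ∀ i, e i ≠ 0
  δ : L →ₗ[ℚ] L ⊗[ℚ] L
  δ_lie : ∀ x y, δ ⁅x, y⁆ = ⁅x, δ y⁆ - ⁅y, δ x⁆
  δ_h : ∀ i, δ (h i) = 0
  δ_e : ∀ i, δ (e i) = cob (e i) (h i)

theorem exists_KMD : ∃ D : KMD (Matrix.ToLieAlgebra ℚ E10M), D.h = gH E10M := by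
  obtain ⟨δ, h1, h2, h3, -⟩ := exists_cobracket
  exact ⟨⟨gH E10M, gE E10M, gF E10M, km_chev, km_gen, gE_ne_zero, δ, h1, h2, h3⟩, rfl⟩

section sl2
variable {V : Type*} [AddCommGroup V] [Module ℚ V] (E F H : Module.End ℚ V)

theorem sl2_comm (hEF : ∀ x, E (F x) - F (E x) = H x) (hHF : ∀ x, H (F x) - F (H x) = -(2:ℚ) • F x)
    (m : ℚ) (x : V) (hx : H x = m • x) (n : ℕ) :
    E ((F ^ (n+1)) x) = (F ^ (n+1)) (E x) + (((n:ℚ)+1) * (m - n)) • (F ^ n) x := by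
  have hH : ∀ n : ℕ, H ((F ^ n) x) = (m - 2 * n) • (F ^ n) x := by
    intro n
    induction n with
    | zero => simp [hx]
    | succ n ih =>
      have := hHF ((F ^ n) x)
      rw [sub_eq_iff_eq_add, ih, map_smul] at this
      rw [pow_succ', Module.End.mul_apply, this]; push_cast; module
  induction n with
  | zero =>
    have := hEF x
    rw [sub_eq_iff_eq_add, hx] at this
    simp [this, add_comm]
  | succ n ih =>
    have := hEF ((F ^ (n+1)) x)
    rw [sub_eq_iff_eq_add, hH, ih, map_add, map_smul] at this
    rw [pow_succ' F (n+1), Module.End.mul_apply, this, Module.End.mul_apply,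
      ← Module.End.mul_apply F (F ^ n), ← pow_succ']
    push_cast; module

theorem sl2_inj (hEF : ∀ x, E (F x) - F (E x) = H x) (hHF : ∀ x, H (F x) - F (H x) = -(2:ℚ) • F x)
    (hHE : ∀ x, H (E x) - E (H x) = (2:ℚ) • E x) (r : ℕ) :
    ∀ (m : ℕ) (x : V), H x = (m : ℚ) • x → (E ^ r) x = 0 → (F ^ m) x = 0 → x = 0 := by
  induction r with
  | zero => intro m x _ h0 _; simpa using h0
  | succ r ih =>
    intro m x hx h0 hF
    have hFge : ∀ k, (F ^ (m + k)) x = 0 := by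
      intro k; rw [add_comm, pow_add, Module.End.mul_apply, hF, map_zero]
    have hE : E x = 0 := by
      apply ih (m + 2)
      · have := hHE x
        rw [sub_eq_iff_eq_add, hx, map_smul] at this
        rw [this]; push_cast; module
      · rw [← Module.End.mul_apply, ← pow_succ]; exact h0
      · have := sl2_comm E F H hEF hHF m x hx (m + 1)
        rw [show m + 1 + 1 = m + 2 from rfl, hFge 2, hFge 1] at this
        simpa using this.symm
    have hd : ∀ k, k ≤ m → (F ^ (m - k)) x = 0 := by
      intro k
      induction k with
      | zero => intro _; simpa using hF
      | succ k ihk =>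
        intro hk
        have h1 := sl2_comm E F H hEF hHF m x hx (m - (k+1))
        rw [show m - (k+1) + 1 = m - k by omega, ihk (by omega), hE] at h1
        simp only [map_zero, zero_add] at h1
        rcases smul_eq_zero.1 h1.symm with h2 | h2
        · exfalso
          rcases mul_eq_zero.1 h2 with h3 | h3
          · have : (0:ℚ) ≤ ((m - (k+1) : ℕ) : ℚ) := Nat.cast_nonneg _
            linarith
          · rw [sub_eq_zero] at h3
            have : m = m - (k+1) := by exact_mod_cast h3
            omega
        · exact h2
    simpa using hd m le_rfl
end sl2

/-- Simple root. -/
abbrev sr (i : Fin 10) : Wt := Pi.single i 1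
/-- Reflection. -/
def rfx (i : Fin 10) (n : Wt) : Wt := n - wtv n i • sr i

theorem wtv_rfx_self (i n) : wtv (rfx i n) i = - wtv n i := by
  rw [rfx, wtv_sub, wtv_smul, wtv_single, E10M_diag]; ring
theorem rfx_rfx (i n) : rfx i (rfx i n) = n := by
  conv_lhs => rw [rfx]
  rw [wtv_rfx_self, rfx]; module

section inj
variable {L : Type*} [LieRing L] [LieAlgebra ℚ L] {h e f : Fin 10 → L}

theorem nilp (c : ChevRel h e f)
    (gen : ∀ K : LieSubalgebra ℚ L, (∀ i, h i ∈ K) → (∀ i, e i ∈ K) → (∀ i, f i ∈ K) → ∀ x, x ∈ K)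
    (i) (x : L) : ∃ r : ℕ, ((LieAlgebra.ad ℚ L (e i)) ^ r) x = 0 := by
  rw [← LieSubalgebra.mem_engel_iff]
  refine gen _ (fun j => ?_) (fun j => ?_) (fun j => ?_) x <;>
    rw [LieSubalgebra.mem_engel_iff]
  · exact ⟨2, by simp [pow_succ, eh c.toPreChev]⟩
  · refine ⟨2, ?_⟩
    by_cases hij : i = j
    · subst hij; simp [pow_succ]
    · rcases E10M_off i j hij with h0 | h0
      · simp [pow_succ, c.se.s0 i j h0]
      · simp [pow_succ, c.se.s1 i j h0]
  · refine ⟨3, ?_⟩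
    by_cases hij : i = j
    · subst hij; simp [pow_succ, c.ef, eh c.toPreChev]
    · simp [pow_succ, c.ef' i j hij]

theorem ad_pow_mem {k : L} {a b : Wt} (hk : k ∈ WS h a) (m : ℕ) {x : L} (hx : x ∈ WS h b) :
    ((LieAlgebra.ad ℚ L k) ^ m) x ∈ WS h (b + m • a) := by
  induction m with
  | zero => simpa using hx
  | succ m ih =>
    rw [pow_succ', Module.End.mul_apply, LieAlgebra.ad_apply]
    have := lie_mem_WS hk ih
    rwa [show a + (b + m • a) = b + (m + 1) • a by rw [add_smul, one_smul]; abel] at this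

theorem f_inj (c : ChevRel h e f)
    (gen : ∀ K : LieSubalgebra ℚ L, (∀ i, h i ∈ K) → (∀ i, e i ∈ K) → (∀ i, f i ∈ K) → ∀ x, x ∈ K)
    (i) (m : ℕ) (x : L) (hx : ⁅h i, x⁆ = (m : ℚ) • x)
    (h0 : ((LieAlgebra.ad ℚ L (f i)) ^ m) x = 0) : x = 0 := by
  obtain ⟨r, hr⟩ := nilp c gen i x
  refine sl2_inj (LieAlgebra.ad ℚ L (e i)) (LieAlgebra.ad ℚ L (f i)) (LieAlgebra.ad ℚ L (h i))
    ?_ ?_ ?_ r m x hx hr h0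
  · intro x; simp only [LieAlgebra.ad_apply]; rw [← lie_lie, c.ef]
  · intro x; simp only [LieAlgebra.ad_apply]; rw [← lie_lie, c.hf, E10M_diag]; simp
  · intro x; simp only [LieAlgebra.ad_apply]; rw [← lie_lie, c.he, E10M_diag]; simp

theorem f_mem_WS (c : PreChev h e f) (i) : f i ∈ WS h (-sr i) := WS_neg.1 (e_mem_WS c.swap i)

theorem finrank_le_refl (c : ChevRel h e f) 
    (gen : ∀ K : LieSubalgebra ℚ L, (∀ i, h i ∈ K) → (∀ i, e i ∈ K) → (∀ i, f i ∈ K) → ∀ x, x ∈ K)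
    (i) (n : Wt) (hn : 0 ≤ wtv n i) [FiniteDimensional ℚ (WS h (rfx i n))] :
    Module.finrank ℚ (WS h n) ≤ Module.finrank ℚ (WS h (rfx i n)) := by
  set m := (wtv n i).toNat with hm
  have hm' : (m : ℤ) = wtv n i := Int.toNat_of_nonneg hn
  have maps : ∀ x ∈ WS h n, ((LieAlgebra.ad ℚ L (f i)) ^ m) x ∈ WS h (rfx i n) := by
    intro x hx
    have := ad_pow_mem (f_mem_WS c.toPreChev i) m hx
    rwa [show n + m • (-sr i) = rfx i n by
      rw [rfx, ← hm', natCast_zsmul]; module] at this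
  refine LinearMap.finrank_le_finrank_of_injective (f := ((LieAlgebra.ad ℚ L (f i)) ^ m).restrict maps) ?_
  rw [injective_iff_map_eq_zero]
  rintro ⟨x, hx⟩ h0
  have h1 : ((LieAlgebra.ad ℚ L (f i)) ^ m) x = 0 := congrArg Subtype.val h0
  have h2 := f_inj c gen i m x (by rw [mem_WS.1 hx i, ← hm']; simp) h1
  exact Subtype.ext h2

end inj

namespace KMD
variable {L : Type*} [LieRing L] [LieAlgebra ℚ L] (D : KMD L)

/-- Weight spaces. -/
abbrev W (n : Wt) : Submodule ℚ L := WS D.h n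
/-- Multiplicity. -/
def dm (n : Wt) : ℕ := Module.finrank ℚ (D.W n)

theorem W_eq (n : Wt) : D.W n = SS D.h D.e D.f n := WS_eq D.chev.toPreChev D.gen n

theorem findim (n : Wt) : FiniteDimensional ℚ (D.W n) := by
  rw [W_eq]
  unfold SS
  apply FiniteDimensional.span_of_finite
  refine Set.Finite.subset ((Set.finite_range D.h).union
    ((EWord.finite D.e n).union (EWord.finite D.f (-n)))) ?_
  rintro x (⟨_, i, rfl⟩ | hx | hx)
  · exact .inl ⟨i, rfl⟩
  · exact .inr (.inl hx)
  · exact .inr (.inr hx)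

theorem W_mixed (n : Wt) (h1 : ¬ 0 ≤ n) (h2 : ¬ n ≤ 0) : D.W n = ⊥ := by
  rw [W_eq, SS, Submodule.span_eq_bot]
  rintro x (⟨rfl, _⟩ | hx | hx)
  · exact absurd le_rfl h1
  · exact absurd hx.pos.le h1
  · exact absurd (neg_nonneg.1 hx.pos.le) h2

theorem W_pos (n : Wt) (h1 : 0 < n) : D.W n = Submodule.span ℚ {x | EWord D.e n x} := by
  rw [W_eq, SS]
  congr 1
  ext x
  constructor
  · rintro (⟨rfl, _⟩ | hx | hx)
    · exact absurd h1 (lt_irrefl _)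
    · exact hx
    · exact absurd (h1.trans (neg_pos.1 hx.pos)) (lt_irrefl _)
  · intro hx; exact .inr (.inl hx)

theorem dm_mixed (n : Wt) (h1 : ¬ 0 ≤ n) (h2 : ¬ n ≤ 0) : D.dm n = 0 := by
  rw [dm, W_mixed D n h1 h2]; simp

theorem dm_refl (i n) : D.dm (rfx i n) = D.dm n := by
  haveI := D.findim
  have key : ∀ n, 0 ≤ wtv n i → D.dm (rfx i n) = D.dm n := by
    intro n hn
    refine le_antisymm ?_ (finrank_le_refl D.chev D.gen i n hn)
    -- use the swapped data
    have gen' : ∀ K : LieSubalgebra ℚ L, (∀ i, -D.h i ∈ K) → (∀ i, D.f i ∈ K) →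
        (∀ i, D.e i ∈ K) → ∀ x, x ∈ K := fun K h1 h2 h3 =>
      D.gen K (fun i => by simpa using neg_mem (h1 i)) h3 h2
    have hsw : ∀ n, WS (fun i => - D.h i) n = D.W (-n) := fun n => by
      ext x; exact WS_neg
    have hr : rfx i (-rfx i n) = - n := by
      have : rfx i (-rfx i n) = - rfx i (rfx i n) := by
        simp only [rfx, wtv_neg]; module
      rw [this, rfx_rfx]
    haveI : FiniteDimensional ℚ (WS (fun i => - D.h i) (rfx i (-rfx i n))) := by
      rw [hsw]; infer_instance
    have := finrank_le_refl D.chev.swap gen' i (-rfx i n) (by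
      rw [wtv_neg, wtv_rfx_self]; simpa using hn)
    rw [hsw, hr, hsw, neg_neg, neg_neg] at this
    exact this
  by_cases hn : 0 ≤ wtv n i
  · exact key n hn
  · have := key (rfx i n) (by rw [wtv_rfx_self]; omega)
    rw [rfx_rfx] at this
    exact this.symm

theorem single_word (i) {n : Wt} {x : L} (w : EWord D.e n x) (hn : ∀ j, j ≠ i → n j = 0) :
    x = 0 ∨ (n = sr i ∧ x = D.e i) := by
  induction w with
  | base j =>
    have hj : j = i := by
      by_contra hj
      have := hn j hj
      simp at this
    subst hj; exact .inr ⟨rfl, rfl⟩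
  | @step j n x hx ih =>
    have hp := hx.pos.le
    have hj : j = i := by
      by_contra hj
      have := hn j hj
      have h2 := hp j
      simp at this h2; omega
    subst hj
    left
    rcases ih (fun k hk => by have := hn k hk; simpa [Pi.single_apply, hk] using this) with h | ⟨_, h⟩
    · rw [h, lie_zero]
    · rw [h, lie_self]

theorem sr_pos (i) : (0 : Wt) < sr i := by
  rw [Pi.lt_def]
  exact ⟨fun j => by by_cases hj : j = i <;> simp [Pi.single_apply, hj], i, by simp⟩

theorem dm_simple (i) : D.dm (sr i) = 1 := by
  rw [dm, W_pos D _ (sr_pos i)]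
  have : Submodule.span ℚ {x | EWord D.e (sr i) x} = Submodule.span ℚ {D.e i} := by
    apply le_antisymm
    · rw [Submodule.span_le]
      intro x hx
      rcases single_word D i hx (fun j hj => by simp [Pi.single_apply, hj]) with h | ⟨-, h⟩
      · rw [h]; exact zero_mem _
      · rw [h]; exact Submodule.mem_span_singleton_self _
    · rw [Submodule.span_le]
      rintro x rfl
      exact Submodule.subset_span (EWord.base i)
  rw [this, finrank_span_singleton (D.e_ne i)]

theorem dm_multiple (i) (n : Wt) (hn : ∀ j, j ≠ i → n j = 0) (h2 : 2 ≤ n i) : D.dm n = 0 := by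
  have hpos : 0 < n := by
    rw [Pi.lt_def]
    refine ⟨fun j => ?_, i, by simp; omega⟩
    by_cases hj : j = i
    · subst hj; simp; omega
    · simp [hn j hj]
  rw [dm, W_pos D _ hpos]
  have : Submodule.span ℚ {x | EWord D.e n x} = ⊥ := by
    rw [Submodule.span_eq_bot]
    intro x hx
    rcases single_word D i hx hn with h | ⟨h, -⟩
    · exact h
    · rw [h] at h2; simp at h2
  rw [this]; simp

end KMD
end

section
open scoped TensorProduct

/-- The bilinear form. -/
def bf (a b : Wt) : ℤ := ∑ i, a i * wtv b i

theorem bf_comm (a b) : bf a b = bf b a := by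
  simp only [bf, wtv, Finset.mul_sum]
  rw [Finset.sum_comm]
  exact Finset.sum_congr rfl fun i _ => Finset.sum_congr rfl fun j _ => by
    rw [E10M_symm]; ring

/-- Height. -/
def ht (a : Wt) : ℤ := ∑ i, a i

namespace KMD
open scoped Classical
variable {L : Type*} [LieRing L] [LieAlgebra ℚ L] (D : KMD L)

/-- Adapted bases and coordinates. -/
structure Coords where
  B : ∀ n : Wt, Fin (D.dm n) → L
  c : ∀ n : Wt, Fin (D.dm n) → (L →ₗ[ℚ] ℚ)
  B_mem : ∀ n i, B n i ∈ D.W n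
  c_ne : ∀ n i m x, x ∈ D.W m → m ≠ n → c n i x = 0
  c_sum : ∀ n x, x ∈ D.W n → ∑ i, c n i x • B n i = x
  c_B : ∀ n i j, c n i (B n j) = if i = j then 1 else 0

theorem exists_coords : Nonempty (Coords D) := by
  haveI := D.findim
  have htop : iSup (WS D.h) = ⊤ := by
    rw [eq_top_iff, ← top_of D.chev.toPreChev D.gen]
    exact iSup_mono fun n => SS_le D.chev.toPreChev n
  have hint := DirectSum.isInternal_submodule_of_iSupIndep_of_iSup_eq_top
    (WS_indep D.chev.toPreChev) htop
  let v : ∀ n : Wt, Module.Basis (Fin (D.dm n)) ℚ (WS D.h n) := fun n => Module.finBasis ℚ (D.W n)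
  refine ⟨⟨fun n i => v n i, fun n i => (hint.collectedBasis v).coord ⟨n, i⟩, ?_, ?_, ?_, ?_⟩⟩
  · intro n i; exact (v n i).2
  · intro n i m x hx hm
    rw [Module.Basis.coord_apply]
    exact hint.collectedBasis_repr_of_mem_ne v hm hx
  · intro n x hx
    have : ∀ i, (hint.collectedBasis v).coord ⟨n, i⟩ x = (v n).repr ⟨x, hx⟩ i := fun i => by
      rw [Module.Basis.coord_apply, hint.collectedBasis_repr_of_mem v hx]
    simp only [this]
    have h2 := congrArg Subtype.val ((v n).sum_repr ⟨x, hx⟩)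
    rw [Submodule.coe_sum] at h2
    exact h2
  · intro n i j
    rw [Module.Basis.coord_apply, hint.collectedBasis_repr_of_mem v (v n j).2]
    simp [Finsupp.single_apply, eq_comm]

/-- The coroot. -/
def hb (β : Wt) : L := ∑ i, (β i : ℚ) • D.h i

theorem hb_add (a b) : D.hb (a + b) = D.hb a + D.hb b := by
  simp [hb, add_smul, Finset.sum_add_distrib]
theorem hb_sr (i) : D.hb (sr i) = D.h i := by
  simp [hb, Pi.single_apply, ite_smul]
theorem hb_mem (β) : D.hb β ∈ D.W 0 :=
  Submodule.sum_mem _ fun i _ => Submodule.smul_mem _ _ (h_mem_WS D.chev.toPreChev i)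
theorem lie_hb (β γ) {z} (hz : z ∈ D.W γ) : ⁅z, D.hb β⁆ = -((bf β γ : ℚ) • z) := by
  rw [← lie_skew, hb, sum_lie]
  simp only [smul_lie, mem_WS.1 hz, smul_smul, ← Finset.sum_smul]
  simp [bf]

/-- Positive part of the tensor square. -/
def Q (β : Wt) : Submodule ℚ (L ⊗[ℚ] L) := Submodule.span ℚ
  {u | ∃ a b x y, 0 < a ∧ 0 < b ∧ a + b = β ∧ x ∈ D.W a ∧ y ∈ D.W b ∧ u = x ⊗ₜ[ℚ] y}

theorem Q_induct {β : Wt} {P : L ⊗[ℚ] L → Prop}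
    (h1 : ∀ a b x y, 0 < a → 0 < b → a + b = β → x ∈ D.W a → y ∈ D.W b → P (x ⊗ₜ[ℚ] y))
    (h0 : P 0) (ha : ∀ u v, P u → P v → P (u + v)) (hs : ∀ (c : ℚ) u, P u → P (c • u))
    {u} (hu : u ∈ D.Q β) : P u := by
  refine Submodule.span_induction (p := fun u _ => P u) ?_ h0 (fun u v _ _ => ha u v)
    (fun c u _ => hs c u) hu
  rintro u ⟨a, b, x, y, h1', h2, h3, h4, h5, rfl⟩
  exact h1 a b x y h1' h2 h3 h4 h5

theorem tmul_mem_Q {a b β : Wt} {x y : L} (ha : 0 < a) (hb : 0 < b) (h : a + b = β) (hx : x ∈ D.W a)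
    (hy : y ∈ D.W b) : x ⊗ₜ[ℚ] y ∈ D.Q β :=
  Submodule.subset_span ⟨a, b, x, y, ha, hb, h, hx, hy, rfl⟩

theorem cob_mem_Q {a b β : Wt} {x y : L} (ha : 0 < a) (hb : 0 < b) (h : a + b = β) (hx : x ∈ D.W a)
    (hy : y ∈ D.W b) : cob x y ∈ D.Q β :=
  Submodule.smul_mem _ _ (sub_mem (D.tmul_mem_Q ha hb h hx hy)
    (D.tmul_mem_Q hb ha (by rw [add_comm]; exact h) hy hx))

theorem lie_mem_Q {a β : Wt} {x : L} {u} (ha : 0 < a) (hx : x ∈ D.W a) (hu : u ∈ D.Q β) :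
    ⁅x, u⁆ ∈ D.Q (a + β) := by
  refine D.Q_induct (P := fun u => ⁅x, u⁆ ∈ D.Q (a + β)) ?_ ?_ ?_ ?_ hu
  · intro b c y z hb hc h hy hz
    rw [TensorProduct.LieModule.lie_tmul_right]
    refine add_mem (D.tmul_mem_Q (add_pos ha hb) hc ?_ (lie_mem_WS hx hy) hz)
      (D.tmul_mem_Q hb (add_pos ha hc) ?_ hy (lie_mem_WS hx hz))
    · rw [← h]; abel
    · rw [← h]; abel
  · rw [lie_zero]; exact zero_mem _
  · intro u v h1 h2; rw [lie_add]; exact add_mem h1 h2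
  · intro c u h1; rw [lie_smul]; exact Submodule.smul_mem _ _ h1

theorem cob_add_left (x y z : L) : cob (x + y) z = cob x z + cob y z := by
  simp only [cob, TensorProduct.add_tmul, TensorProduct.tmul_add]; module
theorem cob_add_right (x y z : L) : cob x (y + z) = cob x y + cob x z := by
  simp only [cob, TensorProduct.add_tmul, TensorProduct.tmul_add]; module

/-- The reduced cobracket. -/
def δr (β : Wt) (z : L) : L ⊗[ℚ] L := D.δ z - cob z (D.hb β)

theorem δr_add (β x y) : D.δr β (x + y) = D.δr β x + D.δr β y := by
  simp only [δr, map_add, cob_add_left]; abel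
theorem δr_smul (β) (c : ℚ) (x) : D.δr β (c • x) = c • D.δr β x := by
  simp only [δr, map_smul, cob_smul_left]; module
theorem δr_zero (β) : D.δr β 0 = 0 := by simp [δr, cob_zero_left]
theorem δr_sum (β) {ι : Type*} (s : Finset ι) (c : ι → ℚ) (x : ι → L) :
    D.δr β (∑ i ∈ s, c i • x i) = ∑ i ∈ s, c i • D.δr β (x i) := by
  classical
  induction s using Finset.induction_on with
  | empty => simp [δr_zero]
  | insert a s ha ih => rw [Finset.sum_insert ha, Finset.sum_insert ha, δr_add, δr_smul, ih]

theorem δr_word {n x} (w : EWord D.e n x) : D.δr n x ∈ D.Q n := by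
  induction w with
  | base i => rw [δr, D.δ_e, hb_sr, sub_self]; exact zero_mem _
  | @step i n x hx ih =>
    have hc := D.chev.toPreChev
    have hxW := EWord.mem_WS hc hx
    have heW := e_mem_WS hc i
    have h1 : D.δ x = D.δr n x + cob x (D.hb n) := by rw [δr]; abel
    have h2 : ⁅x, D.e i⁆ = -⁅D.e i, x⁆ := (lie_skew _ _).symm
    have h3 := D.lie_hb n (sr i) heW
    have h4 := D.lie_hb (sr i) n hxW
    rw [hb_sr] at h4
    have : D.δr (Pi.single i 1 + n) ⁅D.e i, x⁆ =
        ⁅D.e i, D.δr n x⁆ - (bf n (sr i) : ℚ) • cob x (D.e i) + (bf (sr i) n : ℚ) • cob (D.e i) x := by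
      rw [δr, D.δ_lie, h1, D.δ_e, lie_add, lie_cob, lie_cob, h3, h4, h2, hb_add, hb_sr,
        cob_add_right, cob_neg_left, cob_neg_right, cob_neg_right, cob_smul_right, cob_smul_right]
      abel
    rw [this]
    refine add_mem (sub_mem (D.lie_mem_Q (sr_pos i) heW ih) (Submodule.smul_mem _ _ ?_))
      (Submodule.smul_mem _ _ ?_)
    · exact D.cob_mem_Q hx.pos (sr_pos i) (add_comm _ _) hxW heW
    · exact D.cob_mem_Q (sr_pos i) hx.pos rfl heW hxW

theorem δr_mem {β : Wt} (hβ : 0 < β) {z} (hz : z ∈ D.W β) : D.δr β z ∈ D.Q β := by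
  rw [D.W_pos β hβ] at hz
  refine Submodule.span_induction (p := fun z _ => D.δr β z ∈ D.Q β) ?_ ?_ ?_ ?_ hz
  · intro x w; exact D.δr_word w
  · rw [δr_zero]; exact zero_mem _
  · intro x y _ _ hx hy; rw [δr_add]; exact add_mem hx hy
  · intro c x _ hx; rw [δr_smul]; exact Submodule.smul_mem _ _ hx

/-- The bracket as a map of modules. -/
abbrev br : L ⊗[ℚ] L →ₗ⁅ℚ, L⁆ L := LieModule.toModuleHom ℚ L L

theorem br_tmul (x y : L) : br (x ⊗ₜ[ℚ] y) = ⁅x, y⁆ := by simp [br]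
theorem br_cob (x y : L) : br (cob x y) = ⁅x, y⁆ := by
  rw [cob, map_smul, map_sub, br_tmul, br_tmul, ← lie_skew x y]; module

theorem br_δ_word {n x} (w : EWord D.e n x) : br (D.δ x) = -((2 * ht n : ℤ) : ℚ) • x := by
  induction w with
  | base i =>
    rw [D.δ_e, br_cob, eh D.chev.toPreChev, E10M_diag]; simp [ht]
  | @step i n x hx ih =>
    rw [D.δ_lie, map_sub, LieModuleHom.map_lie, LieModuleHom.map_lie, ih, D.δ_e, br_cob,
      eh D.chev.toPreChev, E10M_diag, lie_smul]
    have h5 : ht (Pi.single i 1 + n) = 1 + ht n := by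
      simp [ht, Finset.sum_add_distrib]
    rw [h5]
    rw [lie_neg, lie_smul, ← lie_skew x (D.e i)]
    push_cast; module

theorem br_δ {β : Wt} (hβ : 0 < β) {z} (hz : z ∈ D.W β) :
    br (D.δ z) = -((2 * ht β : ℤ) : ℚ) • z := by
  rw [D.W_pos β hβ] at hz
  refine Submodule.span_induction (p := fun z _ => br (D.δ z) = -((2 * ht β : ℤ) : ℚ) • z) ?_ ?_ ?_ ?_ hz
  · intro x w; exact D.br_δ_word w
  · simp
  · intro x y _ _ hx hy; rw [map_add, map_add, hx, hy, smul_add]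
  · intro c x _ hx; rw [map_smul, map_smul, hx, smul_comm]

theorem br_δr {β : Wt} (hβ : 0 < β) {z} (hz : z ∈ D.W β) :
    br (D.δr β z) = ((bf β β - 2 * ht β : ℤ) : ℚ) • z := by
  rw [δr, map_sub, D.br_δ hβ hz, br_cob, D.lie_hb β β hz]; push_cast; module

/-- Product functional. -/
def cc (φ ψ : L →ₗ[ℚ] ℚ) : L ⊗[ℚ] L →ₗ[ℚ] ℚ := LinearMap.mul' ℚ ℚ ∘ₗ TensorProduct.map φ ψ
theorem cc_tmul (φ ψ : L →ₗ[ℚ] ℚ) (x y) : cc φ ψ (x ⊗ₜ y) = φ x * ψ y := by simp [cc]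
theorem cc_cob (φ ψ : L →ₗ[ℚ] ℚ) (x y) : cc φ ψ (cob x y) = (φ x * ψ y - φ y * ψ x) / 2 := by
  rw [cob, map_smul, map_sub, cc_tmul, cc_tmul, smul_eq_mul]; ring

variable {D} (C : Coords D)

/-- The structure sums. -/
def FF (α β : Wt) : ℚ := ∑ i, ∑ j, cc (C.c α i) (C.c β j) (D.δ ⁅C.B α i, C.B β j⁆)

theorem K1 {α β : Wt} {x u} (hx : x ∈ D.W α) (hu : u ∈ D.Q β) (i) (φ : L →ₗ[ℚ] ℚ) :
    cc (C.c α i) φ ⁅x, u⁆ =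
      ∑ l, cc (C.c α i) (C.c (β - α) l) u * φ ⁅x, C.B (β - α) l⁆ := by
  refine D.Q_induct (P := fun u => cc (C.c α i) φ ⁅x, u⁆ =
      ∑ l, cc (C.c α i) (C.c (β - α) l) u * φ ⁅x, C.B (β - α) l⁆) ?_ ?_ ?_ ?_ hu
  · intro a b y z ha hb h hy hz
    rw [TensorProduct.LieModule.lie_tmul_right, map_add, cc_tmul, cc_tmul]
    simp only [cc_tmul]
    rw [C.c_ne α i (α + a) _ (lie_mem_WS hx hy) (by simpa using ha.ne'), zero_mul, zero_add]
    by_cases haα : a = α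
    · subst haα
      have hb' : b = β - a := by rw [← h]; abel
      subst hb'
      conv_lhs => rw [← C.c_sum (β - a) z hz]
      simp only [lie_sum, map_sum, lie_smul, map_smul, smul_eq_mul, Finset.mul_sum, mul_assoc]
    · simp [C.c_ne α i a y hy haα]
  · simp
  · intro u v h1 h2; simp only [lie_add, map_add, h1, h2, add_mul, Finset.sum_add_distrib]
  · intro c u h1; simp only [lie_smul, map_smul, h1, smul_eq_mul, Finset.mul_sum, mul_assoc]

theorem K2 {α β : Wt} {y u} (hy : y ∈ D.W β) (hu : u ∈ D.Q α) (j) (φ : L →ₗ[ℚ] ℚ) :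
    cc φ (C.c β j) ⁅y, u⁆ =
      ∑ l, cc (C.c (α - β) l) (C.c β j) u * φ ⁅y, C.B (α - β) l⁆ := by
  refine D.Q_induct (P := fun u => cc φ (C.c β j) ⁅y, u⁆ =
      ∑ l, cc (C.c (α - β) l) (C.c β j) u * φ ⁅y, C.B (α - β) l⁆) ?_ ?_ ?_ ?_ hu
  · intro a b x z ha hb h hx hz
    rw [TensorProduct.LieModule.lie_tmul_right, map_add, cc_tmul, cc_tmul]
    simp only [cc_tmul]
    rw [C.c_ne β j (β + b) _ (lie_mem_WS hy hz) (by simpa using hb.ne'), mul_zero, add_zero]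
    by_cases hbβ : b = β
    · subst hbβ
      have ha' : a = α - b := by rw [← h]; abel
      subst ha'
      conv_lhs => rw [← C.c_sum (α - b) x hx]
      simp only [lie_sum, map_sum, lie_smul, map_smul, smul_eq_mul, Finset.sum_mul]
      exact Finset.sum_congr rfl fun _ _ => by ring
    · simp [C.c_ne β j b z hz hbβ]
  · simp
  · intro u v h1 h2; simp only [lie_add, map_add, h1, h2, add_mul, Finset.sum_add_distrib]
  · intro c u h1; simp only [lie_smul, map_smul, h1, smul_eq_mul, Finset.mul_sum, mul_assoc]

theorem cc_Q_zero {β a b : Wt} (hab : ¬ (0 < a ∧ 0 < b)) {u} (hu : u ∈ D.Q β) (i j) :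
    cc (C.c a i) (C.c b j) u = 0 := by
  refine D.Q_induct (P := fun u => cc (C.c a i) (C.c b j) u = 0) ?_ ?_ ?_ ?_ hu
  · intro a' b' x y ha hb h hx hy
    rw [cc_tmul]
    by_cases h1 : a' = a
    · by_cases h2 : b' = b
      · subst h1; subst h2; exact absurd ⟨ha, hb⟩ hab
      · rw [C.c_ne b j b' y hy h2, mul_zero]
    · rw [C.c_ne a i a' x hx h1, zero_mul]
  · simp
  · intro u v h1 h2; simp [h1, h2]
  · intro c u h1; simp [h1]

theorem sum_diag (α β : Wt) :
    ∑ i, ∑ j, (C.c α i (C.B β j)) * (C.c β j (C.B α i)) = if α = β then (D.dm α : ℚ) else 0 := by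
  split_ifs with h
  · subst h; simp [C.c_B]
  · refine Finset.sum_eq_zero fun i _ => Finset.sum_eq_zero fun j _ => ?_
    rw [C.c_ne α i β _ (C.B_mem β j) (Ne.symm h), zero_mul]

theorem FFr {a b β : Wt} (hβ : 0 < β) (h : a + b = β) :
    ∑ i, ∑ j, cc (C.c a i) (C.c b j) (D.δr β ⁅C.B a i, C.B b j⁆) =
      if 0 < a ∧ 0 < b then FF C a b else 0 := by
  split_ifs with hab
  · unfold FF
    refine Finset.sum_congr rfl fun i _ => Finset.sum_congr rfl fun j _ => ?_
    rw [δr, map_sub, cc_cob, C.c_ne b j 0 _ (D.hb_mem β) hab.2.ne,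
      C.c_ne a i 0 _ (D.hb_mem β) hab.1.ne]
    ring
  · refine Finset.sum_eq_zero fun i _ => Finset.sum_eq_zero fun j _ => ?_
    refine cc_Q_zero C hab (D.δr_mem hβ ?_) i j
    rw [← h]; exact lie_mem_WS (C.B_mem a i) (C.B_mem b j)

theorem FF_rec {α β : Wt} (hα : 0 < α) (hβ : 0 < β) :
    FF C α β = (bf α β : ℚ) * (D.dm α * D.dm β - if α = β then (D.dm α : ℚ) else 0)
      + (if 0 < β - α then FF C α (β - α) else 0) + (if 0 < α - β then FF C (α - β) β else 0) := by
  have key : ∀ i j, cc (C.c α i) (C.c β j) (D.δ ⁅C.B α i, C.B β j⁆) =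
      (bf α β : ℚ) * (1 - (C.c α i (C.B β j)) * (C.c β j (C.B α i)))
      + ∑ l, cc (C.c α i) (C.c (β - α) l) (D.δr β (C.B β j)) * C.c β j ⁅C.B α i, C.B (β - α) l⁆
      + ∑ l, cc (C.c (α - β) l) (C.c β j) (D.δr α (C.B α i)) * C.c α i ⁅C.B (α - β) l, C.B β j⁆ := by
    intro i j
    have hx := C.B_mem α i
    have hy := C.B_mem β j
    have h1 : D.δ (C.B β j) = D.δr β (C.B β j) + cob (C.B β j) (D.hb β) := by rw [δr]; abel
    have h2 : D.δ (C.B α i) = D.δr α (C.B α i) + cob (C.B α i) (D.hb α) := by rw [δr]; abel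
    have hz1 : C.c α i ⁅C.B α i, C.B β j⁆ = 0 :=
      C.c_ne α i (α + β) _ (lie_mem_WS hx hy) (by simpa using hβ.ne')
    have hz2 : C.c β j ⁅C.B α i, C.B β j⁆ = 0 :=
      C.c_ne β j (α + β) _ (lie_mem_WS hx hy) (by simpa using hα.ne')
    rw [D.δ_lie, h1, h2, lie_add, lie_add, map_sub, map_add, map_add,
      K1 C hx (D.δr_mem hβ hy), K2 C hy (D.δr_mem hα hx)]
    have e2 : ∀ l, C.c α i ⁅C.B β j, C.B (α - β) l⁆ = - C.c α i ⁅C.B (α - β) l, C.B β j⁆ := by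
      intro l; rw [← lie_skew, map_neg]
    simp only [e2, mul_neg, Finset.sum_neg_distrib]
    rw [lie_cob, lie_cob, map_add, map_add, cc_cob, cc_cob, cc_cob, cc_cob,
      D.lie_hb β α hx, D.lie_hb α β hy, ← lie_skew (C.B β j) (C.B α i), bf_comm β α]
    simp only [map_neg, map_smul, smul_eq_mul, hz1, hz2, C.c_B]
    simp
    ring
  unfold FF
  simp only [key, Finset.sum_add_distrib, mul_sub, mul_one]
  simp only [Finset.sum_sub_distrib, ← Finset.mul_sum, sum_diag C]
  have S1 : ∑ i, ∑ j, ∑ l, cc (C.c α i) (C.c (β - α) l) (D.δr β (C.B β j)) *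
      C.c β j ⁅C.B α i, C.B (β - α) l⁆ = if 0 < β - α then FF C α (β - α) else 0 := by
    have := FFr C (a := α) (b := β - α) hβ (by abel)
    simp only [hα, true_and] at this
    rw [← this]
    refine Finset.sum_congr rfl fun i _ => ?_
    rw [Finset.sum_comm]
    refine Finset.sum_congr rfl fun l _ => ?_
    have hz : ⁅C.B α i, C.B (β - α) l⁆ ∈ D.W β := by
      have := lie_mem_WS (C.B_mem α i) (C.B_mem (β - α) l)
      rwa [show α + (β - α) = β by abel] at this
    conv_rhs => rw [← C.c_sum β _ hz, δr_sum, map_sum]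
    refine Finset.sum_congr rfl fun j _ => ?_
    rw [map_smul, smul_eq_mul, mul_comm]
  have S2 : ∑ i, ∑ j, ∑ l, cc (C.c (α - β) l) (C.c β j) (D.δr α (C.B α i)) *
      C.c α i ⁅C.B (α - β) l, C.B β j⁆ = if 0 < α - β then FF C (α - β) β else 0 := by
    have := FFr C (a := α - β) (b := β) hα (by abel)
    simp only [hβ, and_true] at this
    rw [← this, Finset.sum_comm]
    rw [Finset.sum_comm (s := (Finset.univ : Finset (Fin (D.dm (α - β)))))]
    refine Finset.sum_congr rfl fun j _ => ?_
    rw [Finset.sum_comm]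
    refine Finset.sum_congr rfl fun l _ => ?_
    have hz : ⁅C.B (α - β) l, C.B β j⁆ ∈ D.W α := by
      have := lie_mem_WS (C.B_mem (α - β) l) (C.B_mem β j)
      rwa [show α - β + β = α by abel] at this
    conv_rhs => rw [← C.c_sum α _ hz, δr_sum, map_sum]
    refine Finset.sum_congr rfl fun i _ => ?_
    rw [map_smul, smul_eq_mul, mul_comm]
  rw [S1, S2]
  unfold FF
  simp
  ring

theorem FF_zero_left {α β : Wt} (h : D.dm α = 0) : FF C α β = 0 := by
  unfold FF
  haveI : IsEmpty (Fin (D.dm α)) := by rw [h]; infer_instance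
  simp
theorem FF_zero_right {α β : Wt} (h : D.dm β = 0) : FF C α β = 0 := by
  unfold FF
  haveI : IsEmpty (Fin (D.dm β)) := by rw [h]; infer_instance
  simp

/-- Index set of decompositions. -/
def TT (β : Wt) : Finset Wt := (Finset.Icc 0 β).filter (fun α => 0 < α ∧ 0 < β - α)

theorem br_Q {β : Wt} {u} (hu : u ∈ D.Q β) : br u = ∑ α ∈ TT β, ∑ i, ∑ j,
    cc (C.c α i) (C.c (β - α) j) u • ⁅C.B α i, C.B (β - α) j⁆ := by
  refine D.Q_induct (P := fun u => br u = ∑ α ∈ TT β, ∑ i, ∑ j,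
    cc (C.c α i) (C.c (β - α) j) u • ⁅C.B α i, C.B (β - α) j⁆) ?_ ?_ ?_ ?_ hu
  · intro a b x y ha hb h hx hy
    have hb' : b = β - a := by rw [← h]; abel
    subst hb'
    rw [br_tmul, Finset.sum_eq_single_of_mem a]
    · conv_lhs => rw [← C.c_sum a x hx, ← C.c_sum (β - a) y hy]
      simp only [sum_lie, lie_sum, smul_lie, lie_smul, smul_smul, cc_tmul, Finset.smul_sum]
      rw [Finset.sum_comm]
      exact Finset.sum_congr rfl fun _ _ => Finset.sum_congr rfl fun _ _ => by rw [mul_comm]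
    · simp only [TT, Finset.mem_filter, Finset.mem_Icc]
      exact ⟨⟨ha.le, sub_nonneg.1 hb.le⟩, ha, hb⟩
    · intro α _ hne
      refine Finset.sum_eq_zero fun i _ => Finset.sum_eq_zero fun j _ => ?_
      rw [cc_tmul, C.c_ne α i a x hx hne.symm, zero_mul, zero_smul]
  · simp
  · intro u v h1 h2; simp only [map_add, h1, h2, add_smul, Finset.sum_add_distrib]
  · intro c u h1; simp only [map_smul, h1, smul_eq_mul, Finset.smul_sum, mul_smul]

theorem FF_sum {β : Wt} (hβ : 0 < β) :
    ∑ α ∈ TT β, FF C α (β - α) = ((bf β β - 2 * ht β : ℤ) : ℚ) * D.dm β := by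
  have h1 : ∀ k, C.c β k (br (D.δr β (C.B β k))) = ((bf β β - 2 * ht β : ℤ) : ℚ) := by
    intro k; rw [D.br_δr hβ (C.B_mem β k), map_smul, C.c_B]; simp
  have h2 : ∑ k, C.c β k (br (D.δr β (C.B β k))) = ((bf β β - 2 * ht β : ℤ) : ℚ) * D.dm β := by
    simp only [h1]; rw [Finset.sum_const, Finset.card_univ, Fintype.card_fin, nsmul_eq_mul, mul_comm]
  rw [← h2]
  have h3 : ∀ k, C.c β k (br (D.δr β (C.B β k))) = ∑ α ∈ TT β, ∑ i, ∑ j,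
      cc (C.c α i) (C.c (β - α) j) (D.δr β (C.B β k)) * C.c β k ⁅C.B α i, C.B (β - α) j⁆ := by
    intro k
    rw [br_Q C (D.δr_mem hβ (C.B_mem β k))]
    simp only [map_sum, map_smul, smul_eq_mul]
  simp only [h3]
  rw [Finset.sum_comm]
  refine Finset.sum_congr rfl fun α hα => ?_
  simp only [TT, Finset.mem_filter] at hα
  have := FFr C (a := α) (b := β - α) hβ (by abel)
  rw [if_pos hα.2] at this
  rw [← this]
  symm
  rw [Finset.sum_comm]
  refine Finset.sum_congr rfl fun i _ => ?_
  rw [Finset.sum_comm]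
  refine Finset.sum_congr rfl fun j _ => ?_
  have hz : ⁅C.B α i, C.B (β - α) j⁆ ∈ D.W β := by
    have := lie_mem_WS (C.B_mem α i) (C.B_mem (β - α) j)
    rwa [show α + (β - α) = β by abel] at this
  conv_rhs => rw [← C.c_sum β _ hz, δr_sum, map_sum]
  refine Finset.sum_congr rfl fun k _ => ?_
  rw [map_smul, smul_eq_mul, mul_comm]

end KMD
end

section
/-- Optional addition. -/
def oadd (a b : Option ℤ) : Option ℤ :=
  Option.rec none (fun x => Option.rec none (fun y => some (Int.add x y)) b) a

/-- Vectors of ten natural numbers. -/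
structure V10 where
  (a0 a1 a2 a3 a4 a5 a6 a7 a8 a9 : ℕ)

/-- Positive part of the form. -/
def V10.pp (x y : V10) : ℕ :=
  V10.rec (fun a0 a1 a2 a3 a4 a5 a6 a7 a8 a9 => V10.rec (fun b0 b1 b2 b3 b4 b5 b6 b7 b8 b9 =>
    Nat.mul 2 (Nat.add (Nat.mul a0 b0) (Nat.add (Nat.mul a1 b1) (Nat.add (Nat.mul a2 b2)
      (Nat.add (Nat.mul a3 b3) (Nat.add (Nat.mul a4 b4) (Nat.add (Nat.mul a5 b5)
      (Nat.add (Nat.mul a6 b6) (Nat.add (Nat.mul a7 b7) (Nat.add (Nat.mul a8 b8)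
      (Nat.mul a9 b9))))))))))) y) x
/-- Negative part of the form. -/
def V10.nn (x y : V10) : ℕ :=
  V10.rec (fun a0 a1 a2 a3 a4 a5 a6 a7 a8 a9 => V10.rec (fun b0 b1 b2 b3 b4 b5 b6 b7 b8 b9 =>
    Nat.add (Nat.mul a0 b1) (Nat.add (Nat.mul a1 (Nat.add b0 b2)) (Nat.add (Nat.mul a2 (Nat.add b1 b3))
      (Nat.add (Nat.mul a3 (Nat.add b2 b4)) (Nat.add (Nat.mul a4 (Nat.add b3 b5))
      (Nat.add (Nat.mul a5 (Nat.add b4 b6)) (Nat.add (Nat.mul a6 (Nat.add b5 (Nat.add b7 b9)))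
      (Nat.add (Nat.mul a7 (Nat.add b6 b8)) (Nat.add (Nat.mul a8 b7) (Nat.mul a9 b6)))))))))) y) x
/-- Half of the negative part of the quadratic form. -/
def V10.qn (x : V10) : ℕ :=
  V10.rec (fun a0 a1 a2 a3 a4 a5 a6 a7 a8 a9 =>
    Nat.mul 2 (Nat.add (Nat.mul a0 a1) (Nat.add (Nat.mul a1 a2) (Nat.add (Nat.mul a2 a3)
      (Nat.add (Nat.mul a3 a4) (Nat.add (Nat.mul a4 a5) (Nat.add (Nat.mul a5 a6)
      (Nat.add (Nat.mul a6 (Nat.add a7 a9)) (Nat.mul a7 a8))))))))) x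
/-- Subtraction. -/
def V10.sub (x y : V10) : V10 :=
  V10.rec (fun a0 a1 a2 a3 a4 a5 a6 a7 a8 a9 => V10.rec (fun b0 b1 b2 b3 b4 b5 b6 b7 b8 b9 =>
    ⟨Nat.sub a0 b0, Nat.sub a1 b1, Nat.sub a2 b2, Nat.sub a3 b3, Nat.sub a4 b4, Nat.sub a5 b5,
      Nat.sub a6 b6, Nat.sub a7 b7, Nat.sub a8 b8, Nat.sub a9 b9⟩) y) x
/-- Comparison. -/
def V10.le (x y : V10) : Bool :=
  V10.rec (fun a0 a1 a2 a3 a4 a5 a6 a7 a8 a9 => V10.rec (fun b0 b1 b2 b3 b4 b5 b6 b7 b8 b9 =>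
    cond (Nat.ble a0 b0) (cond (Nat.ble a6 b6) (cond (Nat.ble a2 b2) (cond (Nat.ble a3 b3) (cond (Nat.ble a4 b4)
      (cond (Nat.ble a5 b5) (cond (Nat.ble a1 b1) (cond (Nat.ble a7 b7) (cond (Nat.ble a8 b8)
      (Nat.ble a9 b9) false) false) false) false) false) false) false) false) false) y) x
/-- Coordinate sum. -/
def V10.sm (x : V10) : ℕ :=
  V10.rec (fun a0 a1 a2 a3 a4 a5 a6 a7 a8 a9 =>
   Nat.add a0 (Nat.add a1 (Nat.add a2 (Nat.add a3 (Nat.add a4 (Nat.add a5 (Nat.add a6 (Nat.add a7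
    (Nat.add a8 a9))))))))) x

/-- Multiplicity as a function of norm plus six. -/
def mlt (k : ℕ) : Option ℤ :=
  cond (Nat.beq k 8) (some 1) (cond (Nat.beq k 6) (some 8) (cond (Nat.beq k 4) (some 44)
    (cond (Nat.beq k 2) (some 192) none)))

/-- Norm plus six (truncated). -/
def V10.cd (x : V10) : ℕ := Nat.sub (Nat.add (x.pp x) 6) x.qn

/-- Forced evaluation. -/
def frc {α : Type} (n : ℕ) (f : ℕ → α) : α := Nat.rec (f 0) (fun m _ => f (Nat.succ m)) n

/-- Evaluation of the structure sums. -/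
def evF (fuel : ℕ) : V10 → V10 → Option ℤ :=
  Nat.rec (fun _ _ => none) (fun _ ih x y =>
    frc x.cd fun cx => cond (Nat.ble 9 cx) (some 0) (
    frc y.cd fun cy => cond (Nat.ble 9 cy) (some 0) (
    Option.rec none (fun a => Option.rec none (fun b =>
      cond (x.le y)
        (cond (y.le x) (some (Int.mul (Int.subNatNat (x.pp y) (x.nn y)) (Int.sub (Int.mul a b) a)))
        (oadd (some (Int.mul (Int.subNatNat (x.pp y) (x.nn y)) (Int.mul a b))) (ih x (y.sub x))))
      (cond (y.le x)
        (oadd (some (Int.mul (Int.subNatNat (x.pp y) (x.nn y)) (Int.mul a b))) (ih (x.sub y) y))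
        (some (Int.mul (Int.subNatNat (x.pp y) (x.nn y)) (Int.mul a b)))))
      (mlt cy)) (mlt cx)))) fuel

/-- Leaf evaluation. -/
def evL (x y : V10) : Option ℤ :=
  cond (Nat.beq x.sm 0) (some 0) (cond (Nat.beq y.sm 0) (some 0) (evF 40 x y))

/-- Sum over a window. -/
def lpw (f : ℕ → Option ℤ) (n lo : ℕ) : Option ℤ :=
  Nat.rec (fun _ => some 0) (fun _ ih lo => oadd (f lo) (ih (Nat.succ lo))) n lo

/-- An upper bound for the square root. -/
def isq (q : ℕ) : ℕ :=
  cond (Nat.ble q 0) 0 (cond (Nat.ble q 3) 1 (cond (Nat.ble q 8) 2 (cond (Nat.ble q 15) 3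
    (cond (Nat.ble q 24) 4 (cond (Nat.ble q 35) 5 (cond (Nat.ble q 48) 6 (cond (Nat.ble q 63) 7
    (cond (Nat.ble q 80) 8 (cond (Nat.ble q 120) 10 (cond (Nat.ble q 255) 15 q))))))))))

/-- Cost of a coordinate. -/
def cst (k m w p t : ℕ) : ℕ :=
  frc (Nat.add (Nat.sub (Nat.mul m t) (Nat.mul k p)) (Nat.sub (Nat.mul k p) (Nat.mul m t)))
    fun d => Nat.mul w (Nat.mul d d)

/-- One step of the search. -/
def stp (k m w b p q rx ry : ℕ) (cont : ℕ → ℕ → ℕ → ℕ → Option ℤ) : Option ℤ :=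
  frc (isq (Nat.div rx w)) fun s =>
  frc (isq (Nat.div ry w)) fun r =>
  frc (Nat.max (Nat.div (Nat.sub (Nat.add (Nat.mul k p) (Nat.pred m)) s) m)
    (Nat.sub b (Nat.div (Nat.add (Nat.mul k q) r) m))) fun lo =>
  lpw (fun t => frc t fun t => frc (Nat.sub b t) fun u =>
    frc (cst k m w p t) fun c => frc (cst k m w q u) fun d =>
    cond (Nat.ble c rx) (cond (Nat.ble d ry)
      (frc (Nat.sub rx c) fun rx' => frc (Nat.sub ry d) fun ry' => cont t u rx' ry')
      (some 0)) (some 0))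
    (Nat.sub (Nat.min (Nat.succ (Nat.div (Nat.add (Nat.mul k p) s) m))
      (Nat.sub (Nat.succ b) (Nat.div (Nat.sub (Nat.add (Nat.mul k q) (Nat.pred m)) r) m))) lo) lo

/-- Initial budget. -/
def bgt (x0 x1 : ℕ) : ℕ := Nat.add 120 (Nat.mul 120 (Nat.mul x0 x1))
/-- Initial cost. -/
def bct (x0 : ℕ) : ℕ := Nat.mul 120 (Nat.mul x0 x0)

/-- The full search. -/
def dfsFast (b0 b1 b2 b3 b4 b5 b6 b7 b8 b9 : ℕ) : Option ℤ :=
  lpw (fun x0 => lpw (fun x1 => frc x0 fun x0 => frc x1 fun x1 =>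
    frc (Nat.sub b0 x0) fun y0 => frc (Nat.sub b1 x1) fun y1 =>
    cond (Nat.ble (bct x0) (bgt x0 x1)) (cond (Nat.ble (bct y0) (bgt y0 y1))
      (stp 2 1 30 b2 x1 y1 (Nat.sub (bgt x0 x1) (bct x0)) (Nat.sub (bgt y0 y1) (bct y0)) fun x2 y2 rx ry =>
      stp 3 2 10 b3 x2 y2 rx ry fun x3 y3 rx ry =>
      stp 4 3 5 b4 x3 y3 rx ry fun x4 y4 rx ry =>
      stp 5 4 3 b5 x4 y4 rx ry fun x5 y5 rx ry =>
      stp 6 5 2 b6 x5 y5 rx ry fun x6 y6 rx ry =>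
      stp 2 3 10 b7 x6 y6 rx ry fun x7 y7 rx ry =>
      stp 1 2 30 b8 x7 y7 rx ry fun x8 y8 rx ry =>
      stp 1 2 30 b9 x6 y6 rx ry fun x9 y9 _ _ =>
      evL ⟨x0, x1, x2, x3, x4, x5, x6, x7, x8, x9⟩ ⟨y0, y1, y2, y3, y4, y5, y6, y7, y8, y9⟩)
      (some 0)) (some 0)) (Nat.succ b1) 0) (Nat.succ b0) 0

/-- Correctness of an optional value. -/
def RepQ (o : Option ℤ) (v : ℚ) : Prop := ∀ z, o = some z → v = (z : ℚ)

theorem RepQ_none (v) : RepQ none v := fun z h => by cases h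
theorem RepQ_some {z : ℤ} {v : ℚ} (h : v = z) : RepQ (some z) v := fun z' h' => by cases h'; exact h
theorem RepQ_oadd {a b : Option ℤ} {u v : ℚ} (h1 : RepQ a u) (h2 : RepQ b v) : RepQ (oadd a b) (u + v) := by
  cases a with
  | none => exact RepQ_none _
  | some a =>
    cases b with
    | none => exact RepQ_none _
    | some b =>
      rw [h1 a rfl, h2 b rfl]
      exact RepQ_some (z := a + b) (by push_cast; rfl)

theorem frc_eq {α : Type} (n : ℕ) (f : ℕ → α) : frc n f = f n := by cases n <;> rfl

theorem lpw_rep (f : ℕ → Option ℤ) (v : ℕ → ℚ) (n : ℕ) : ∀ lo,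
    (∀ i < n, RepQ (f (lo + i)) (v (lo + i))) → RepQ (lpw f n lo) (∑ i ∈ Finset.range n, v (lo + i)) := by
  induction n with
  | zero => intro lo _; exact RepQ_some (by simp)
  | succ n ih =>
    intro lo h
    rw [Finset.sum_range_succ', add_comm (∑ k ∈ Finset.range n, _)]
    refine RepQ_oadd (h 0 (by omega)) ?_
    have := ih (lo + 1) (fun i hi => by have := h (i + 1) (by omega); rwa [add_assoc, add_comm 1 i])
    have e : ∀ x, lo + 1 + x = lo + (x + 1) := fun x => by omega
    simp only [e] at this
    exact this

theorem isq_spec {q d : ℕ} (h : d * d ≤ q) : d ≤ isq q := by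
  have key : ∀ s : ℕ, q < (s + 1) * (s + 1) → d ≤ s := fun s hs => by
    by_contra hd
    have : (s + 1) * (s + 1) ≤ d * d := Nat.mul_le_mul (by omega) (by omega)
    omega
  have kk : ∀ (s c : ℕ) (r : ℕ), c < (s + 1) * (s + 1) → d ≤ r → d ≤ cond (Nat.ble q c) s r := by
    intro s c r hc hr
    cases hb : Nat.ble q c with
    | true => exact key s (lt_of_le_of_lt (Nat.le_of_ble_eq_true hb) hc)
    | false => exact hr
  unfold isq
  repeat' first | exact kk _ _ _ (by norm_num) ‹_› | apply kk _ _ _ (by norm_num)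
  nlinarith

/-- Integer cost. -/
def cI (k m w p t : ℕ) : ℤ := w * (m * t - k * p) ^ 2

theorem cst_cast (k m w p t : ℕ) : (cst k m w p t : ℤ) = cI k m w p t := by
  unfold cst cI
  rw [frc_eq]
  show ((w * (((m * t - k * p) + (k * p - m * t)) * ((m * t - k * p) + (k * p - m * t))) : ℕ) : ℤ) = _
  rcases le_total (m * t) (k * p) with h | h
  · rw [Nat.sub_eq_zero_of_le h]; push_cast [Nat.cast_sub h]; ring_nf
  · rw [Nat.sub_eq_zero_of_le h]; push_cast [Nat.cast_sub h]; ring_nf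

theorem win {k m w p t r : ℕ} (hm : 0 < m) (hw : 0 < w) (h : cst k m w p t ≤ r) :
    (k * p + (m - 1) - isq (r / w)) / m ≤ t ∧ t ≤ (k * p + isq (r / w)) / m := by
  unfold cst at h
  rw [frc_eq] at h
  change w * (((m * t - k * p) + (k * p - m * t)) * ((m * t - k * p) + (k * p - m * t))) ≤ r at h
  rw [mul_comm] at h
  have h1 := isq_spec ((Nat.le_div_iff_mul_le hw).2 h)
  constructor
  · rw [← Nat.lt_succ_iff, Nat.div_lt_iff_lt_mul hm]
    have : t.succ * m = m * t + m := by rw [Nat.succ_mul, mul_comm]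
    omega
  · rw [Nat.le_div_iff_mul_le hm, mul_comm]; omega

theorem stp_rep {k m w b p q rx ry : ℕ} {cont : ℕ → ℕ → ℕ → ℕ → Option ℤ} (v : ℕ → ℚ)
    (hm : 0 < m) (hw : 0 < w)
    (h1 : ∀ t ≤ b, ∀ rx' ry' : ℕ, (rx' : ℤ) = rx - cI k m w p t → (ry' : ℤ) = ry - cI k m w q (b - t) →
      RepQ (cont t (b - t) rx' ry') (v t))
    (h2 : ∀ t ≤ b, ((rx : ℤ) < cI k m w p t ∨ (ry : ℤ) < cI k m w q (b - t)) → v t = 0) :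
    RepQ (stp k m w b p q rx ry cont) (∑ t ∈ Finset.range (b + 1), v t) := by
  unfold stp
  simp only [frc_eq]
  set s := isq (Nat.div rx w) with hs
  set r := isq (Nat.div ry w) with hr
  set lo := Nat.max (Nat.div (Nat.sub (Nat.add (Nat.mul k p) (Nat.pred m)) s) m)
    (Nat.sub b (Nat.div (Nat.add (Nat.mul k q) r) m)) with hlo
  set hi := Nat.min (Nat.succ (Nat.div (Nat.add (Nat.mul k p) s) m))
      (Nat.sub (Nat.succ b) (Nat.div (Nat.sub (Nat.add (Nat.mul k q) (Nat.pred m)) r) m)) with hhi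
  change lo = max ((k * p + (m - 1) - s) / m) (b - (k * q + r) / m) at hlo
  change hi = min ((k * p + s) / m + 1) (b + 1 - (k * q + (m - 1) - r) / m) at hhi
  obtain ⟨A1, hA1⟩ : ∃ A, A = (k * p + (m - 1) - s) / m := ⟨_, rfl⟩
  obtain ⟨A2, hA2⟩ : ∃ A, A = (k * q + r) / m := ⟨_, rfl⟩
  obtain ⟨A3, hA3⟩ : ∃ A, A = (k * p + s) / m := ⟨_, rfl⟩
  obtain ⟨A4, hA4⟩ : ∃ A, A = (k * q + (m - 1) - r) / m := ⟨_, rfl⟩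
  rw [← hA1, ← hA2] at hlo
  rw [← hA3, ← hA4] at hhi
  clear_value lo hi
  have hib : hi ≤ b + 1 := by clear hA1 hA2 hA3 hA4; omega
  have hsum : ∑ t ∈ Finset.range (b + 1), v t = ∑ i ∈ Finset.range (hi - lo), v (lo + i) := by
    rw [← Finset.sum_Ico_eq_sum_range]
    symm
    apply Finset.sum_subset
    · intro t; simp only [Finset.mem_Ico, Finset.mem_range]; omega
    · intro t ht1 ht2
      simp only [Finset.mem_Ico, Finset.mem_range] at ht1 ht2
      apply h2 t (by omega)
      rw [← cst_cast, ← cst_cast]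
      by_contra hcon
      push Not at hcon
      have a1 := win hm hw (by exact_mod_cast hcon.1 : cst k m w p t ≤ rx)
      have a2 := win hm hw (by exact_mod_cast hcon.2 : cst k m w q (b - t) ≤ ry)
      rw [show rx / w = Nat.div rx w from rfl, ← hs, ← hA1, ← hA3] at a1
      rw [show ry / w = Nat.div ry w from rfl, ← hr, ← hA4, ← hA2] at a2
      clear hA1 hA2 hA3 hA4
      omega
  rw [hsum]
  apply lpw_rep
  intro i hi'
  change i < hi - lo at hi'
  have hle : lo + i ≤ b := by clear hA1 hA2 hA3 hA4; omega
  have e1 := cst_cast k m w p (lo + i)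
  have e2 := cst_cast k m w q (b - (lo + i))
  change RepQ (cond (Nat.ble (cst k m w p (lo + i)) rx) (cond (Nat.ble (cst k m w q (b - (lo + i))) ry)
    (cont (lo + i) (b - (lo + i)) (rx - cst k m w p (lo + i)) (ry - cst k m w q (b - (lo + i))))
    (some 0)) (some 0)) _
  cases hb1 : Nat.ble (cst k m w p (lo + i)) rx with
  | false =>
    have : ¬ cst k m w p (lo + i) ≤ rx := fun hh => by rw [Nat.ble_eq_true_of_le hh] at hb1; cases hb1
    exact RepQ_some (by rw [h2 _ hle (Or.inl (by omega))]; simp)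
  | true =>
    cases hb2 : Nat.ble (cst k m w q (b - (lo + i))) ry with
    | false =>
      have : ¬ cst k m w q (b - (lo + i)) ≤ ry := fun hh => by rw [Nat.ble_eq_true_of_le hh] at hb2; cases hb2
      exact RepQ_some (by rw [h2 _ hle (Or.inr (by omega))]; simp)
    | true =>
      have g1 := Nat.le_of_ble_eq_true hb1
      have g2 := Nat.le_of_ble_eq_true hb2
      exact h1 _ hle _ _ (by rw [← e1]; omega) (by rw [← e2]; omega)

theorem sum_Icc_cons {n : ℕ} (c : ℕ) (β : Fin n → ℤ) (g : (Fin (n + 1) → ℤ) → ℚ) :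
    ∑ α ∈ Finset.Icc (0 : Fin (n + 1) → ℤ) (Matrix.vecCons (c : ℤ) β), g α =
      ∑ t ∈ Finset.range (c + 1), ∑ α ∈ Finset.Icc (0 : Fin n → ℤ) β, g (Matrix.vecCons (t : ℤ) α) := by
  rw [← Finset.sum_product']
  refine Finset.sum_bij' (fun α _ => ((α 0).toNat, Fin.tail α))
    (fun p _ => Matrix.vecCons (p.1 : ℤ) p.2) ?_ ?_ ?_ ?_ ?_
  · intro α hα
    simp only [Finset.mem_Icc, Pi.le_def, Finset.mem_product, Finset.mem_range] at hα ⊢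
    have h0 := hα.1 0
    have h1 := hα.2 0
    simp at h0 h1
    refine ⟨by omega, fun i => hα.1 i.succ, fun i => by have := hα.2 i.succ; simp at this; exact this⟩
  · rintro ⟨t, α⟩ h
    simp only [Finset.mem_Icc, Pi.le_def, Finset.mem_product, Finset.mem_range] at h ⊢
    constructor
    · intro i; refine Fin.cases ?_ (fun i => ?_) i
      · simp
      · simpa using h.2.1 i
    · intro i; refine Fin.cases ?_ (fun i => ?_) i
      · simp; omega
      · simpa using h.2.2 i
  · intro α hα
    simp only [Finset.mem_Icc, Pi.le_def] at hα
    have h0 := hα.1 0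
    simp at h0
    funext i; refine Fin.cases ?_ (fun i => ?_) i
    · simp [h0]
    · simp [Fin.tail]
  · rintro ⟨t, α⟩ h
    simp [Fin.tail]
  · intro α hα
    simp only [Finset.mem_Icc, Pi.le_def] at hα
    have h0 := hα.1 0
    simp at h0
    congr 1
    funext i; refine Fin.cases ?_ (fun i => ?_) i
    · simp [h0]
    · simp [Fin.tail]

theorem wtv_all (b : Wt) : wtv b 0 = 2 * b 0 - b 1 ∧ wtv b 1 = 2 * b 1 - b 0 - b 2 ∧
    wtv b 2 = 2 * b 2 - b 1 - b 3 ∧ wtv b 3 = 2 * b 3 - b 2 - b 4 ∧ wtv b 4 = 2 * b 4 - b 3 - b 5 ∧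
    wtv b 5 = 2 * b 5 - b 4 - b 6 ∧ wtv b 6 = 2 * b 6 - b 5 - b 7 - b 9 ∧
    wtv b 7 = 2 * b 7 - b 6 - b 8 ∧ wtv b 8 = 2 * b 8 - b 7 ∧ wtv b 9 = 2 * b 9 - b 6 := by
  have e : ∀ i j, E10M i j = (![![2, -1, 0, 0, 0, 0, 0, 0, 0, 0], ![-1, 2, -1, 0, 0, 0, 0, 0, 0, 0],
    ![0, -1, 2, -1, 0, 0, 0, 0, 0, 0], ![0, 0, -1, 2, -1, 0, 0, 0, 0, 0],
    ![0, 0, 0, -1, 2, -1, 0, 0, 0, 0], ![0, 0, 0, 0, -1, 2, -1, 0, 0, 0],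
    ![0, 0, 0, 0, 0, -1, 2, -1, 0, -1], ![0, 0, 0, 0, 0, 0, -1, 2, -1, 0],
    ![0, 0, 0, 0, 0, 0, 0, -1, 2, 0], ![0, 0, 0, 0, 0, 0, -1, 0, 0, 2]] :
      Fin 10 → Fin 10 → ℤ) i j := by intro i j; fin_cases i <;> fin_cases j <;> rfl
  have s : ∀ f : Fin 10 → ℤ, ∑ j, f j = f 0 + f 1 + f 2 + f 3 + f 4 + f 5 + f 6 + f 7 + f 8 + f 9 :=
    fun f => by simp [Fin.sum_univ_succ]; ring_nf
  simp only [wtv, s, e]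
  refine ⟨?_, ?_, ?_, ?_, ?_, ?_, ?_, ?_, ?_, ?_⟩ <;>
    simp [Matrix.cons_val] <;> ring

theorem sum10 (f : Fin 10 → ℤ) :
    ∑ j, f j = f 0 + f 1 + f 2 + f 3 + f 4 + f 5 + f 6 + f 7 + f 8 + f 9 := by
  simp [Fin.sum_univ_succ]; ring_nf

theorem bf_all (a b : Wt) : bf a b = a 0 * (2 * b 0 - b 1) + a 1 * (2 * b 1 - b 0 - b 2) +
    a 2 * (2 * b 2 - b 1 - b 3) + a 3 * (2 * b 3 - b 2 - b 4) + a 4 * (2 * b 4 - b 3 - b 5) +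
    a 5 * (2 * b 5 - b 4 - b 6) + a 6 * (2 * b 6 - b 5 - b 7 - b 9) +
    a 7 * (2 * b 7 - b 6 - b 8) + a 8 * (2 * b 8 - b 7) + a 9 * (2 * b 9 - b 6) := by
  obtain ⟨h0, h1, h2, h3, h4, h5, h6, h7, h8, h9⟩ := wtv_all b
  rw [bf, sum10, h0, h1, h2, h3, h4, h5, h6, h7, h8, h9]
end

section
/-- The weight vector of a `V10`. -/
def V10.w (x : V10) : Wt :=
  ![(x.a0 : ℤ), (x.a1 : ℤ), (x.a2 : ℤ), (x.a3 : ℤ), (x.a4 : ℤ), (x.a5 : ℤ), (x.a6 : ℤ), (x.a7 : ℤ),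
    (x.a8 : ℤ), (x.a9 : ℤ)]

theorem bf_w (x y : V10) : bf x.w y.w = (x.pp y : ℤ) - (x.nn y : ℤ) := by
  obtain ⟨a0, a1, a2, a3, a4, a5, a6, a7, a8, a9⟩ := x
  obtain ⟨b0, b1, b2, b3, b4, b5, b6, b7, b8, b9⟩ := y
  rw [bf_all]
  simp only [V10.pp, V10.nn, Nat.add_eq, Nat.mul_eq]
  simp [V10.w, Matrix.cons_val]
  ring

theorem bf_w_self (x : V10) : bf x.w x.w = (x.pp x : ℤ) - (x.qn : ℤ) := by
  obtain ⟨a0, a1, a2, a3, a4, a5, a6, a7, a8, a9⟩ := x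
  rw [bf_all]
  simp only [V10.pp, V10.qn, Nat.add_eq, Nat.mul_eq]
  simp [V10.w, Matrix.cons_val]
  ring

theorem cd_eq (x : V10) : x.cd = (bf x.w x.w + 6).toNat := by
  rw [bf_w_self]
  show x.pp x + 6 - x.qn = _
  omega

theorem w_nonneg (x : V10) : 0 ≤ x.w := by
  intro i; fin_cases i <;> simp [V10.w]

theorem all10 {P : Fin 10 → Prop} : (∀ i, P i) ↔ P 0 ∧ P 1 ∧ P 2 ∧ P 3 ∧ P 4 ∧ P 5 ∧ P 6 ∧ P 7 ∧ P 8 ∧ P 9 := by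
  constructor
  · intro h; exact ⟨h _, h _, h _, h _, h _, h _, h _, h _, h _, h _⟩
  · rintro ⟨h0, h1, h2, h3, h4, h5, h6, h7, h8, h9⟩ i
    fin_cases i <;> assumption

theorem w_le (x y : V10) : x.w ≤ y.w ↔ x.le y = true := by
  obtain ⟨a0, a1, a2, a3, a4, a5, a6, a7, a8, a9⟩ := x
  obtain ⟨b0, b1, b2, b3, b4, b5, b6, b7, b8, b9⟩ := y
  rw [Pi.le_def, all10]
  simp only [V10.w, V10.le]
  simp [Matrix.cons_val, Bool.cond_false_right]
  tauto

theorem w_sub {x y : V10} (h : x.w ≤ y.w) : (y.sub x).w = y.w - x.w := by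
  obtain ⟨a0, a1, a2, a3, a4, a5, a6, a7, a8, a9⟩ := x
  obtain ⟨b0, b1, b2, b3, b4, b5, b6, b7, b8, b9⟩ := y
  rw [Pi.le_def, all10] at h
  simp [V10.w, Matrix.cons_val] at h
  rw [funext_iff, all10]
  simp [V10.w, V10.sub, Matrix.cons_val]
  omega

theorem w_zero (x : V10) : x.w = 0 ↔ x.sm = 0 := by
  obtain ⟨a0, a1, a2, a3, a4, a5, a6, a7, a8, a9⟩ := x
  rw [funext_iff, all10]
  simp [V10.w, V10.sm, Matrix.cons_val]

theorem beq_false' {a b : ℕ} (h : a ≠ b) : Nat.beq a b = false := by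
  cases hb : Nat.beq a b with
  | true => exact absurd (Nat.eq_of_beq_eq_true hb) h
  | false => rfl

theorem ht_sub (a b : Wt) : ht (a - b) = ht a - ht b := by simp [ht]
theorem ht_pos {a : Wt} (h : 0 < a) : 0 < ht a := by
  rw [Pi.lt_def] at h
  obtain ⟨h, i, hi⟩ := h
  exact Finset.sum_pos' (fun j _ => h j) ⟨i, Finset.mem_univ _, hi⟩

namespace KMD
variable {L : Type*} [LieRing L] [LieAlgebra ℚ L] {D : KMD L} (C : Coords D)

theorem evF_rep (H : ℤ) (hN : ∀ x : Wt, 0 < x → ht x < H → ∀ a, mlt (bf x x + 6).toNat = some a → (D.dm x : ℚ) = a)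
    (hz : ∀ x : Wt, 0 < x → 2 < bf x x → D.dm x = 0) (fuel : ℕ) : ∀ x y : V10, 0 < x.w → 0 < y.w →
      ht x.w < H → ht y.w < H → RepQ (evF fuel x y) (FF C x.w y.w) := by
  induction fuel with
  | zero => intro x y _ _ _ _; exact RepQ_none _
  | succ fuel ih =>
    intro x y hx hy hxH hyH
    change RepQ (frc x.cd fun cx => cond (Nat.ble 9 cx) (some 0) (
      frc y.cd fun cy => cond (Nat.ble 9 cy) (some 0) (
      Option.rec none (fun a => Option.rec none (fun b =>
      cond (x.le y)
        (cond (y.le x) (some (Int.mul (Int.subNatNat (x.pp y) (x.nn y)) (Int.sub (Int.mul a b) a)))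
        (oadd (some (Int.mul (Int.subNatNat (x.pp y) (x.nn y)) (Int.mul a b))) (evF fuel x (y.sub x))))
      (cond (y.le x)
        (oadd (some (Int.mul (Int.subNatNat (x.pp y) (x.nn y)) (Int.mul a b))) (evF fuel (x.sub y) y))
        (some (Int.mul (Int.subNatNat (x.pp y) (x.nn y)) (Int.mul a b)))))
      (mlt cy)) (mlt cx)))) _
    simp only [frc_eq]
    cases hb1 : Nat.ble 9 x.cd with
    | true =>
      refine RepQ_some ?_
      rw [FF_zero_left C (hz _ hx ?_)]; · simp
      have := Nat.le_of_ble_eq_true hb1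
      rw [cd_eq] at this; omega
    | false =>
    cases hb2 : Nat.ble 9 y.cd with
    | true =>
      refine RepQ_some ?_
      rw [FF_zero_right C (hz _ hy ?_)]; · simp
      have := Nat.le_of_ble_eq_true hb2
      rw [cd_eq] at this; omega
    | false =>
    simp only [cond_false]
    cases ha : mlt x.cd with
    | none => exact RepQ_none _
    | some a =>
    cases hb : mlt y.cd with
    | none => exact RepQ_none _
    | some b =>
    rw [cd_eq] at ha hb
    have ea := hN _ hx hxH _ ha
    have eb := hN _ hy hyH _ hb
    have ebf : Int.subNatNat (x.pp y) (x.nn y) = bf x.w y.w := by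
      rw [bf_w, Int.subNatNat_eq_coe]
    simp only [ebf]
    rw [FF_rec C hx hy, ea, eb]
    cases h1 : x.le y with
    | true =>
      have g1 := (w_le x y).2 h1
      cases h2 : y.le x with
      | true =>
        have g2 := (w_le y x).2 h2
        have e : x.w = y.w := le_antisymm g1 g2
        rw [if_pos e, if_neg (by simp [e]), if_neg (by simp [e])]
        refine RepQ_some ?_
        change _ = ((bf x.w y.w * (a * b - a) : ℤ) : ℚ)
        push_cast; ring
      | false =>
        have g2 : ¬ y.w ≤ x.w := fun hh => by rw [(w_le y x).1 hh] at h2; cases h2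
        have e : x.w ≠ y.w := fun hh => g2 hh.ge
        have p : 0 < y.w - x.w := sub_pos.2 (lt_of_le_of_ne g1 e)
        rw [if_neg e, if_pos p, if_neg (fun hh => g2 (sub_pos.1 hh).le), sub_zero, add_zero]
        refine RepQ_oadd (RepQ_some ?_) ?_
        · change _ = ((bf x.w y.w * (a * b) : ℤ) : ℚ)
          push_cast; ring
        · have := ih x (y.sub x) hx (by rw [w_sub g1]; exact p) hxH
            (by rw [w_sub g1, ht_sub]; have := ht_pos hx; omega)
          rwa [w_sub g1] at this
    | false =>
      have g1 : ¬ x.w ≤ y.w := fun hh => by rw [(w_le x y).1 hh] at h1; cases h1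
      have e : x.w ≠ y.w := fun hh => g1 hh.le
      cases h2 : y.le x with
      | true =>
        have g2 := (w_le y x).2 h2
        have p : 0 < x.w - y.w := sub_pos.2 (lt_of_le_of_ne g2 e.symm)
        rw [if_neg e, if_pos p, if_neg (fun hh => g1 (sub_pos.1 hh).le), sub_zero, add_zero]
        refine RepQ_oadd (RepQ_some ?_) ?_
        · change _ = ((bf x.w y.w * (a * b) : ℤ) : ℚ)
          push_cast; ring
        · have := ih (x.sub y) y (by rw [w_sub g2]; exact p) hy
            (by rw [w_sub g2, ht_sub]; have := ht_pos hy; omega) hyH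
          rwa [w_sub g2] at this
      | false =>
        have g2 : ¬ y.w ≤ x.w := fun hh => by rw [(w_le y x).1 hh] at h2; cases h2
        rw [if_neg e, if_neg (fun hh => g1 (sub_pos.1 hh).le), if_neg (fun hh => g2 (sub_pos.1 hh).le),
          sub_zero, add_zero, add_zero]
        refine RepQ_some ?_
        change _ = ((bf x.w y.w * (a * b) : ℤ) : ℚ)
        push_cast; ring

theorem evL_rep (H : ℤ) (hN : ∀ x : Wt, 0 < x → ht x < H → ∀ a, mlt (bf x x + 6).toNat = some a → (D.dm x : ℚ) = a)
    (hz : ∀ x : Wt, 0 < x → 2 < bf x x → D.dm x = 0) (x y : V10) 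
      (hH : ht x.w + ht y.w ≤ H) : RepQ (evL x y) (open Classical in if 0 < x.w ∧ 0 < y.w then FF C x.w y.w else 0) := by
  unfold evL
  by_cases h1 : x.sm = 0
  · rw [h1, if_neg]
    · exact RepQ_some (by simp)
    · rintro ⟨h, -⟩; exact h.ne' ((w_zero x).2 h1)
  · by_cases h2 : y.sm = 0
    · rw [h2, if_neg]
      · cases Nat.beq x.sm 0 <;> exact RepQ_some (by simp)
      · rintro ⟨-, h⟩; exact h.ne' ((w_zero y).2 h2)
    · have p1 : 0 < x.w := lt_of_le_of_ne (w_nonneg x) (fun h => h1 ((w_zero x).1 h.symm))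
      have p2 : 0 < y.w := lt_of_le_of_ne (w_nonneg y) (fun h => h2 ((w_zero y).1 h.symm))
      have t1 := ht_pos p1
      have t2 := ht_pos p2
      rw [if_pos ⟨p1, p2⟩, beq_false' h1, beq_false' h2]
      exact evF_rep C H hN hz 40 x y p1 p2 (by omega) (by omega)
end KMD
end

section
theorem cI_nonneg (k m w p t : ℕ) : 0 ≤ cI k m w p t := by unfold cI; positivity

/-- Sixty times the norm. -/
def cK (x0 x1 x2 x3 x4 x5 x6 x7 x8 x9 : ℕ) : ℤ := 120 * ((x0 : ℤ) * x0) - 120 * ((x0 : ℤ) * x1) + cI 2 1 30 x1 x2 + cI 3 2 10 x2 x3 +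
  cI 4 3 5 x3 x4 + cI 5 4 3 x4 x5 + cI 6 5 2 x5 x6 + cI 2 3 10 x6 x7 + cI 1 2 30 x7 x8 + cI 1 2 30 x6 x9

theorem cK_eq (x0 x1 x2 x3 x4 x5 x6 x7 x8 x9 : ℕ) : cK x0 x1 x2 x3 x4 x5 x6 x7 x8 x9 = 60 * bf (V10.w ⟨x0, x1, x2, x3, x4, x5, x6, x7, x8, x9⟩) (V10.w ⟨x0, x1, x2, x3, x4, x5, x6, x7, x8, x9⟩) := by
  rw [bf_all]
  simp [V10.w, Matrix.cons_val, cK, cI]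
  ring

theorem dfs_rep_abs (b0 b1 b2 b3 b4 b5 b6 b7 b8 b9 : ℕ) (G : ℕ → ℕ → ℕ → ℕ → ℕ → ℕ → ℕ → ℕ → ℕ → ℕ → ℚ)
    (hG : ∀ x0 x1 x2 x3 x4 x5 x6 x7 x8 x9, x0 ≤ b0 → x1 ≤ b1 → x2 ≤ b2 → x3 ≤ b3 → x4 ≤ b4 → x5 ≤ b5 → x6 ≤ b6 → x7 ≤ b7 → x8 ≤ b8 → x9 ≤ b9 → (120 < cK x0 x1 x2 x3 x4 x5 x6 x7 x8 x9 ∨ 120 < cK (b0 - x0) (b1 - x1) (b2 - x2) (b3 - x3) (b4 - x4) (b5 - x5) (b6 - x6) (b7 - x7) (b8 - x8) (b9 - x9)) → G x0 x1 x2 x3 x4 x5 x6 x7 x8 x9 = 0)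
    (hL : ∀ x0 x1 x2 x3 x4 x5 x6 x7 x8 x9, x0 ≤ b0 → x1 ≤ b1 → x2 ≤ b2 → x3 ≤ b3 → x4 ≤ b4 → x5 ≤ b5 → x6 ≤ b6 → x7 ≤ b7 → x8 ≤ b8 → x9 ≤ b9 → RepQ (evL ⟨x0, x1, x2, x3, x4, x5, x6, x7, x8, x9⟩ ⟨b0 - x0, b1 - x1, b2 - x2, b3 - x3, b4 - x4, b5 - x5, b6 - x6, b7 - x7, b8 - x8, b9 - x9⟩) (G x0 x1 x2 x3 x4 x5 x6 x7 x8 x9)) :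
    RepQ (dfsFast b0 b1 b2 b3 b4 b5 b6 b7 b8 b9) (∑ x0 ∈ Finset.range (b0 + 1), ∑ x1 ∈ Finset.range (b1 + 1), ∑ x2 ∈ Finset.range (b2 + 1), ∑ x3 ∈ Finset.range (b3 + 1), ∑ x4 ∈ Finset.range (b4 + 1), ∑ x5 ∈ Finset.range (b5 + 1), ∑ x6 ∈ Finset.range (b6 + 1), ∑ x7 ∈ Finset.range (b7 + 1), ∑ x8 ∈ Finset.range (b8 + 1), ∑ x9 ∈ Finset.range (b9 + 1), G x0 x1 x2 x3 x4 x5 x6 x7 x8 x9) := by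
  unfold dfsFast
  have Z0 : ∀ x0 x1, x0 ≤ b0 → x1 ≤ b1 → ((bgt x0 x1 : ℤ) < bct x0 ∨ (bgt (b0 - x0) (b1 - x1) : ℤ) < bct (b0 - x0)) →
      ∑ x2 ∈ Finset.range (b2 + 1), ∑ x3 ∈ Finset.range (b3 + 1), ∑ x4 ∈ Finset.range (b4 + 1), ∑ x5 ∈ Finset.range (b5 + 1), ∑ x6 ∈ Finset.range (b6 + 1), ∑ x7 ∈ Finset.range (b7 + 1), ∑ x8 ∈ Finset.range (b8 + 1), ∑ x9 ∈ Finset.range (b9 + 1), G x0 x1 x2 x3 x4 x5 x6 x7 x8 x9 = 0 := by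
    intro x0 x1 l0 l1 hh
    refine Finset.sum_eq_zero fun x2 l2 => ?_
    replace l2 := Finset.mem_range_succ_iff.1 l2
    refine Finset.sum_eq_zero fun x3 l3 => ?_
    replace l3 := Finset.mem_range_succ_iff.1 l3
    refine Finset.sum_eq_zero fun x4 l4 => ?_
    replace l4 := Finset.mem_range_succ_iff.1 l4
    refine Finset.sum_eq_zero fun x5 l5 => ?_
    replace l5 := Finset.mem_range_succ_iff.1 l5
    refine Finset.sum_eq_zero fun x6 l6 => ?_
    replace l6 := Finset.mem_range_succ_iff.1 l6
    refine Finset.sum_eq_zero fun x7 l7 => ?_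
    replace l7 := Finset.mem_range_succ_iff.1 l7
    refine Finset.sum_eq_zero fun x8 l8 => ?_
    replace l8 := Finset.mem_range_succ_iff.1 l8
    refine Finset.sum_eq_zero fun x9 l9 => ?_
    replace l9 := Finset.mem_range_succ_iff.1 l9
    refine hG x0 x1 x2 x3 x4 x5 x6 x7 x8 x9 l0 l1 l2 l3 l4 l5 l6 l7 l8 l9 ?_
    unfold cK
    have n2 := cI_nonneg 2 1 30 x1 x2
    have n3 := cI_nonneg 3 2 10 x2 x3
    have n4 := cI_nonneg 4 3 5 x3 x4
    have n5 := cI_nonneg 5 4 3 x4 x5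
    have n6 := cI_nonneg 6 5 2 x5 x6
    have n7 := cI_nonneg 2 3 10 x6 x7
    have n8 := cI_nonneg 1 2 30 x7 x8
    have n9 := cI_nonneg 1 2 30 x6 x9
    have m2 := cI_nonneg 2 1 30 (b1 - x1) (b2 - x2)
    have m3 := cI_nonneg 3 2 10 (b2 - x2) (b3 - x3)
    have m4 := cI_nonneg 4 3 5 (b3 - x3) (b4 - x4)
    have m5 := cI_nonneg 5 4 3 (b4 - x4) (b5 - x5)
    have m6 := cI_nonneg 6 5 2 (b5 - x5) (b6 - x6)
    have m7 := cI_nonneg 2 3 10 (b6 - x6) (b7 - x7)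
    have m8 := cI_nonneg 1 2 30 (b7 - x7) (b8 - x8)
    have m9 := cI_nonneg 1 2 30 (b6 - x6) (b9 - x9)
    simp only [bgt, bct, Nat.add_eq, Nat.mul_eq] at hh
    push_cast [-Nat.cast_sub] at hh
    rcases hh with hh | hh
    · left; linarith
    · right; linarith
  have step : ∀ (f : ℕ → Option ℤ) (v : ℕ → ℚ) (b : ℕ), (∀ t ≤ b, RepQ (f t) (v t)) →
      RepQ (lpw f (Nat.succ b) 0) (∑ t ∈ Finset.range (b + 1), v t) := by
    intro f v b h
    have := lpw_rep f v (b + 1) 0 (fun i hi => by rw [zero_add]; exact h i (by omega))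
    simpa only [zero_add] using this
  refine step _ _ _ fun x0 l0 => step _ _ _ fun x1 l1 => ?_
  simp only [frc_eq]
  cases hb1 : Nat.ble (bct x0) (bgt x0 x1) with
  | false =>
    have : ¬ bct x0 ≤ bgt x0 x1 := fun hh => by rw [Nat.ble_eq_true_of_le hh] at hb1; cases hb1
    exact RepQ_some (by rw [Z0 x0 x1 l0 l1 (Or.inl (by omega))]; simp)
  | true =>
  cases hb2 : Nat.ble (bct (Nat.sub b0 x0)) (bgt (Nat.sub b0 x0) (Nat.sub b1 x1)) with
  | false =>
    change Nat.ble (bct (b0 - x0)) (bgt (b0 - x0) (b1 - x1)) = _ at hb2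
    have : ¬ bct (b0 - x0) ≤ bgt (b0 - x0) (b1 - x1) := fun hh => by rw [Nat.ble_eq_true_of_le hh] at hb2; cases hb2
    exact RepQ_some (by rw [Z0 x0 x1 l0 l1 (Or.inr (by omega))]; simp)
  | true =>
  simp only [cond_true]
  have g1 := Nat.le_of_ble_eq_true hb1
  have g2 := Nat.le_of_ble_eq_true hb2
  change bct (b0 - x0) ≤ bgt (b0 - x0) (b1 - x1) at g2
  obtain ⟨rx1, e1⟩ : ∃ r, r = Nat.sub (bgt x0 x1) (bct x0) := ⟨_, rfl⟩
  obtain ⟨ry1, d1⟩ : ∃ r, r = Nat.sub (bgt (Nat.sub b0 x0) (Nat.sub b1 x1)) (bct (Nat.sub b0 x0)) := ⟨_, rfl⟩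
  rw [← e1, ← d1]
  simp only [Nat.sub_eq]
  replace e1 : (rx1 : ℤ) = 120 + 120 * ((x0 : ℤ) * x1) - 120 * ((x0 : ℤ) * x0) := by
    rw [e1, Nat.sub_eq, Nat.cast_sub g1]
    simp only [bgt, bct, Nat.add_eq, Nat.mul_eq]
    push_cast; ring
  replace d1 : (ry1 : ℤ) = 120 + 120 * (((b0 - x0 : ℕ) : ℤ) * ((b1 - x1 : ℕ) : ℤ)) - 120 * (((b0 - x0 : ℕ) : ℤ) * ((b0 - x0 : ℕ) : ℤ)) := by
    rw [d1]
    change ((bgt (b0 - x0) (b1 - x1) - bct (b0 - x0) : ℕ) : ℤ) = _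
    rw [Nat.cast_sub g2]
    generalize b0 - x0 = y0
    generalize b1 - x1 = y1
    simp only [bgt, bct, Nat.add_eq, Nat.mul_eq]
    push_cast; ring
  clear g1 g2 hb1 hb2 Z0
  refine stp_rep _ (by norm_num) (by norm_num) (fun x2 l2 rx2 ry2 e2 d2 => ?_) (fun x2 l2 hh => ?_)
  rotate_left
  · refine Finset.sum_eq_zero fun x3 l3 => ?_
    replace l3 := Finset.mem_range_succ_iff.1 l3
    refine Finset.sum_eq_zero fun x4 l4 => ?_
    replace l4 := Finset.mem_range_succ_iff.1 l4
    refine Finset.sum_eq_zero fun x5 l5 => ?_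
    replace l5 := Finset.mem_range_succ_iff.1 l5
    refine Finset.sum_eq_zero fun x6 l6 => ?_
    replace l6 := Finset.mem_range_succ_iff.1 l6
    refine Finset.sum_eq_zero fun x7 l7 => ?_
    replace l7 := Finset.mem_range_succ_iff.1 l7
    refine Finset.sum_eq_zero fun x8 l8 => ?_
    replace l8 := Finset.mem_range_succ_iff.1 l8
    refine Finset.sum_eq_zero fun x9 l9 => ?_
    replace l9 := Finset.mem_range_succ_iff.1 l9
    refine hG x0 x1 x2 x3 x4 x5 x6 x7 x8 x9 l0 l1 l2 l3 l4 l5 l6 l7 l8 l9 ?_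
    unfold cK
    have n2 := cI_nonneg 2 1 30 x1 x2
    have n3 := cI_nonneg 3 2 10 x2 x3
    have n4 := cI_nonneg 4 3 5 x3 x4
    have n5 := cI_nonneg 5 4 3 x4 x5
    have n6 := cI_nonneg 6 5 2 x5 x6
    have n7 := cI_nonneg 2 3 10 x6 x7
    have n8 := cI_nonneg 1 2 30 x7 x8
    have n9 := cI_nonneg 1 2 30 x6 x9
    have m2 := cI_nonneg 2 1 30 (b1 - x1) (b2 - x2)
    have m3 := cI_nonneg 3 2 10 (b2 - x2) (b3 - x3)
    have m4 := cI_nonneg 4 3 5 (b3 - x3) (b4 - x4)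
    have m5 := cI_nonneg 5 4 3 (b4 - x4) (b5 - x5)
    have m6 := cI_nonneg 6 5 2 (b5 - x5) (b6 - x6)
    have m7 := cI_nonneg 2 3 10 (b6 - x6) (b7 - x7)
    have m8 := cI_nonneg 1 2 30 (b7 - x7) (b8 - x8)
    have m9 := cI_nonneg 1 2 30 (b6 - x6) (b9 - x9)
    rcases hh with hh | hh
    · left; linarith
    · right; linarith
  refine stp_rep _ (by norm_num) (by norm_num) (fun x3 l3 rx3 ry3 e3 d3 => ?_) (fun x3 l3 hh => ?_)
  rotate_left
  · refine Finset.sum_eq_zero fun x4 l4 => ?_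
    replace l4 := Finset.mem_range_succ_iff.1 l4
    refine Finset.sum_eq_zero fun x5 l5 => ?_
    replace l5 := Finset.mem_range_succ_iff.1 l5
    refine Finset.sum_eq_zero fun x6 l6 => ?_
    replace l6 := Finset.mem_range_succ_iff.1 l6
    refine Finset.sum_eq_zero fun x7 l7 => ?_
    replace l7 := Finset.mem_range_succ_iff.1 l7
    refine Finset.sum_eq_zero fun x8 l8 => ?_
    replace l8 := Finset.mem_range_succ_iff.1 l8
    refine Finset.sum_eq_zero fun x9 l9 => ?_
    replace l9 := Finset.mem_range_succ_iff.1 l9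
    refine hG x0 x1 x2 x3 x4 x5 x6 x7 x8 x9 l0 l1 l2 l3 l4 l5 l6 l7 l8 l9 ?_
    unfold cK
    have n2 := cI_nonneg 2 1 30 x1 x2
    have n3 := cI_nonneg 3 2 10 x2 x3
    have n4 := cI_nonneg 4 3 5 x3 x4
    have n5 := cI_nonneg 5 4 3 x4 x5
    have n6 := cI_nonneg 6 5 2 x5 x6
    have n7 := cI_nonneg 2 3 10 x6 x7
    have n8 := cI_nonneg 1 2 30 x7 x8
    have n9 := cI_nonneg 1 2 30 x6 x9
    have m2 := cI_nonneg 2 1 30 (b1 - x1) (b2 - x2)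
    have m3 := cI_nonneg 3 2 10 (b2 - x2) (b3 - x3)
    have m4 := cI_nonneg 4 3 5 (b3 - x3) (b4 - x4)
    have m5 := cI_nonneg 5 4 3 (b4 - x4) (b5 - x5)
    have m6 := cI_nonneg 6 5 2 (b5 - x5) (b6 - x6)
    have m7 := cI_nonneg 2 3 10 (b6 - x6) (b7 - x7)
    have m8 := cI_nonneg 1 2 30 (b7 - x7) (b8 - x8)
    have m9 := cI_nonneg 1 2 30 (b6 - x6) (b9 - x9)
    rcases hh with hh | hh
    · left; linarith
    · right; linarith
  refine stp_rep _ (by norm_num) (by norm_num) (fun x4 l4 rx4 ry4 e4 d4 => ?_) (fun x4 l4 hh => ?_)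
  rotate_left
  · refine Finset.sum_eq_zero fun x5 l5 => ?_
    replace l5 := Finset.mem_range_succ_iff.1 l5
    refine Finset.sum_eq_zero fun x6 l6 => ?_
    replace l6 := Finset.mem_range_succ_iff.1 l6
    refine Finset.sum_eq_zero fun x7 l7 => ?_
    replace l7 := Finset.mem_range_succ_iff.1 l7
    refine Finset.sum_eq_zero fun x8 l8 => ?_
    replace l8 := Finset.mem_range_succ_iff.1 l8
    refine Finset.sum_eq_zero fun x9 l9 => ?_
    replace l9 := Finset.mem_range_succ_iff.1 l9
    refine hG x0 x1 x2 x3 x4 x5 x6 x7 x8 x9 l0 l1 l2 l3 l4 l5 l6 l7 l8 l9 ?_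
    unfold cK
    have n2 := cI_nonneg 2 1 30 x1 x2
    have n3 := cI_nonneg 3 2 10 x2 x3
    have n4 := cI_nonneg 4 3 5 x3 x4
    have n5 := cI_nonneg 5 4 3 x4 x5
    have n6 := cI_nonneg 6 5 2 x5 x6
    have n7 := cI_nonneg 2 3 10 x6 x7
    have n8 := cI_nonneg 1 2 30 x7 x8
    have n9 := cI_nonneg 1 2 30 x6 x9
    have m2 := cI_nonneg 2 1 30 (b1 - x1) (b2 - x2)
    have m3 := cI_nonneg 3 2 10 (b2 - x2) (b3 - x3)
    have m4 := cI_nonneg 4 3 5 (b3 - x3) (b4 - x4)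
    have m5 := cI_nonneg 5 4 3 (b4 - x4) (b5 - x5)
    have m6 := cI_nonneg 6 5 2 (b5 - x5) (b6 - x6)
    have m7 := cI_nonneg 2 3 10 (b6 - x6) (b7 - x7)
    have m8 := cI_nonneg 1 2 30 (b7 - x7) (b8 - x8)
    have m9 := cI_nonneg 1 2 30 (b6 - x6) (b9 - x9)
    rcases hh with hh | hh
    · left; linarith
    · right; linarith
  refine stp_rep _ (by norm_num) (by norm_num) (fun x5 l5 rx5 ry5 e5 d5 => ?_) (fun x5 l5 hh => ?_)
  rotate_left
  · refine Finset.sum_eq_zero fun x6 l6 => ?_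
    replace l6 := Finset.mem_range_succ_iff.1 l6
    refine Finset.sum_eq_zero fun x7 l7 => ?_
    replace l7 := Finset.mem_range_succ_iff.1 l7
    refine Finset.sum_eq_zero fun x8 l8 => ?_
    replace l8 := Finset.mem_range_succ_iff.1 l8
    refine Finset.sum_eq_zero fun x9 l9 => ?_
    replace l9 := Finset.mem_range_succ_iff.1 l9
    refine hG x0 x1 x2 x3 x4 x5 x6 x7 x8 x9 l0 l1 l2 l3 l4 l5 l6 l7 l8 l9 ?_
    unfold cK
    have n2 := cI_nonneg 2 1 30 x1 x2
    have n3 := cI_nonneg 3 2 10 x2 x3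
    have n4 := cI_nonneg 4 3 5 x3 x4
    have n5 := cI_nonneg 5 4 3 x4 x5
    have n6 := cI_nonneg 6 5 2 x5 x6
    have n7 := cI_nonneg 2 3 10 x6 x7
    have n8 := cI_nonneg 1 2 30 x7 x8
    have n9 := cI_nonneg 1 2 30 x6 x9
    have m2 := cI_nonneg 2 1 30 (b1 - x1) (b2 - x2)
    have m3 := cI_nonneg 3 2 10 (b2 - x2) (b3 - x3)
    have m4 := cI_nonneg 4 3 5 (b3 - x3) (b4 - x4)
    have m5 := cI_nonneg 5 4 3 (b4 - x4) (b5 - x5)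
    have m6 := cI_nonneg 6 5 2 (b5 - x5) (b6 - x6)
    have m7 := cI_nonneg 2 3 10 (b6 - x6) (b7 - x7)
    have m8 := cI_nonneg 1 2 30 (b7 - x7) (b8 - x8)
    have m9 := cI_nonneg 1 2 30 (b6 - x6) (b9 - x9)
    rcases hh with hh | hh
    · left; linarith
    · right; linarith
  refine stp_rep _ (by norm_num) (by norm_num) (fun x6 l6 rx6 ry6 e6 d6 => ?_) (fun x6 l6 hh => ?_)
  rotate_left
  · refine Finset.sum_eq_zero fun x7 l7 => ?_
    replace l7 := Finset.mem_range_succ_iff.1 l7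
    refine Finset.sum_eq_zero fun x8 l8 => ?_
    replace l8 := Finset.mem_range_succ_iff.1 l8
    refine Finset.sum_eq_zero fun x9 l9 => ?_
    replace l9 := Finset.mem_range_succ_iff.1 l9
    refine hG x0 x1 x2 x3 x4 x5 x6 x7 x8 x9 l0 l1 l2 l3 l4 l5 l6 l7 l8 l9 ?_
    unfold cK
    have n2 := cI_nonneg 2 1 30 x1 x2
    have n3 := cI_nonneg 3 2 10 x2 x3
    have n4 := cI_nonneg 4 3 5 x3 x4
    have n5 := cI_nonneg 5 4 3 x4 x5
    have n6 := cI_nonneg 6 5 2 x5 x6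
    have n7 := cI_nonneg 2 3 10 x6 x7
    have n8 := cI_nonneg 1 2 30 x7 x8
    have n9 := cI_nonneg 1 2 30 x6 x9
    have m2 := cI_nonneg 2 1 30 (b1 - x1) (b2 - x2)
    have m3 := cI_nonneg 3 2 10 (b2 - x2) (b3 - x3)
    have m4 := cI_nonneg 4 3 5 (b3 - x3) (b4 - x4)
    have m5 := cI_nonneg 5 4 3 (b4 - x4) (b5 - x5)
    have m6 := cI_nonneg 6 5 2 (b5 - x5) (b6 - x6)
    have m7 := cI_nonneg 2 3 10 (b6 - x6) (b7 - x7)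
    have m8 := cI_nonneg 1 2 30 (b7 - x7) (b8 - x8)
    have m9 := cI_nonneg 1 2 30 (b6 - x6) (b9 - x9)
    rcases hh with hh | hh
    · left; linarith
    · right; linarith
  refine stp_rep _ (by norm_num) (by norm_num) (fun x7 l7 rx7 ry7 e7 d7 => ?_) (fun x7 l7 hh => ?_)
  rotate_left
  · refine Finset.sum_eq_zero fun x8 l8 => ?_
    replace l8 := Finset.mem_range_succ_iff.1 l8
    refine Finset.sum_eq_zero fun x9 l9 => ?_
    replace l9 := Finset.mem_range_succ_iff.1 l9
    refine hG x0 x1 x2 x3 x4 x5 x6 x7 x8 x9 l0 l1 l2 l3 l4 l5 l6 l7 l8 l9 ?_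
    unfold cK
    have n2 := cI_nonneg 2 1 30 x1 x2
    have n3 := cI_nonneg 3 2 10 x2 x3
    have n4 := cI_nonneg 4 3 5 x3 x4
    have n5 := cI_nonneg 5 4 3 x4 x5
    have n6 := cI_nonneg 6 5 2 x5 x6
    have n7 := cI_nonneg 2 3 10 x6 x7
    have n8 := cI_nonneg 1 2 30 x7 x8
    have n9 := cI_nonneg 1 2 30 x6 x9
    have m2 := cI_nonneg 2 1 30 (b1 - x1) (b2 - x2)
    have m3 := cI_nonneg 3 2 10 (b2 - x2) (b3 - x3)
    have m4 := cI_nonneg 4 3 5 (b3 - x3) (b4 - x4)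
    have m5 := cI_nonneg 5 4 3 (b4 - x4) (b5 - x5)
    have m6 := cI_nonneg 6 5 2 (b5 - x5) (b6 - x6)
    have m7 := cI_nonneg 2 3 10 (b6 - x6) (b7 - x7)
    have m8 := cI_nonneg 1 2 30 (b7 - x7) (b8 - x8)
    have m9 := cI_nonneg 1 2 30 (b6 - x6) (b9 - x9)
    rcases hh with hh | hh
    · left; linarith
    · right; linarith
  refine stp_rep _ (by norm_num) (by norm_num) (fun x8 l8 rx8 ry8 e8 d8 => ?_) (fun x8 l8 hh => ?_)
  rotate_left
  · refine Finset.sum_eq_zero fun x9 l9 => ?_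
    replace l9 := Finset.mem_range_succ_iff.1 l9
    refine hG x0 x1 x2 x3 x4 x5 x6 x7 x8 x9 l0 l1 l2 l3 l4 l5 l6 l7 l8 l9 ?_
    unfold cK
    have n2 := cI_nonneg 2 1 30 x1 x2
    have n3 := cI_nonneg 3 2 10 x2 x3
    have n4 := cI_nonneg 4 3 5 x3 x4
    have n5 := cI_nonneg 5 4 3 x4 x5
    have n6 := cI_nonneg 6 5 2 x5 x6
    have n7 := cI_nonneg 2 3 10 x6 x7
    have n8 := cI_nonneg 1 2 30 x7 x8
    have n9 := cI_nonneg 1 2 30 x6 x9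
    have m2 := cI_nonneg 2 1 30 (b1 - x1) (b2 - x2)
    have m3 := cI_nonneg 3 2 10 (b2 - x2) (b3 - x3)
    have m4 := cI_nonneg 4 3 5 (b3 - x3) (b4 - x4)
    have m5 := cI_nonneg 5 4 3 (b4 - x4) (b5 - x5)
    have m6 := cI_nonneg 6 5 2 (b5 - x5) (b6 - x6)
    have m7 := cI_nonneg 2 3 10 (b6 - x6) (b7 - x7)
    have m8 := cI_nonneg 1 2 30 (b7 - x7) (b8 - x8)
    have m9 := cI_nonneg 1 2 30 (b6 - x6) (b9 - x9)
    rcases hh with hh | hh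
    · left; linarith
    · right; linarith
  refine stp_rep _ (by norm_num) (by norm_num) (fun x9 l9 rx9 ry9 e9 d9 => ?_) (fun x9 l9 hh => ?_)
  rotate_left
  · refine hG x0 x1 x2 x3 x4 x5 x6 x7 x8 x9 l0 l1 l2 l3 l4 l5 l6 l7 l8 l9 ?_
    unfold cK
    have n2 := cI_nonneg 2 1 30 x1 x2
    have n3 := cI_nonneg 3 2 10 x2 x3
    have n4 := cI_nonneg 4 3 5 x3 x4
    have n5 := cI_nonneg 5 4 3 x4 x5
    have n6 := cI_nonneg 6 5 2 x5 x6
    have n7 := cI_nonneg 2 3 10 x6 x7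
    have n8 := cI_nonneg 1 2 30 x7 x8
    have n9 := cI_nonneg 1 2 30 x6 x9
    have m2 := cI_nonneg 2 1 30 (b1 - x1) (b2 - x2)
    have m3 := cI_nonneg 3 2 10 (b2 - x2) (b3 - x3)
    have m4 := cI_nonneg 4 3 5 (b3 - x3) (b4 - x4)
    have m5 := cI_nonneg 5 4 3 (b4 - x4) (b5 - x5)
    have m6 := cI_nonneg 6 5 2 (b5 - x5) (b6 - x6)
    have m7 := cI_nonneg 2 3 10 (b6 - x6) (b7 - x7)
    have m8 := cI_nonneg 1 2 30 (b7 - x7) (b8 - x8)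
    have m9 := cI_nonneg 1 2 30 (b6 - x6) (b9 - x9)
    rcases hh with hh | hh
    · left; linarith
    · right; linarith
  exact hL x0 x1 x2 x3 x4 x5 x6 x7 x8 x9 l0 l1 l2 l3 l4 l5 l6 l7 l8 l9

namespace KMD
variable {L : Type*} [LieRing L] [LieAlgebra ℚ L] {D : KMD L} (C : Coords D)

theorem dfs_rep (hz : ∀ x : Wt, 0 < x → 2 < bf x x → D.dm x = 0) (b0 b1 b2 b3 b4 b5 b6 b7 b8 b9 : ℕ)
    (hN : ∀ x : Wt, 0 < x → ht x < ht (V10.w ⟨b0, b1, b2, b3, b4, b5, b6, b7, b8, b9⟩) → ∀ a, mlt (bf x x + 6).toNat = some a → (D.dm x : ℚ) = a) :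
    RepQ (dfsFast b0 b1 b2 b3 b4 b5 b6 b7 b8 b9) (∑ α ∈ TT (V10.w ⟨b0, b1, b2, b3, b4, b5, b6, b7, b8, b9⟩), FF C α ((V10.w ⟨b0, b1, b2, b3, b4, b5, b6, b7, b8, b9⟩) - α)) := by
  classical
  have hb : (V10.w ⟨b0, b1, b2, b3, b4, b5, b6, b7, b8, b9⟩) = ![(b0 : ℤ), (b1 : ℤ), (b2 : ℤ), (b3 : ℤ), (b4 : ℤ), (b5 : ℤ), (b6 : ℤ), (b7 : ℤ), (b8 : ℤ), (b9 : ℤ)] := rfl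
  have hsub : ∀ x0 x1 x2 x3 x4 x5 x6 x7 x8 x9, x0 ≤ b0 → x1 ≤ b1 → x2 ≤ b2 → x3 ≤ b3 → x4 ≤ b4 → x5 ≤ b5 → x6 ≤ b6 → x7 ≤ b7 → x8 ≤ b8 → x9 ≤ b9 → (V10.w ⟨b0, b1, b2, b3, b4, b5, b6, b7, b8, b9⟩) - V10.w ⟨x0, x1, x2, x3, x4, x5, x6, x7, x8, x9⟩ = V10.w ⟨b0 - x0, b1 - x1, b2 - x2, b3 - x3, b4 - x4, b5 - x5, b6 - x6, b7 - x7, b8 - x8, b9 - x9⟩ := by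
    intro x0 x1 x2 x3 x4 x5 x6 x7 x8 x9 l0 l1 l2 l3 l4 l5 l6 l7 l8 l9
    rw [funext_iff, all10]
    simp [V10.w, Matrix.cons_val]
    omega
  have hc := dfs_rep_abs b0 b1 b2 b3 b4 b5 b6 b7 b8 b9 (fun x0 x1 x2 x3 x4 x5 x6 x7 x8 x9 => if 0 < V10.w ⟨x0, x1, x2, x3, x4, x5, x6, x7, x8, x9⟩ ∧ 0 < (V10.w ⟨b0, b1, b2, b3, b4, b5, b6, b7, b8, b9⟩) - V10.w ⟨x0, x1, x2, x3, x4, x5, x6, x7, x8, x9⟩ then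
      FF C (V10.w ⟨x0, x1, x2, x3, x4, x5, x6, x7, x8, x9⟩) ((V10.w ⟨b0, b1, b2, b3, b4, b5, b6, b7, b8, b9⟩) - V10.w ⟨x0, x1, x2, x3, x4, x5, x6, x7, x8, x9⟩) else 0) ?_ ?_
  · convert hc using 1
    unfold TT
    rw [Finset.sum_filter]
    rw [show Finset.Icc (0 : Wt) (V10.w ⟨b0, b1, b2, b3, b4, b5, b6, b7, b8, b9⟩) = Finset.Icc (0 : Wt) ![(b0 : ℤ), (b1 : ℤ), (b2 : ℤ), (b3 : ℤ), (b4 : ℤ), (b5 : ℤ), (b6 : ℤ), (b7 : ℤ), (b8 : ℤ), (b9 : ℤ)] from rfl]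
    simp only [sum_Icc_cons]
    refine Finset.sum_congr rfl fun x0 _ => Finset.sum_congr rfl fun x1 _ => Finset.sum_congr rfl fun x2 _ =>
      Finset.sum_congr rfl fun x3 _ => Finset.sum_congr rfl fun x4 _ => Finset.sum_congr rfl fun x5 _ =>
      Finset.sum_congr rfl fun x6 _ => Finset.sum_congr rfl fun x7 _ => Finset.sum_congr rfl fun x8 _ =>
      Finset.sum_congr rfl fun x9 _ => ?_
    have : Finset.Icc (0 : Fin 0 → ℤ) ![] = {![]} := by
      ext a; simp [Subsingleton.elim a ![], Subsingleton.elim (0 : Fin 0 → ℤ) ![]]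
    rw [this, Finset.sum_singleton]
    rfl
  · intro x0 x1 x2 x3 x4 x5 x6 x7 x8 x9 l0 l1 l2 l3 l4 l5 l6 l7 l8 l9 hh
    rw [cK_eq, cK_eq] at hh
    split_ifs with hp
    · rw [hsub x0 x1 x2 x3 x4 x5 x6 x7 x8 x9 l0 l1 l2 l3 l4 l5 l6 l7 l8 l9] at hp ⊢
      rcases hh with hh | hh
      · exact FF_zero_left C (hz _ hp.1 (by omega))
      · exact FF_zero_right C (hz _ hp.2 (by omega))
    · rfl
  · intro x0 x1 x2 x3 x4 x5 x6 x7 x8 x9 l0 l1 l2 l3 l4 l5 l6 l7 l8 l9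
    have := evL_rep C (ht (V10.w ⟨b0, b1, b2, b3, b4, b5, b6, b7, b8, b9⟩)) hN hz ⟨x0, x1, x2, x3, x4, x5, x6, x7, x8, x9⟩ ⟨b0 - x0, b1 - x1, b2 - x2, b3 - x3, b4 - x4, b5 - x5, b6 - x6, b7 - x7, b8 - x8, b9 - x9⟩ ?_
    · rw [← hsub x0 x1 x2 x3 x4 x5 x6 x7 x8 x9 l0 l1 l2 l3 l4 l5 l6 l7 l8 l9] at this
      exact this
    · rw [← hsub x0 x1 x2 x3 x4 x5 x6 x7 x8 x9 l0 l1 l2 l3 l4 l5 l6 l7 l8 l9, ht_sub]; omega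
end KMD
end

section
theorem leave0 (x0 x1 x2 x3 x4 x5 x6 x7 x8 x9 : ℤ) (h0 : 0 ≤ x0) (h1 : 0 ≤ x1) (h2 : 0 ≤ x2) (h3 : 0 ≤ x3)
    (h4 : 0 ≤ x4) (h5 : 0 ≤ x5) (h6 : 0 ≤ x6) (h7 : 0 ≤ x7) (h8 : 0 ≤ x8) (h9 : 0 ≤ x9)
    (hd : x1 < x0) (hn : x0 * (2 * x0 - x1) + x1 * (2 * x1 - x0 - x2) + x2 * (2 * x2 - x1 - x3) + x3 * (2 * x3 - x2 - x4) + x4 * (2 * x4 - x3 - x5) + x5 * (2 * x5 - x4 - x6) + x6 * (2 * x6 - x5 - x7 - x9) + x7 * (2 * x7 - x6 - x8) + x8 * (2 * x8 - x7) + x9 * (2 * x9 - x6) ≤ 2) : x0 = 1 ∧ x1 = 0 ∧ x2 = 0 ∧ x3 = 0 ∧ x4 = 0 ∧ x5 = 0 ∧ x6 = 0 ∧ x7 = 0 ∧ x8 = 0 ∧ x9 = 0 := by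
  have id : 60 * (x0 * (2 * x0 - x1) + x1 * (2 * x1 - x0 - x2) + x2 * (2 * x2 - x1 - x3) + x3 * (2 * x3 - x2 - x4) + x4 * (2 * x4 - x3 - x5) + x5 * (2 * x5 - x4 - x6) + x6 * (2 * x6 - x5 - x7 - x9) + x7 * (2 * x7 - x6 - x8) + x8 * (2 * x8 - x7) + x9 * (2 * x9 - x6)) = 120 * (x0 * (x0 - x1)) + (30 * (2 * x8 - 1 * x7) ^ 2 + 10 * (3 * x7 - 2 * x6) ^ 2 + 30 * (2 * x9 - 1 * x6) ^ 2 + 2 * (5 * x6 - 6 * x5) ^ 2 + 3 * (4 * x5 - 5 * x4) ^ 2 + 5 * (3 * x4 - 4 * x3) ^ 2 + 10 * (2 * x3 - 3 * x2) ^ 2 + 30 * (1 * x2 - 2 * x1) ^ 2) := by ring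
  have hc : x0 ≤ x0 * (x0 - x1) := by nlinarith
  have s0 := sq_nonneg (2 * x8 - 1 * x7)
  have s1 := sq_nonneg (3 * x7 - 2 * x6)
  have s2 := sq_nonneg (2 * x9 - 1 * x6)
  have s3 := sq_nonneg (5 * x6 - 6 * x5)
  have s4 := sq_nonneg (4 * x5 - 5 * x4)
  have s5 := sq_nonneg (3 * x4 - 4 * x3)
  have s6 := sq_nonneg (2 * x3 - 3 * x2)
  have s7 := sq_nonneg (1 * x2 - 2 * x1)
  have hx : x0 = 1 := by
    have : x0 ≤ 1 := by linarith
    omega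
  have n1 : x1 = 0 := by omega
  have t0 : (2 * x8 - 1 * x7) = 0 := pow_eq_zero_iff (two_ne_zero) |>.1 (by linarith : (2 * x8 - 1 * x7) ^ 2 = 0)
  have t1 : (3 * x7 - 2 * x6) = 0 := pow_eq_zero_iff (two_ne_zero) |>.1 (by linarith : (3 * x7 - 2 * x6) ^ 2 = 0)
  have t2 : (2 * x9 - 1 * x6) = 0 := pow_eq_zero_iff (two_ne_zero) |>.1 (by linarith : (2 * x9 - 1 * x6) ^ 2 = 0)
  have t3 : (5 * x6 - 6 * x5) = 0 := pow_eq_zero_iff (two_ne_zero) |>.1 (by linarith : (5 * x6 - 6 * x5) ^ 2 = 0)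
  have t4 : (4 * x5 - 5 * x4) = 0 := pow_eq_zero_iff (two_ne_zero) |>.1 (by linarith : (4 * x5 - 5 * x4) ^ 2 = 0)
  have t5 : (3 * x4 - 4 * x3) = 0 := pow_eq_zero_iff (two_ne_zero) |>.1 (by linarith : (3 * x4 - 4 * x3) ^ 2 = 0)
  have t6 : (2 * x3 - 3 * x2) = 0 := pow_eq_zero_iff (two_ne_zero) |>.1 (by linarith : (2 * x3 - 3 * x2) ^ 2 = 0)
  have t7 : (1 * x2 - 2 * x1) = 0 := pow_eq_zero_iff (two_ne_zero) |>.1 (by linarith : (1 * x2 - 2 * x1) ^ 2 = 0)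
  omega

theorem leave1 (x0 x1 x2 x3 x4 x5 x6 x7 x8 x9 : ℤ) (h0 : 0 ≤ x0) (h1 : 0 ≤ x1) (h2 : 0 ≤ x2) (h3 : 0 ≤ x3)
    (h4 : 0 ≤ x4) (h5 : 0 ≤ x5) (h6 : 0 ≤ x6) (h7 : 0 ≤ x7) (h8 : 0 ≤ x8) (h9 : 0 ≤ x9)
    (hd : x0 + x2 < x1) (hn : x0 * (2 * x0 - x1) + x1 * (2 * x1 - x0 - x2) + x2 * (2 * x2 - x1 - x3) + x3 * (2 * x3 - x2 - x4) + x4 * (2 * x4 - x3 - x5) + x5 * (2 * x5 - x4 - x6) + x6 * (2 * x6 - x5 - x7 - x9) + x7 * (2 * x7 - x6 - x8) + x8 * (2 * x8 - x7) + x9 * (2 * x9 - x6) ≤ 2) : x1 = 1 ∧ x0 = 0 ∧ x2 = 0 ∧ x3 = 0 ∧ x4 = 0 ∧ x5 = 0 ∧ x6 = 0 ∧ x7 = 0 ∧ x8 = 0 ∧ x9 = 0 := by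
  have id : 60 * (x0 * (2 * x0 - x1) + x1 * (2 * x1 - x0 - x2) + x2 * (2 * x2 - x1 - x3) + x3 * (2 * x3 - x2 - x4) + x4 * (2 * x4 - x3 - x5) + x5 * (2 * x5 - x4 - x6) + x6 * (2 * x6 - x5 - x7 - x9) + x7 * (2 * x7 - x6 - x8) + x8 * (2 * x8 - x7) + x9 * (2 * x9 - x6)) = 120 * (x1 * (x1 - x0 - x2)) + (120 * x0 ^ 2 + 30 * (2 * x8 - 1 * x7) ^ 2 + 10 * (3 * x7 - 2 * x6) ^ 2 + 30 * (2 * x9 - 1 * x6) ^ 2 + 2 * (5 * x6 - 6 * x5) ^ 2 + 3 * (4 * x5 - 5 * x4) ^ 2 + 5 * (3 * x4 - 4 * x3) ^ 2 + 10 * (2 * x3 - 3 * x2) ^ 2 + 30 * x2 ^ 2) := by ring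
  have hc : x1 ≤ x1 * (x1 - x0 - x2) := by nlinarith
  have s0 := sq_nonneg x0
  have s1 := sq_nonneg (2 * x8 - 1 * x7)
  have s2 := sq_nonneg (3 * x7 - 2 * x6)
  have s3 := sq_nonneg (2 * x9 - 1 * x6)
  have s4 := sq_nonneg (5 * x6 - 6 * x5)
  have s5 := sq_nonneg (4 * x5 - 5 * x4)
  have s6 := sq_nonneg (3 * x4 - 4 * x3)
  have s7 := sq_nonneg (2 * x3 - 3 * x2)
  have s8 := sq_nonneg x2
  have hx : x1 = 1 := by
    have : x1 ≤ 1 := by linarith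
    omega
  have n0 : x0 = 0 := by omega
  have n2 : x2 = 0 := by omega
  have t0 : x0 = 0 := pow_eq_zero_iff (two_ne_zero) |>.1 (by linarith : x0 ^ 2 = 0)
  have t1 : (2 * x8 - 1 * x7) = 0 := pow_eq_zero_iff (two_ne_zero) |>.1 (by linarith : (2 * x8 - 1 * x7) ^ 2 = 0)
  have t2 : (3 * x7 - 2 * x6) = 0 := pow_eq_zero_iff (two_ne_zero) |>.1 (by linarith : (3 * x7 - 2 * x6) ^ 2 = 0)
  have t3 : (2 * x9 - 1 * x6) = 0 := pow_eq_zero_iff (two_ne_zero) |>.1 (by linarith : (2 * x9 - 1 * x6) ^ 2 = 0)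
  have t4 : (5 * x6 - 6 * x5) = 0 := pow_eq_zero_iff (two_ne_zero) |>.1 (by linarith : (5 * x6 - 6 * x5) ^ 2 = 0)
  have t5 : (4 * x5 - 5 * x4) = 0 := pow_eq_zero_iff (two_ne_zero) |>.1 (by linarith : (4 * x5 - 5 * x4) ^ 2 = 0)
  have t6 : (3 * x4 - 4 * x3) = 0 := pow_eq_zero_iff (two_ne_zero) |>.1 (by linarith : (3 * x4 - 4 * x3) ^ 2 = 0)
  have t7 : (2 * x3 - 3 * x2) = 0 := pow_eq_zero_iff (two_ne_zero) |>.1 (by linarith : (2 * x3 - 3 * x2) ^ 2 = 0)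
  have t8 : x2 = 0 := pow_eq_zero_iff (two_ne_zero) |>.1 (by linarith : x2 ^ 2 = 0)
  omega

theorem leave2 (x0 x1 x2 x3 x4 x5 x6 x7 x8 x9 : ℤ) (h0 : 0 ≤ x0) (h1 : 0 ≤ x1) (h2 : 0 ≤ x2) (h3 : 0 ≤ x3)
    (h4 : 0 ≤ x4) (h5 : 0 ≤ x5) (h6 : 0 ≤ x6) (h7 : 0 ≤ x7) (h8 : 0 ≤ x8) (h9 : 0 ≤ x9)
    (hd : x1 + x3 < x2) (hn : x0 * (2 * x0 - x1) + x1 * (2 * x1 - x0 - x2) + x2 * (2 * x2 - x1 - x3) + x3 * (2 * x3 - x2 - x4) + x4 * (2 * x4 - x3 - x5) + x5 * (2 * x5 - x4 - x6) + x6 * (2 * x6 - x5 - x7 - x9) + x7 * (2 * x7 - x6 - x8) + x8 * (2 * x8 - x7) + x9 * (2 * x9 - x6) ≤ 2) : x2 = 1 ∧ x0 = 0 ∧ x1 = 0 ∧ x3 = 0 ∧ x4 = 0 ∧ x5 = 0 ∧ x6 = 0 ∧ x7 = 0 ∧ x8 = 0 ∧ x9 = 0 := by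
  have id : 60 * (x0 * (2 * x0 - x1) + x1 * (2 * x1 - x0 - x2) + x2 * (2 * x2 - x1 - x3) + x3 * (2 * x3 - x2 - x4) + x4 * (2 * x4 - x3 - x5) + x5 * (2 * x5 - x4 - x6) + x6 * (2 * x6 - x5 - x7 - x9) + x7 * (2 * x7 - x6 - x8) + x8 * (2 * x8 - x7) + x9 * (2 * x9 - x6)) = 120 * (x2 * (x2 - x1 - x3)) + (30 * (2 * x0 - 1 * x1) ^ 2 + 90 * x1 ^ 2 + 30 * (2 * x8 - 1 * x7) ^ 2 + 10 * (3 * x7 - 2 * x6) ^ 2 + 30 * (2 * x9 - 1 * x6) ^ 2 + 2 * (5 * x6 - 6 * x5) ^ 2 + 3 * (4 * x5 - 5 * x4) ^ 2 + 5 * (3 * x4 - 4 * x3) ^ 2 + 40 * x3 ^ 2) := by ring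
  have hc : x2 ≤ x2 * (x2 - x1 - x3) := by nlinarith
  have s0 := sq_nonneg (2 * x0 - 1 * x1)
  have s1 := sq_nonneg x1
  have s2 := sq_nonneg (2 * x8 - 1 * x7)
  have s3 := sq_nonneg (3 * x7 - 2 * x6)
  have s4 := sq_nonneg (2 * x9 - 1 * x6)
  have s5 := sq_nonneg (5 * x6 - 6 * x5)
  have s6 := sq_nonneg (4 * x5 - 5 * x4)
  have s7 := sq_nonneg (3 * x4 - 4 * x3)
  have s8 := sq_nonneg x3
  have hx : x2 = 1 := by
    have : x2 ≤ 1 := by linarith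
    omega
  have n1 : x1 = 0 := by omega
  have n3 : x3 = 0 := by omega
  have t0 : (2 * x0 - 1 * x1) = 0 := pow_eq_zero_iff (two_ne_zero) |>.1 (by linarith : (2 * x0 - 1 * x1) ^ 2 = 0)
  have t1 : x1 = 0 := pow_eq_zero_iff (two_ne_zero) |>.1 (by linarith : x1 ^ 2 = 0)
  have t2 : (2 * x8 - 1 * x7) = 0 := pow_eq_zero_iff (two_ne_zero) |>.1 (by linarith : (2 * x8 - 1 * x7) ^ 2 = 0)
  have t3 : (3 * x7 - 2 * x6) = 0 := pow_eq_zero_iff (two_ne_zero) |>.1 (by linarith : (3 * x7 - 2 * x6) ^ 2 = 0)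
  have t4 : (2 * x9 - 1 * x6) = 0 := pow_eq_zero_iff (two_ne_zero) |>.1 (by linarith : (2 * x9 - 1 * x6) ^ 2 = 0)
  have t5 : (5 * x6 - 6 * x5) = 0 := pow_eq_zero_iff (two_ne_zero) |>.1 (by linarith : (5 * x6 - 6 * x5) ^ 2 = 0)
  have t6 : (4 * x5 - 5 * x4) = 0 := pow_eq_zero_iff (two_ne_zero) |>.1 (by linarith : (4 * x5 - 5 * x4) ^ 2 = 0)
  have t7 : (3 * x4 - 4 * x3) = 0 := pow_eq_zero_iff (two_ne_zero) |>.1 (by linarith : (3 * x4 - 4 * x3) ^ 2 = 0)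
  have t8 : x3 = 0 := pow_eq_zero_iff (two_ne_zero) |>.1 (by linarith : x3 ^ 2 = 0)
  omega

theorem leave3 (x0 x1 x2 x3 x4 x5 x6 x7 x8 x9 : ℤ) (h0 : 0 ≤ x0) (h1 : 0 ≤ x1) (h2 : 0 ≤ x2) (h3 : 0 ≤ x3)
    (h4 : 0 ≤ x4) (h5 : 0 ≤ x5) (h6 : 0 ≤ x6) (h7 : 0 ≤ x7) (h8 : 0 ≤ x8) (h9 : 0 ≤ x9)
    (hd : x2 + x4 < x3) (hn : x0 * (2 * x0 - x1) + x1 * (2 * x1 - x0 - x2) + x2 * (2 * x2 - x1 - x3) + x3 * (2 * x3 - x2 - x4) + x4 * (2 * x4 - x3 - x5) + x5 * (2 * x5 - x4 - x6) + x6 * (2 * x6 - x5 - x7 - x9) + x7 * (2 * x7 - x6 - x8) + x8 * (2 * x8 - x7) + x9 * (2 * x9 - x6) ≤ 2) : x3 = 1 ∧ x0 = 0 ∧ x1 = 0 ∧ x2 = 0 ∧ x4 = 0 ∧ x5 = 0 ∧ x6 = 0 ∧ x7 = 0 ∧ x8 = 0 ∧ x9 = 0 := by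
  have id : 60 * (x0 * (2 * x0 - x1) + x1 * (2 * x1 - x0 - x2) + x2 * (2 * x2 - x1 - x3) + x3 * (2 * x3 - x2 - x4) + x4 * (2 * x4 - x3 - x5) + x5 * (2 * x5 - x4 - x6) + x6 * (2 * x6 - x5 - x7 - x9) + x7 * (2 * x7 - x6 - x8) + x8 * (2 * x8 - x7) + x9 * (2 * x9 - x6)) = 120 * (x3 * (x3 - x2 - x4)) + (30 * (2 * x0 - 1 * x1) ^ 2 + 10 * (3 * x1 - 2 * x2) ^ 2 + 80 * x2 ^ 2 + 30 * (2 * x8 - 1 * x7) ^ 2 + 10 * (3 * x7 - 2 * x6) ^ 2 + 30 * (2 * x9 - 1 * x6) ^ 2 + 2 * (5 * x6 - 6 * x5) ^ 2 + 3 * (4 * x5 - 5 * x4) ^ 2 + 45 * x4 ^ 2) := by ring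
  have hc : x3 ≤ x3 * (x3 - x2 - x4) := by nlinarith
  have s0 := sq_nonneg (2 * x0 - 1 * x1)
  have s1 := sq_nonneg (3 * x1 - 2 * x2)
  have s2 := sq_nonneg x2
  have s3 := sq_nonneg (2 * x8 - 1 * x7)
  have s4 := sq_nonneg (3 * x7 - 2 * x6)
  have s5 := sq_nonneg (2 * x9 - 1 * x6)
  have s6 := sq_nonneg (5 * x6 - 6 * x5)
  have s7 := sq_nonneg (4 * x5 - 5 * x4)
  have s8 := sq_nonneg x4
  have hx : x3 = 1 := by
    have : x3 ≤ 1 := by linarith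
    omega
  have n2 : x2 = 0 := by omega
  have n4 : x4 = 0 := by omega
  have t0 : (2 * x0 - 1 * x1) = 0 := pow_eq_zero_iff (two_ne_zero) |>.1 (by linarith : (2 * x0 - 1 * x1) ^ 2 = 0)
  have t1 : (3 * x1 - 2 * x2) = 0 := pow_eq_zero_iff (two_ne_zero) |>.1 (by linarith : (3 * x1 - 2 * x2) ^ 2 = 0)
  have t2 : x2 = 0 := pow_eq_zero_iff (two_ne_zero) |>.1 (by linarith : x2 ^ 2 = 0)
  have t3 : (2 * x8 - 1 * x7) = 0 := pow_eq_zero_iff (two_ne_zero) |>.1 (by linarith : (2 * x8 - 1 * x7) ^ 2 = 0)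
  have t4 : (3 * x7 - 2 * x6) = 0 := pow_eq_zero_iff (two_ne_zero) |>.1 (by linarith : (3 * x7 - 2 * x6) ^ 2 = 0)
  have t5 : (2 * x9 - 1 * x6) = 0 := pow_eq_zero_iff (two_ne_zero) |>.1 (by linarith : (2 * x9 - 1 * x6) ^ 2 = 0)
  have t6 : (5 * x6 - 6 * x5) = 0 := pow_eq_zero_iff (two_ne_zero) |>.1 (by linarith : (5 * x6 - 6 * x5) ^ 2 = 0)
  have t7 : (4 * x5 - 5 * x4) = 0 := pow_eq_zero_iff (two_ne_zero) |>.1 (by linarith : (4 * x5 - 5 * x4) ^ 2 = 0)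
  have t8 : x4 = 0 := pow_eq_zero_iff (two_ne_zero) |>.1 (by linarith : x4 ^ 2 = 0)
  omega

theorem leave4 (x0 x1 x2 x3 x4 x5 x6 x7 x8 x9 : ℤ) (h0 : 0 ≤ x0) (h1 : 0 ≤ x1) (h2 : 0 ≤ x2) (h3 : 0 ≤ x3)
    (h4 : 0 ≤ x4) (h5 : 0 ≤ x5) (h6 : 0 ≤ x6) (h7 : 0 ≤ x7) (h8 : 0 ≤ x8) (h9 : 0 ≤ x9)
    (hd : x3 + x5 < x4) (hn : x0 * (2 * x0 - x1) + x1 * (2 * x1 - x0 - x2) + x2 * (2 * x2 - x1 - x3) + x3 * (2 * x3 - x2 - x4) + x4 * (2 * x4 - x3 - x5) + x5 * (2 * x5 - x4 - x6) + x6 * (2 * x6 - x5 - x7 - x9) + x7 * (2 * x7 - x6 - x8) + x8 * (2 * x8 - x7) + x9 * (2 * x9 - x6) ≤ 2) : x4 = 1 ∧ x0 = 0 ∧ x1 = 0 ∧ x2 = 0 ∧ x3 = 0 ∧ x5 = 0 ∧ x6 = 0 ∧ x7 = 0 ∧ x8 = 0 ∧ x9 = 0 := by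
  have id : 60 * (x0 * (2 * x0 - x1) + x1 * (2 * x1 - x0 - x2) + x2 * (2 * x2 - x1 - x3) + x3 * (2 * x3 - x2 - x4) + x4 * (2 * x4 - x3 - x5) + x5 * (2 * x5 - x4 - x6) + x6 * (2 * x6 - x5 - x7 - x9) + x7 * (2 * x7 - x6 - x8) + x8 * (2 * x8 - x7) + x9 * (2 * x9 - x6)) = 120 * (x4 * (x4 - x3 - x5)) + (30 * (2 * x0 - 1 * x1) ^ 2 + 10 * (3 * x1 - 2 * x2) ^ 2 + 5 * (4 * x2 - 3 * x3) ^ 2 + 75 * x3 ^ 2 + 30 * (2 * x8 - 1 * x7) ^ 2 + 10 * (3 * x7 - 2 * x6) ^ 2 + 30 * (2 * x9 - 1 * x6) ^ 2 + 2 * (5 * x6 - 6 * x5) ^ 2 + 48 * x5 ^ 2) := by ring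
  have hc : x4 ≤ x4 * (x4 - x3 - x5) := by nlinarith
  have s0 := sq_nonneg (2 * x0 - 1 * x1)
  have s1 := sq_nonneg (3 * x1 - 2 * x2)
  have s2 := sq_nonneg (4 * x2 - 3 * x3)
  have s3 := sq_nonneg x3
  have s4 := sq_nonneg (2 * x8 - 1 * x7)
  have s5 := sq_nonneg (3 * x7 - 2 * x6)
  have s6 := sq_nonneg (2 * x9 - 1 * x6)
  have s7 := sq_nonneg (5 * x6 - 6 * x5)
  have s8 := sq_nonneg x5
  have hx : x4 = 1 := by
    have : x4 ≤ 1 := by linarith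
    omega
  have n3 : x3 = 0 := by omega
  have n5 : x5 = 0 := by omega
  have t0 : (2 * x0 - 1 * x1) = 0 := pow_eq_zero_iff (two_ne_zero) |>.1 (by linarith : (2 * x0 - 1 * x1) ^ 2 = 0)
  have t1 : (3 * x1 - 2 * x2) = 0 := pow_eq_zero_iff (two_ne_zero) |>.1 (by linarith : (3 * x1 - 2 * x2) ^ 2 = 0)
  have t2 : (4 * x2 - 3 * x3) = 0 := pow_eq_zero_iff (two_ne_zero) |>.1 (by linarith : (4 * x2 - 3 * x3) ^ 2 = 0)
  have t3 : x3 = 0 := pow_eq_zero_iff (two_ne_zero) |>.1 (by linarith : x3 ^ 2 = 0)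
  have t4 : (2 * x8 - 1 * x7) = 0 := pow_eq_zero_iff (two_ne_zero) |>.1 (by linarith : (2 * x8 - 1 * x7) ^ 2 = 0)
  have t5 : (3 * x7 - 2 * x6) = 0 := pow_eq_zero_iff (two_ne_zero) |>.1 (by linarith : (3 * x7 - 2 * x6) ^ 2 = 0)
  have t6 : (2 * x9 - 1 * x6) = 0 := pow_eq_zero_iff (two_ne_zero) |>.1 (by linarith : (2 * x9 - 1 * x6) ^ 2 = 0)
  have t7 : (5 * x6 - 6 * x5) = 0 := pow_eq_zero_iff (two_ne_zero) |>.1 (by linarith : (5 * x6 - 6 * x5) ^ 2 = 0)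
  have t8 : x5 = 0 := pow_eq_zero_iff (two_ne_zero) |>.1 (by linarith : x5 ^ 2 = 0)
  omega

theorem leave5 (x0 x1 x2 x3 x4 x5 x6 x7 x8 x9 : ℤ) (h0 : 0 ≤ x0) (h1 : 0 ≤ x1) (h2 : 0 ≤ x2) (h3 : 0 ≤ x3)
    (h4 : 0 ≤ x4) (h5 : 0 ≤ x5) (h6 : 0 ≤ x6) (h7 : 0 ≤ x7) (h8 : 0 ≤ x8) (h9 : 0 ≤ x9)
    (hd : x4 + x6 < x5) (hn : x0 * (2 * x0 - x1) + x1 * (2 * x1 - x0 - x2) + x2 * (2 * x2 - x1 - x3) + x3 * (2 * x3 - x2 - x4) + x4 * (2 * x4 - x3 - x5) + x5 * (2 * x5 - x4 - x6) + x6 * (2 * x6 - x5 - x7 - x9) + x7 * (2 * x7 - x6 - x8) + x8 * (2 * x8 - x7) + x9 * (2 * x9 - x6) ≤ 2) : x5 = 1 ∧ x0 = 0 ∧ x1 = 0 ∧ x2 = 0 ∧ x3 = 0 ∧ x4 = 0 ∧ x6 = 0 ∧ x7 = 0 ∧ x8 = 0 ∧ x9 = 0 := by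
  have id : 60 * (x0 * (2 * x0 - x1) + x1 * (2 * x1 - x0 - x2) + x2 * (2 * x2 - x1 - x3) + x3 * (2 * x3 - x2 - x4) + x4 * (2 * x4 - x3 - x5) + x5 * (2 * x5 - x4 - x6) + x6 * (2 * x6 - x5 - x7 - x9) + x7 * (2 * x7 - x6 - x8) + x8 * (2 * x8 - x7) + x9 * (2 * x9 - x6)) = 120 * (x5 * (x5 - x4 - x6)) + (30 * (2 * x0 - 1 * x1) ^ 2 + 10 * (3 * x1 - 2 * x2) ^ 2 + 5 * (4 * x2 - 3 * x3) ^ 2 + 3 * (5 * x3 - 4 * x4) ^ 2 + 72 * x4 ^ 2 + 30 * (2 * x8 - 1 * x7) ^ 2 + 10 * (3 * x7 - 2 * x6) ^ 2 + 30 * (2 * x9 - 1 * x6) ^ 2 + 50 * x6 ^ 2) := by ring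
  have hc : x5 ≤ x5 * (x5 - x4 - x6) := by nlinarith
  have s0 := sq_nonneg (2 * x0 - 1 * x1)
  have s1 := sq_nonneg (3 * x1 - 2 * x2)
  have s2 := sq_nonneg (4 * x2 - 3 * x3)
  have s3 := sq_nonneg (5 * x3 - 4 * x4)
  have s4 := sq_nonneg x4
  have s5 := sq_nonneg (2 * x8 - 1 * x7)
  have s6 := sq_nonneg (3 * x7 - 2 * x6)
  have s7 := sq_nonneg (2 * x9 - 1 * x6)
  have s8 := sq_nonneg x6
  have hx : x5 = 1 := by
    have : x5 ≤ 1 := by linarith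
    omega
  have n4 : x4 = 0 := by omega
  have n6 : x6 = 0 := by omega
  have t0 : (2 * x0 - 1 * x1) = 0 := pow_eq_zero_iff (two_ne_zero) |>.1 (by linarith : (2 * x0 - 1 * x1) ^ 2 = 0)
  have t1 : (3 * x1 - 2 * x2) = 0 := pow_eq_zero_iff (two_ne_zero) |>.1 (by linarith : (3 * x1 - 2 * x2) ^ 2 = 0)
  have t2 : (4 * x2 - 3 * x3) = 0 := pow_eq_zero_iff (two_ne_zero) |>.1 (by linarith : (4 * x2 - 3 * x3) ^ 2 = 0)
  have t3 : (5 * x3 - 4 * x4) = 0 := pow_eq_zero_iff (two_ne_zero) |>.1 (by linarith : (5 * x3 - 4 * x4) ^ 2 = 0)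
  have t4 : x4 = 0 := pow_eq_zero_iff (two_ne_zero) |>.1 (by linarith : x4 ^ 2 = 0)
  have t5 : (2 * x8 - 1 * x7) = 0 := pow_eq_zero_iff (two_ne_zero) |>.1 (by linarith : (2 * x8 - 1 * x7) ^ 2 = 0)
  have t6 : (3 * x7 - 2 * x6) = 0 := pow_eq_zero_iff (two_ne_zero) |>.1 (by linarith : (3 * x7 - 2 * x6) ^ 2 = 0)
  have t7 : (2 * x9 - 1 * x6) = 0 := pow_eq_zero_iff (two_ne_zero) |>.1 (by linarith : (2 * x9 - 1 * x6) ^ 2 = 0)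
  have t8 : x6 = 0 := pow_eq_zero_iff (two_ne_zero) |>.1 (by linarith : x6 ^ 2 = 0)
  omega

theorem leave6 (x0 x1 x2 x3 x4 x5 x6 x7 x8 x9 : ℤ) (h0 : 0 ≤ x0) (h1 : 0 ≤ x1) (h2 : 0 ≤ x2) (h3 : 0 ≤ x3)
    (h4 : 0 ≤ x4) (h5 : 0 ≤ x5) (h6 : 0 ≤ x6) (h7 : 0 ≤ x7) (h8 : 0 ≤ x8) (h9 : 0 ≤ x9)
    (hd : x5 + x7 + x9 < x6) (hn : x0 * (2 * x0 - x1) + x1 * (2 * x1 - x0 - x2) + x2 * (2 * x2 - x1 - x3) + x3 * (2 * x3 - x2 - x4) + x4 * (2 * x4 - x3 - x5) + x5 * (2 * x5 - x4 - x6) + x6 * (2 * x6 - x5 - x7 - x9) + x7 * (2 * x7 - x6 - x8) + x8 * (2 * x8 - x7) + x9 * (2 * x9 - x6) ≤ 2) : x6 = 1 ∧ x0 = 0 ∧ x1 = 0 ∧ x2 = 0 ∧ x3 = 0 ∧ x4 = 0 ∧ x5 = 0 ∧ x7 = 0 ∧ x8 = 0 ∧ x9 = 0 := by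
  have id : 60 * (x0 * (2 * x0 - x1) + x1 * (2 * x1 - x0 - x2) + x2 * (2 * x2 - x1 - x3) + x3 * (2 * x3 - x2 - x4) + x4 * (2 * x4 - x3 - x5) + x5 * (2 * x5 - x4 - x6) + x6 * (2 * x6 - x5 - x7 - x9) + x7 * (2 * x7 - x6 - x8) + x8 * (2 * x8 - x7) + x9 * (2 * x9 - x6)) = 120 * (x6 * (x6 - x5 - x7 - x9)) + (30 * (2 * x0 - 1 * x1) ^ 2 + 10 * (3 * x1 - 2 * x2) ^ 2 + 5 * (4 * x2 - 3 * x3) ^ 2 + 3 * (5 * x3 - 4 * x4) ^ 2 + 2 * (6 * x4 - 5 * x5) ^ 2 + 70 * x5 ^ 2 + 30 * (2 * x8 - 1 * x7) ^ 2 + 90 * x7 ^ 2 + 120 * x9 ^ 2) := by ring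
  have hc : x6 ≤ x6 * (x6 - x5 - x7 - x9) := by nlinarith
  have s0 := sq_nonneg (2 * x0 - 1 * x1)
  have s1 := sq_nonneg (3 * x1 - 2 * x2)
  have s2 := sq_nonneg (4 * x2 - 3 * x3)
  have s3 := sq_nonneg (5 * x3 - 4 * x4)
  have s4 := sq_nonneg (6 * x4 - 5 * x5)
  have s5 := sq_nonneg x5
  have s6 := sq_nonneg (2 * x8 - 1 * x7)
  have s7 := sq_nonneg x7
  have s8 := sq_nonneg x9
  have hx : x6 = 1 := by
    have : x6 ≤ 1 := by linarith
    omega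
  have n5 : x5 = 0 := by omega
  have n7 : x7 = 0 := by omega
  have n9 : x9 = 0 := by omega
  have t0 : (2 * x0 - 1 * x1) = 0 := pow_eq_zero_iff (two_ne_zero) |>.1 (by linarith : (2 * x0 - 1 * x1) ^ 2 = 0)
  have t1 : (3 * x1 - 2 * x2) = 0 := pow_eq_zero_iff (two_ne_zero) |>.1 (by linarith : (3 * x1 - 2 * x2) ^ 2 = 0)
  have t2 : (4 * x2 - 3 * x3) = 0 := pow_eq_zero_iff (two_ne_zero) |>.1 (by linarith : (4 * x2 - 3 * x3) ^ 2 = 0)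
  have t3 : (5 * x3 - 4 * x4) = 0 := pow_eq_zero_iff (two_ne_zero) |>.1 (by linarith : (5 * x3 - 4 * x4) ^ 2 = 0)
  have t4 : (6 * x4 - 5 * x5) = 0 := pow_eq_zero_iff (two_ne_zero) |>.1 (by linarith : (6 * x4 - 5 * x5) ^ 2 = 0)
  have t5 : x5 = 0 := pow_eq_zero_iff (two_ne_zero) |>.1 (by linarith : x5 ^ 2 = 0)
  have t6 : (2 * x8 - 1 * x7) = 0 := pow_eq_zero_iff (two_ne_zero) |>.1 (by linarith : (2 * x8 - 1 * x7) ^ 2 = 0)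
  have t7 : x7 = 0 := pow_eq_zero_iff (two_ne_zero) |>.1 (by linarith : x7 ^ 2 = 0)
  have t8 : x9 = 0 := pow_eq_zero_iff (two_ne_zero) |>.1 (by linarith : x9 ^ 2 = 0)
  omega

theorem leave7 (x0 x1 x2 x3 x4 x5 x6 x7 x8 x9 : ℤ) (h0 : 0 ≤ x0) (h1 : 0 ≤ x1) (h2 : 0 ≤ x2) (h3 : 0 ≤ x3)
    (h4 : 0 ≤ x4) (h5 : 0 ≤ x5) (h6 : 0 ≤ x6) (h7 : 0 ≤ x7) (h8 : 0 ≤ x8) (h9 : 0 ≤ x9)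
    (hd : x6 + x8 < x7) (hn : x0 * (2 * x0 - x1) + x1 * (2 * x1 - x0 - x2) + x2 * (2 * x2 - x1 - x3) + x3 * (2 * x3 - x2 - x4) + x4 * (2 * x4 - x3 - x5) + x5 * (2 * x5 - x4 - x6) + x6 * (2 * x6 - x5 - x7 - x9) + x7 * (2 * x7 - x6 - x8) + x8 * (2 * x8 - x7) + x9 * (2 * x9 - x6) ≤ 2) : x7 = 1 ∧ x0 = 0 ∧ x1 = 0 ∧ x2 = 0 ∧ x3 = 0 ∧ x4 = 0 ∧ x5 = 0 ∧ x6 = 0 ∧ x8 = 0 ∧ x9 = 0 := by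
  have id : 420 * (x0 * (2 * x0 - x1) + x1 * (2 * x1 - x0 - x2) + x2 * (2 * x2 - x1 - x3) + x3 * (2 * x3 - x2 - x4) + x4 * (2 * x4 - x3 - x5) + x5 * (2 * x5 - x4 - x6) + x6 * (2 * x6 - x5 - x7 - x9) + x7 * (2 * x7 - x6 - x8) + x8 * (2 * x8 - x7) + x9 * (2 * x9 - x6)) = 840 * (x7 * (x7 - x6 - x8)) + (210 * (2 * x0 - 1 * x1) ^ 2 + 70 * (3 * x1 - 2 * x2) ^ 2 + 35 * (4 * x2 - 3 * x3) ^ 2 + 21 * (5 * x3 - 4 * x4) ^ 2 + 14 * (6 * x4 - 5 * x5) ^ 2 + 10 * (7 * x5 - 6 * x6) ^ 2 + 210 * (2 * x9 - 1 * x6) ^ 2 + 270 * x6 ^ 2 + 840 * x8 ^ 2) := by ring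
  have hc : x7 ≤ x7 * (x7 - x6 - x8) := by nlinarith
  have s0 := sq_nonneg (2 * x0 - 1 * x1)
  have s1 := sq_nonneg (3 * x1 - 2 * x2)
  have s2 := sq_nonneg (4 * x2 - 3 * x3)
  have s3 := sq_nonneg (5 * x3 - 4 * x4)
  have s4 := sq_nonneg (6 * x4 - 5 * x5)
  have s5 := sq_nonneg (7 * x5 - 6 * x6)
  have s6 := sq_nonneg (2 * x9 - 1 * x6)
  have s7 := sq_nonneg x6
  have s8 := sq_nonneg x8
  have hx : x7 = 1 := by
    have : x7 ≤ 1 := by linarith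
    omega
  have n6 : x6 = 0 := by omega
  have n8 : x8 = 0 := by omega
  have t0 : (2 * x0 - 1 * x1) = 0 := pow_eq_zero_iff (two_ne_zero) |>.1 (by linarith : (2 * x0 - 1 * x1) ^ 2 = 0)
  have t1 : (3 * x1 - 2 * x2) = 0 := pow_eq_zero_iff (two_ne_zero) |>.1 (by linarith : (3 * x1 - 2 * x2) ^ 2 = 0)
  have t2 : (4 * x2 - 3 * x3) = 0 := pow_eq_zero_iff (two_ne_zero) |>.1 (by linarith : (4 * x2 - 3 * x3) ^ 2 = 0)
  have t3 : (5 * x3 - 4 * x4) = 0 := pow_eq_zero_iff (two_ne_zero) |>.1 (by linarith : (5 * x3 - 4 * x4) ^ 2 = 0)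
  have t4 : (6 * x4 - 5 * x5) = 0 := pow_eq_zero_iff (two_ne_zero) |>.1 (by linarith : (6 * x4 - 5 * x5) ^ 2 = 0)
  have t5 : (7 * x5 - 6 * x6) = 0 := pow_eq_zero_iff (two_ne_zero) |>.1 (by linarith : (7 * x5 - 6 * x6) ^ 2 = 0)
  have t6 : (2 * x9 - 1 * x6) = 0 := pow_eq_zero_iff (two_ne_zero) |>.1 (by linarith : (2 * x9 - 1 * x6) ^ 2 = 0)
  have t7 : x6 = 0 := pow_eq_zero_iff (two_ne_zero) |>.1 (by linarith : x6 ^ 2 = 0)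
  have t8 : x8 = 0 := pow_eq_zero_iff (two_ne_zero) |>.1 (by linarith : x8 ^ 2 = 0)
  omega

theorem leave8 (x0 x1 x2 x3 x4 x5 x6 x7 x8 x9 : ℤ) (h0 : 0 ≤ x0) (h1 : 0 ≤ x1) (h2 : 0 ≤ x2) (h3 : 0 ≤ x3)
    (h4 : 0 ≤ x4) (h5 : 0 ≤ x5) (h6 : 0 ≤ x6) (h7 : 0 ≤ x7) (h8 : 0 ≤ x8) (h9 : 0 ≤ x9)
    (hd : x7 < x8) (hn : x0 * (2 * x0 - x1) + x1 * (2 * x1 - x0 - x2) + x2 * (2 * x2 - x1 - x3) + x3 * (2 * x3 - x2 - x4) + x4 * (2 * x4 - x3 - x5) + x5 * (2 * x5 - x4 - x6) + x6 * (2 * x6 - x5 - x7 - x9) + x7 * (2 * x7 - x6 - x8) + x8 * (2 * x8 - x7) + x9 * (2 * x9 - x6) ≤ 2) : x8 = 1 ∧ x0 = 0 ∧ x1 = 0 ∧ x2 = 0 ∧ x3 = 0 ∧ x4 = 0 ∧ x5 = 0 ∧ x6 = 0 ∧ x7 = 0 ∧ x9 = 0 := by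
  have id : 1260 * (x0 * (2 * x0 - x1) + x1 * (2 * x1 - x0 - x2) + x2 * (2 * x2 - x1 - x3) + x3 * (2 * x3 - x2 - x4) + x4 * (2 * x4 - x3 - x5) + x5 * (2 * x5 - x4 - x6) + x6 * (2 * x6 - x5 - x7 - x9) + x7 * (2 * x7 - x6 - x8) + x8 * (2 * x8 - x7) + x9 * (2 * x9 - x6)) = 2520 * (x8 * (x8 - x7)) + (630 * (2 * x0 - 1 * x1) ^ 2 + 210 * (3 * x1 - 2 * x2) ^ 2 + 105 * (4 * x2 - 3 * x3) ^ 2 + 63 * (5 * x3 - 4 * x4) ^ 2 + 42 * (6 * x4 - 5 * x5) ^ 2 + 30 * (7 * x5 - 6 * x6) ^ 2 + 630 * (2 * x9 - 1 * x6) ^ 2 + 10 * (9 * x6 - 14 * x7) ^ 2 + 560 * x7 ^ 2) := by ring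
  have hc : x8 ≤ x8 * (x8 - x7) := by nlinarith
  have s0 := sq_nonneg (2 * x0 - 1 * x1)
  have s1 := sq_nonneg (3 * x1 - 2 * x2)
  have s2 := sq_nonneg (4 * x2 - 3 * x3)
  have s3 := sq_nonneg (5 * x3 - 4 * x4)
  have s4 := sq_nonneg (6 * x4 - 5 * x5)
  have s5 := sq_nonneg (7 * x5 - 6 * x6)
  have s6 := sq_nonneg (2 * x9 - 1 * x6)
  have s7 := sq_nonneg (9 * x6 - 14 * x7)
  have s8 := sq_nonneg x7
  have hx : x8 = 1 := by
    have : x8 ≤ 1 := by linarith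
    omega
  have n7 : x7 = 0 := by omega
  have t0 : (2 * x0 - 1 * x1) = 0 := pow_eq_zero_iff (two_ne_zero) |>.1 (by linarith : (2 * x0 - 1 * x1) ^ 2 = 0)
  have t1 : (3 * x1 - 2 * x2) = 0 := pow_eq_zero_iff (two_ne_zero) |>.1 (by linarith : (3 * x1 - 2 * x2) ^ 2 = 0)
  have t2 : (4 * x2 - 3 * x3) = 0 := pow_eq_zero_iff (two_ne_zero) |>.1 (by linarith : (4 * x2 - 3 * x3) ^ 2 = 0)
  have t3 : (5 * x3 - 4 * x4) = 0 := pow_eq_zero_iff (two_ne_zero) |>.1 (by linarith : (5 * x3 - 4 * x4) ^ 2 = 0)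
  have t4 : (6 * x4 - 5 * x5) = 0 := pow_eq_zero_iff (two_ne_zero) |>.1 (by linarith : (6 * x4 - 5 * x5) ^ 2 = 0)
  have t5 : (7 * x5 - 6 * x6) = 0 := pow_eq_zero_iff (two_ne_zero) |>.1 (by linarith : (7 * x5 - 6 * x6) ^ 2 = 0)
  have t6 : (2 * x9 - 1 * x6) = 0 := pow_eq_zero_iff (two_ne_zero) |>.1 (by linarith : (2 * x9 - 1 * x6) ^ 2 = 0)
  have t7 : (9 * x6 - 14 * x7) = 0 := pow_eq_zero_iff (two_ne_zero) |>.1 (by linarith : (9 * x6 - 14 * x7) ^ 2 = 0)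
  have t8 : x7 = 0 := pow_eq_zero_iff (two_ne_zero) |>.1 (by linarith : x7 ^ 2 = 0)
  omega

theorem leave9 (x0 x1 x2 x3 x4 x5 x6 x7 x8 x9 : ℤ) (h0 : 0 ≤ x0) (h1 : 0 ≤ x1) (h2 : 0 ≤ x2) (h3 : 0 ≤ x3)
    (h4 : 0 ≤ x4) (h5 : 0 ≤ x5) (h6 : 0 ≤ x6) (h7 : 0 ≤ x7) (h8 : 0 ≤ x8) (h9 : 0 ≤ x9)
    (hd : x6 < x9) (hn : x0 * (2 * x0 - x1) + x1 * (2 * x1 - x0 - x2) + x2 * (2 * x2 - x1 - x3) + x3 * (2 * x3 - x2 - x4) + x4 * (2 * x4 - x3 - x5) + x5 * (2 * x5 - x4 - x6) + x6 * (2 * x6 - x5 - x7 - x9) + x7 * (2 * x7 - x6 - x8) + x8 * (2 * x8 - x7) + x9 * (2 * x9 - x6) ≤ 2) : x9 = 1 ∧ x0 = 0 ∧ x1 = 0 ∧ x2 = 0 ∧ x3 = 0 ∧ x4 = 0 ∧ x5 = 0 ∧ x6 = 0 ∧ x7 = 0 ∧ x8 = 0 := by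
  have id : 420 * (x0 * (2 * x0 - x1) + x1 * (2 * x1 - x0 - x2) + x2 * (2 * x2 - x1 - x3) + x3 * (2 * x3 - x2 - x4) + x4 * (2 * x4 - x3 - x5) + x5 * (2 * x5 - x4 - x6) + x6 * (2 * x6 - x5 - x7 - x9) + x7 * (2 * x7 - x6 - x8) + x8 * (2 * x8 - x7) + x9 * (2 * x9 - x6)) = 840 * (x9 * (x9 - x6)) + (210 * (2 * x0 - 1 * x1) ^ 2 + 70 * (3 * x1 - 2 * x2) ^ 2 + 35 * (4 * x2 - 3 * x3) ^ 2 + 21 * (5 * x3 - 4 * x4) ^ 2 + 14 * (6 * x4 - 5 * x5) ^ 2 + 10 * (7 * x5 - 6 * x6) ^ 2 + 210 * (2 * x8 - 1 * x7) ^ 2 + 70 * (3 * x7 - 2 * x6) ^ 2 + 200 * x6 ^ 2) := by ring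
  have hc : x9 ≤ x9 * (x9 - x6) := by nlinarith
  have s0 := sq_nonneg (2 * x0 - 1 * x1)
  have s1 := sq_nonneg (3 * x1 - 2 * x2)
  have s2 := sq_nonneg (4 * x2 - 3 * x3)
  have s3 := sq_nonneg (5 * x3 - 4 * x4)
  have s4 := sq_nonneg (6 * x4 - 5 * x5)
  have s5 := sq_nonneg (7 * x5 - 6 * x6)
  have s6 := sq_nonneg (2 * x8 - 1 * x7)
  have s7 := sq_nonneg (3 * x7 - 2 * x6)
  have s8 := sq_nonneg x6
  have hx : x9 = 1 := by
    have : x9 ≤ 1 := by linarith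
    omega
  have n6 : x6 = 0 := by omega
  have t0 : (2 * x0 - 1 * x1) = 0 := pow_eq_zero_iff (two_ne_zero) |>.1 (by linarith : (2 * x0 - 1 * x1) ^ 2 = 0)
  have t1 : (3 * x1 - 2 * x2) = 0 := pow_eq_zero_iff (two_ne_zero) |>.1 (by linarith : (3 * x1 - 2 * x2) ^ 2 = 0)
  have t2 : (4 * x2 - 3 * x3) = 0 := pow_eq_zero_iff (two_ne_zero) |>.1 (by linarith : (4 * x2 - 3 * x3) ^ 2 = 0)
  have t3 : (5 * x3 - 4 * x4) = 0 := pow_eq_zero_iff (two_ne_zero) |>.1 (by linarith : (5 * x3 - 4 * x4) ^ 2 = 0)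
  have t4 : (6 * x4 - 5 * x5) = 0 := pow_eq_zero_iff (two_ne_zero) |>.1 (by linarith : (6 * x4 - 5 * x5) ^ 2 = 0)
  have t5 : (7 * x5 - 6 * x6) = 0 := pow_eq_zero_iff (two_ne_zero) |>.1 (by linarith : (7 * x5 - 6 * x6) ^ 2 = 0)
  have t6 : (2 * x8 - 1 * x7) = 0 := pow_eq_zero_iff (two_ne_zero) |>.1 (by linarith : (2 * x8 - 1 * x7) ^ 2 = 0)
  have t7 : (3 * x7 - 2 * x6) = 0 := pow_eq_zero_iff (two_ne_zero) |>.1 (by linarith : (3 * x7 - 2 * x6) ^ 2 = 0)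
  have t8 : x6 = 0 := pow_eq_zero_iff (two_ne_zero) |>.1 (by linarith : x6 ^ 2 = 0)
  omega
end

theorem leave (i : Fin 10) (x : Wt) (hx : 0 ≤ x) (hi : x i < wtv x i) (hn : bf x x ≤ 2) : x = sr i := by
  obtain ⟨w0, w1, w2, w3, w4, w5, w6, w7, w8, w9⟩ := wtv_all x
  rw [bf_all] at hn
  have h := fun j => hx j
  simp only [Pi.zero_apply] at h
  rw [funext_iff, all10]
  fin_cases i
  · have := leave0 _ _ _ _ _ _ _ _ _ _ (h 0) (h 1) (h 2) (h 3) (h 4) (h 5) (h 6) (h 7) (h 8) (h 9) (by simp at hi; omega) hn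
    simp [this, sr]
  · have := leave1 _ _ _ _ _ _ _ _ _ _ (h 0) (h 1) (h 2) (h 3) (h 4) (h 5) (h 6) (h 7) (h 8) (h 9) (by simp at hi; omega) hn
    simp [this, sr]
  · have := leave2 _ _ _ _ _ _ _ _ _ _ (h 0) (h 1) (h 2) (h 3) (h 4) (h 5) (h 6) (h 7) (h 8) (h 9) (by simp at hi; omega) hn
    simp [this, sr]
  · have := leave3 _ _ _ _ _ _ _ _ _ _ (h 0) (h 1) (h 2) (h 3) (h 4) (h 5) (h 6) (h 7) (h 8) (h 9) (by simp at hi; omega) hn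
    simp [this, sr]
  · have := leave4 _ _ _ _ _ _ _ _ _ _ (h 0) (h 1) (h 2) (h 3) (h 4) (h 5) (h 6) (h 7) (h 8) (h 9) (by simp at hi; omega) hn
    simp [this, sr]
  · have := leave5 _ _ _ _ _ _ _ _ _ _ (h 0) (h 1) (h 2) (h 3) (h 4) (h 5) (h 6) (h 7) (h 8) (h 9) (by simp at hi; omega) hn
    simp [this, sr]
  · have := leave6 _ _ _ _ _ _ _ _ _ _ (h 0) (h 1) (h 2) (h 3) (h 4) (h 5) (h 6) (h 7) (h 8) (h 9) (by simp at hi; omega) hn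
    simp [this, sr]
  · have := leave7 _ _ _ _ _ _ _ _ _ _ (h 0) (h 1) (h 2) (h 3) (h 4) (h 5) (h 6) (h 7) (h 8) (h 9) (by simp at hi; omega) hn
    simp [this, sr]
  · have := leave8 _ _ _ _ _ _ _ _ _ _ (h 0) (h 1) (h 2) (h 3) (h 4) (h 5) (h 6) (h 7) (h 8) (h 9) (by simp at hi; omega) hn
    simp [this, sr]
  · have := leave9 _ _ _ _ _ _ _ _ _ _ (h 0) (h 1) (h 2) (h 3) (h 4) (h 5) (h 6) (h 7) (h 8) (h 9) (by simp at hi; omega) hn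
    simp [this, sr]

theorem rfx_other {i j : Fin 10} (h : j ≠ i) (x : Wt) : rfx i x j = x j := by
  simp [rfx, sr, Pi.single_apply, h]
theorem rfx_same (i : Fin 10) (x : Wt) : rfx i x i = x i - wtv x i := by
  simp [rfx, sr]
theorem ht_rfx (i x) : ht (rfx i x) = ht x - wtv x i := by
  unfold rfx
  rw [ht_sub]
  congr 1
  simp [ht, sr, Pi.single_apply]
theorem bf_rfx_left (i x z) : bf (rfx i x) z = bf x z - wtv x i * wtv z i := by
  unfold bf rfx
  simp only [Pi.sub_apply, sub_mul, Finset.sum_sub_distrib, Pi.smul_apply, smul_eq_mul, sr, Pi.single_apply]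
  simp
theorem bf_rfx (i x) : bf (rfx i x) (rfx i x) = bf x x := by
  rw [bf_rfx_left, bf_comm, bf_rfx_left, wtv_rfx_self]; ring
theorem rfx_zero (i) : rfx i 0 = 0 := by simp [rfx, wtv_zero]
theorem bf_sr (i) : bf (sr i) (sr i) = 2 := by
  have : bf (sr i) (sr i) = wtv (sr i) i := by
    unfold bf; simp [sr, Pi.single_apply]
  rw [this, wtv_single, E10M_diag]

theorem mlt_spec {k : ℕ} {a : ℤ} (h : mlt k = some a) :
    (k = 8 ∧ a = 1) ∨ (k = 6 ∧ a = 8) ∨ (k = 4 ∧ a = 44) ∨ (k = 2 ∧ a = 192) := by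
  unfold mlt at h
  by_cases h8 : k = 8
  · subst h8; left; exact ⟨rfl, (Option.some.inj h).symm⟩
  by_cases h6 : k = 6
  · subst h6; right; left; exact ⟨rfl, (Option.some.inj h).symm⟩
  by_cases h4 : k = 4
  · subst h4; right; right; left; exact ⟨rfl, (Option.some.inj h).symm⟩
  by_cases h2 : k = 2
  · subst h2; right; right; right; exact ⟨rfl, (Option.some.inj h).symm⟩
  rw [beq_false' h8, beq_false' h6, beq_false' h4, beq_false' h2] at h
  cases h

/-- Antidominant vectors of small norm. -/
theorem antidom (x : Wt) (hx : 0 < x) (hd : ∀ i, wtv x i ≤ 0) (hn : -4 ≤ bf x x) (hh : ht x ≤ 120) :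
    x = V10.w ⟨0, 1, 2, 3, 4, 5, 6, 4, 2, 3⟩ ∨ x = V10.w ⟨0, 2, 4, 6, 8, 10, 12, 8, 4, 6⟩ ∨
    x = V10.w ⟨0, 3, 6, 9, 12, 15, 18, 12, 6, 9⟩ ∨ x = V10.w ⟨0, 4, 8, 12, 16, 20, 24, 16, 8, 12⟩ ∨
    x = V10.w ⟨1, 2, 4, 6, 8, 10, 12, 8, 4, 6⟩ ∨ x = V10.w ⟨1, 3, 6, 9, 12, 15, 18, 12, 6, 9⟩ ∨
    x = V10.w ⟨2, 4, 6, 8, 10, 12, 14, 9, 4, 7⟩ := by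
  obtain ⟨a, ha⟩ : ∃ a : Fin 10 → ℤ, ∀ i, wtv x i = - a i := ⟨fun i => - wtv x i, fun i => by simp⟩
  have hp : ∀ i, 0 ≤ a i := fun i => by have := hd i; rw [ha] at this; omega
  have hr : ∀ k, x k = ∑ i, LamM i k * a i := fun k => by
    rw [wtv_recover x k]; simp [ha]
  have hbx : ∑ i, a i * x i ≤ 4 := by
    have : bf x x = - ∑ i, a i * x i := by
      unfold bf; rw [← Finset.sum_neg_distrib]; exact Finset.sum_congr rfl fun i _ => by rw [ha]; ring
    omega
  have hL : ∀ i k, 0 ≤ LamM i k := by decide +kernel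
  have hLd : ∀ i, i ≠ 0 → i ≠ 1 → i ≠ 8 → 6 ≤ LamM i i := by decide +kernel
  have hxk : ∀ k, LamM k k * a k ≤ x k := fun k => by
    rw [hr]
    exact Finset.single_le_sum (f := fun i => LamM i k * a i) (fun i _ => mul_nonneg (hL i k) (hp i)) (Finset.mem_univ k)
  have hak : ∀ k, a k * x k ≤ 4 := fun k => le_trans
    (Finset.single_le_sum (f := fun i => a i * x i) (fun i _ => mul_nonneg (hp i) (hx.le i)) (Finset.mem_univ k)) hbx
  have hz : ∀ k, k ≠ 0 → k ≠ 1 → k ≠ 8 → a k = 0 := by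
    intro k k0 k1 k8
    by_contra hne
    have h1 : 1 ≤ a k := by have := hp k; omega
    have h2 : 6 ≤ LamM k k := hLd k k0 k1 k8
    have h3 := hxk k
    have h4 := hak k
    have : 6 ≤ x k := by nlinarith
    nlinarith
  have z2 := hz 2 (by decide) (by decide) (by decide)
  have z3 := hz 3 (by decide) (by decide) (by decide)
  have z4 := hz 4 (by decide) (by decide) (by decide)
  have z5 := hz 5 (by decide) (by decide) (by decide)
  have z6 := hz 6 (by decide) (by decide) (by decide)
  have z7 := hz 7 (by decide) (by decide) (by decide)
  have z9 := hz 9 (by decide) (by decide) (by decide)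
  have hr' := all10.1 hr
  simp only [sum10, z2, z3, z4, z5, z6, z7, z9, mul_zero, add_zero, LamM] at hr'
  simp [Matrix.cons_val] at hr'
  obtain ⟨e0, e1, e2, e3, e4, e5, e6, e7, e8, e9⟩ := hr'
  rw [sum10] at hbx
  simp only [z2, z3, z4, z5, z6, z7, z9, zero_mul, add_zero] at hbx
  have p0 := hp 0
  have p1 := hp 1
  have p8 := hp 8
  rw [ht, sum10] at hh
  have hx0 : ¬ (a 0 = 0 ∧ a 1 = 0 ∧ a 8 = 0) := by
    rintro ⟨q0, q1, q8⟩
    apply hx.ne'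
    rw [funext_iff, all10]
    simp only [q0, q1, q8] at *
    simp only [Pi.zero_apply]
    omega
  simp only [funext_iff, all10]
  simp only [V10.w, Matrix.cons_val]
  have r1 : a 1 ≤ 1 := by have := hak 1; rw [e1] at this; nlinarith
  have r8 : a 8 ≤ 1 := by have := hak 8; rw [e8] at this; nlinarith
  generalize a 0 = A at *
  generalize a 1 = B at *
  generalize a 8 = E at *
  rw [e0, e1, e8] at hbx
  have B1 : B = 0 ∨ B = 1 := by omega
  have E1 : E = 0 ∨ E = 1 := by omega
  clear hr hxk hak hL hLd hz hd ha hp hx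
  have W : ∀ b0 b1 b2 b3 b4 b5 b6 b7 b8 b9 : ℤ, x 0 = b0 → x 1 = b1 → x 2 = b2 → x 3 = b3 → x 4 = b4 →
      x 5 = b5 → x 6 = b6 → x 7 = b7 → x 8 = b8 → x 9 = b9 →
      x 0 = b0 ∧ x 1 = b1 ∧ x 2 = b2 ∧ x 3 = b3 ∧ x 4 = b4 ∧ x 5 = b5 ∧ x 6 = b6 ∧ x 7 = b7 ∧ x 8 = b8 ∧ x 9 = b9 :=
    fun b0 b1 b2 b3 b4 b5 b6 b7 b8 b9 h0 h1 h2 h3 h4 h5 h6 h7 h8 h9 => ⟨h0, h1, h2, h3, h4, h5, h6, h7, h8, h9⟩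
  rcases B1 with rfl | rfl <;> rcases E1 with rfl | rfl
  · have : A = 1 ∨ A = 2 ∨ A = 3 ∨ A = 4 := by omega
    rcases this with rfl | rfl | rfl | rfl
    · left; apply W <;> omega
    · right; left; apply W <;> omega
    · right; right; left; apply W <;> omega
    · right; right; right; left; apply W <;> omega
  · have : A = 0 := by nlinarith
    subst this; right; right; right; right; right; right; apply W <;> omega
  · have : A = 0 ∨ A = 1 := by
      have : A ≤ 1 := by nlinarith
      omega
    rcases this with rfl | rfl
    · right; right; right; right; left; apply W <;> omega
    · right; right; right; right; right; left; apply W <;> omega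
  · exfalso; nlinarith

namespace KMD
variable {L : Type*} [LieRing L] [LieAlgebra ℚ L] {D : KMD L}

/-- One reflection step. -/
theorem refl_step (i : Fin 10) (x : Wt) (hx : 0 < x) (hi : 0 < wtv x i) :
    0 < rfx i x ∨ (x i < wtv x i ∧ (D.dm x = 0 ∨ x = sr i)) := by
  by_cases h : x i < wtv x i
  · right
    refine ⟨h, ?_⟩
    have hneg : ¬ 0 ≤ rfx i x := fun h' => by have := h' i; rw [rfx_same] at this; simp at this; omega
    by_cases hle : rfx i x ≤ 0
    · have hz : ∀ j, j ≠ i → x j = 0 := fun j hj => by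
        have h1 := hle j; rw [rfx_other hj] at h1
        exact le_antisymm h1 (hx.le j)
      have hi1 : 0 < x i := by
        rw [Pi.lt_def] at hx
        obtain ⟨-, j, hj⟩ := hx
        by_cases hji : j = i
        · rw [← hji]; exact hj
        · rw [hz j hji] at hj; simp at hj
      by_cases h1 : x i = 1
      · right; funext j
        by_cases hj : j = i
        · subst hj; simp [h1]
        · simp [hz j hj, Pi.single_apply, hj]
      · left; exact D.dm_multiple i x hz (by omega)
    · left; rw [← D.dm_refl i x]; exact D.dm_mixed _ hneg hle
  · left
    refine lt_of_le_of_ne (fun j => ?_) (fun h0 => ?_)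
    · by_cases hj : j = i
      · subst hj; rw [rfx_same]; simp; omega
      · rw [rfx_other hj]; exact hx.le j
    · have := rfx_rfx i x; rw [← h0, rfx_zero] at this; exact hx.ne this

theorem dm_norm_gt (x : Wt) (hx : 0 < x) (hn : 2 < bf x x) : D.dm x = 0 := by
  obtain ⟨n, hnn⟩ : ∃ n : ℕ, ht x = n := ⟨(ht x).toNat, by have := ht_pos hx; omega⟩
  induction n using Nat.strong_induction_on generalizing x with
  | _ n ih =>
    by_cases hd : ∀ i, wtv x i ≤ 0
    · exfalso
      have : bf x x ≤ 0 := Finset.sum_nonpos fun i _ => mul_nonpos_of_nonneg_of_nonpos (hx.le i) (hd i)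
      omega
    · push Not at hd
      obtain ⟨i, hi⟩ := hd
      rcases refl_step (D := D) i x hx hi with h | ⟨-, h | h⟩
      · have h1 := ht_pos h
        have h2 := ht_rfx i x
        rw [← D.dm_refl i x]
        exact ih (ht (rfx i x)).toNat (by omega) _ h (by rw [bf_rfx]; exact hn) (by omega)
      · exact h
      · rw [h, bf_sr] at hn; omega

theorem dm_val (C : Coords D) {b0 b1 b2 b3 b4 b5 b6 b7 b8 b9 : ℕ} {S : ℤ} (h : dfsFast b0 b1 b2 b3 b4 b5 b6 b7 b8 b9 = some S)
    (hβ : 0 < V10.w ⟨b0, b1, b2, b3, b4, b5, b6, b7, b8, b9⟩)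
    (hN : ∀ x : Wt, 0 < x → ht x < ht (V10.w ⟨b0, b1, b2, b3, b4, b5, b6, b7, b8, b9⟩) →
      ∀ a, mlt (bf x x + 6).toNat = some a → (D.dm x : ℚ) = a) (d : ℤ)
    (hd : bf (V10.w ⟨b0, b1, b2, b3, b4, b5, b6, b7, b8, b9⟩) (V10.w ⟨b0, b1, b2, b3, b4, b5, b6, b7, b8, b9⟩)
      - 2 * ht (V10.w ⟨b0, b1, b2, b3, b4, b5, b6, b7, b8, b9⟩) = d) (hd0 : d ≠ 0) (m : ℤ) (hm : d * m = S) :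
    (D.dm (V10.w ⟨b0, b1, b2, b3, b4, b5, b6, b7, b8, b9⟩) : ℚ) = m := by
  have h1 := dfs_rep C dm_norm_gt b0 b1 b2 b3 b4 b5 b6 b7 b8 b9 hN S h
  rw [FF_sum C hβ, hd, ← hm] at h1
  push_cast at h1
  exact mul_left_cancel₀ (by exact_mod_cast hd0) h1

theorem w_pos {x : V10} (h : x.sm ≠ 0) : 0 < x.w :=
  lt_of_le_of_ne (w_nonneg x) (fun h' => h ((w_zero x).1 h'.symm))

theorem ht_w (x : V10) : ht x.w = x.sm := by
  obtain ⟨a0, a1, a2, a3, a4, a5, a6, a7, a8, a9⟩ := x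
  rw [ht, sum10]
  simp [V10.w, V10.sm, Matrix.cons_val]
  ring

theorem small (C : Coords D) (n : ℕ) : ∀ x : Wt, 0 < x → ht x = n → n ≤ 120 → ∀ a, mlt (bf x x + 6).toNat = some a →
    (D.dm x : ℚ) = a := by
  induction n using Nat.strong_induction_on with
  | _ n ih =>
    intro x hx hn hn2 a ha
    have hs := mlt_spec ha
    by_cases hd : ∀ i, wtv x i ≤ 0
    · have hN : ∀ y : Wt, 0 < y → ht y < ht x → ∀ a, mlt (bf y y + 6).toNat = some a → (D.dm y : ℚ) = a := by
        intro y hy hyx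
        have := ht_pos hy
        exact ih (ht y).toNat (by omega) y hy (by omega) (by omega)
      rcases antidom x hx hd (by omega) (by omega) with h | h | h | h | h | h | h
      · subst h
        rw [bf_w] at ha; cases ha
        exact dm_val C (S := -480) (by decide +kernel) (w_pos (by decide)) hN (-60) (by rw [bf_w, ht_w]; decide) (by decide) 8 (by decide)
      · subst h
        rw [bf_w] at ha; cases ha
        exact dm_val C (S := -960) (by decide +kernel) (w_pos (by decide)) hN (-120) (by rw [bf_w, ht_w]; decide) (by decide) 8 (by decide)
      · subst h
        rw [bf_w] at ha; cases ha
        exact dm_val C (S := -1440) (by decide +kernel) (w_pos (by decide)) hN (-180) (by rw [bf_w, ht_w]; decide) (by decide) 8 (by decide)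
      · subst h
        rw [bf_w] at ha; cases ha
        exact dm_val C (S := -1920) (by decide +kernel) (w_pos (by decide)) hN (-240) (by rw [bf_w, ht_w]; decide) (by decide) 8 (by decide)
      · subst h
        rw [bf_w] at ha; cases ha
        exact dm_val C (S := -5456) (by decide +kernel) (w_pos (by decide)) hN (-124) (by rw [bf_w, ht_w]; decide) (by decide) 44 (by decide)
      · subst h
        rw [bf_w] at ha; cases ha
        exact dm_val C (S := -35712) (by decide +kernel) (w_pos (by decide)) hN (-186) (by rw [bf_w, ht_w]; decide) (by decide) 192 (by decide)
      · subst h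
        rw [bf_w] at ha; cases ha
        exact dm_val C (S := -29952) (by decide +kernel) (w_pos (by decide)) hN (-156) (by rw [bf_w, ht_w]; decide) (by decide) 192 (by decide)
    · push Not at hd
      obtain ⟨i, hi⟩ := hd
      have hsr : x = sr i → (D.dm x : ℚ) = a := by
        intro h
        subst h
        rw [bf_sr] at hs
        rw [dm_simple]
        have : a = 1 := by omega
        rw [this]; simp
      rcases refl_step (D := D) i x hx hi with h | ⟨hlt, h⟩
      · have h1 := ht_pos h
        have h2 := ht_rfx i x
        rw [← D.dm_refl i x]
        exact ih (ht (rfx i x)).toNat (by omega) _ h (by omega) (by omega) a (by rw [bf_rfx]; exact ha)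
      · exact hsr (leave i x hx.le hlt (by omega))

theorem val727 (C : Coords D) : D.dm (V10.w ⟨2, 4, 6, 9, 12, 15, 18, 12, 6, 9⟩) = 727 := by
  have hN : ∀ y : Wt, 0 < y → ht y < ht (V10.w ⟨2, 4, 6, 9, 12, 15, 18, 12, 6, 9⟩) →
      ∀ a, mlt (bf y y + 6).toNat = some a → (D.dm y : ℚ) = a := by
    intro y hy hyx
    rw [ht_w] at hyx
    change ht y < 93 at hyx
    have := ht_pos hy
    exact small C (ht y).toNat y hy (by omega) (by omega)
  have := dm_val C (S := -139584) (by decide +kernel) (w_pos (by decide)) hN (-192) (by rw [bf_w, ht_w]; decide) (by decide) 727 (by decide)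
  exact_mod_cast this

theorem val726 (C : Coords D) : D.dm (V10.w ⟨1, 4, 8, 12, 16, 20, 24, 16, 8, 12⟩) = 726 := by
  have hN : ∀ y : Wt, 0 < y → ht y < ht (V10.w ⟨1, 4, 8, 12, 16, 20, 24, 16, 8, 12⟩) →
      ∀ a, mlt (bf y y + 6).toNat = some a → (D.dm y : ℚ) = a := by
    intro y hy hyx
    rw [ht_w] at hyx
    change ht y < 121 at hyx
    have := ht_pos hy
    exact small C (ht y).toNat y hy (by omega) (by omega)
  have := dm_val C (S := -180048) (by decide +kernel) (w_pos (by decide)) hN (-248) (by rw [bf_w, ht_w]; decide) (by decide) 726 (by decide)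
  exact_mod_cast this
end KMD

/-- **Anisotropy of `E10` root multiplicities.** There are two positive roots of `E10` of
height at most `340` with the same norm but different multiplicities: the root multiplicity
is not a function of the norm alone. -/
theorem e10_mult_anisotropy :
    ∃ n n' : Fin 10 → ℕ,
      n ≠ 0 ∧ ∑ i, n i ≤ 340 ∧ qform E10M n ≤ 2 ∧
      n' ≠ 0 ∧ ∑ i, n' i ≤ 340 ∧ qform E10M n' ≤ 2 ∧
      qform E10M n = qform E10M n' ∧
      rootMult E10M (fun i => (n i : ℤ)) ≠ rootMult E10M (fun i => (n' i : ℤ)) := by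
  obtain ⟨D, hD⟩ := exists_KMD
  obtain ⟨C⟩ := D.exists_coords
  refine ⟨![2, 4, 6, 9, 12, 15, 18, 12, 6, 9], ![1, 4, 8, 12, 16, 20, 24, 16, 8, 12], by decide, by decide,
    by unfold qform E10M; decide +kernel, by decide, by decide, by unfold qform E10M; decide +kernel,
    by unfold qform E10M; decide +kernel, ?_⟩
  have key : ∀ x : Wt, rootMult E10M x = D.dm x := fun x => by
    unfold KMD.dm KMD.W
    rw [hD]; rfl
  rw [key, key]
  have e1 : (fun i => ((![2, 4, 6, 9, 12, 15, 18, 12, 6, 9] : Fin 10 → ℕ) i : ℤ)) =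
      V10.w ⟨2, 4, 6, 9, 12, 15, 18, 12, 6, 9⟩ := by funext i; fin_cases i <;> rfl
  have e2 : (fun i => ((![1, 4, 8, 12, 16, 20, 24, 16, 8, 12] : Fin 10 → ℕ) i : ℤ)) =
      V10.w ⟨1, 4, 8, 12, 16, 20, 24, 16, 8, 12⟩ := by funext i; fin_cases i <;> rfl
  rw [e1, e2, KMD.val727 C, KMD.val726 C]
  decide
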